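/- arXiv:1411.2397 — 2 statements merged into one kernel-verified Lean document; each statement's English description precedes it below -/
import Mathlib

section
/- Let K be a number field with ring of integers O_K, let I ⊆ O_K be a nonzero ideal, and let x ∈ O_K be coprime to I, i.e. the ideal generated by x together with I is all of O_K. Then there are infinitely many pairwise non-associated elements y ∈ O_K such that the principal ideal (y) is a prime ideal and y ≡ x (mod I); equivalently, the set of prime ideals of O_K of the form y·O_K with y ∈ O_K satisfying y ≡ x (mod I) is infinite. -/
open NumberField

/-!
Dirichlet's argument, run in the ray class group modulo `I`: a prime ideal in the class of `(x)`
is principal with a generator congruent to `x`. The ideals coprime to `I` are equidistributed among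
the ray classes: after multiplication by a fixed ideal, the ideals of a class are the principal
ideals generated by the points of a union of lattice cosets, taken up to units. Summing a smooth
weight whose sum over a unit orbit depends only on the norm replaces the choice of a fundamental
domain for the units, and makes the error `O(1)`.

What remains is a statement about Beurling number systems: a free commutative monoid with a norm and
a homomorphism to a finite group, such that all classes have the same density. With an error term
this small no analytic continuation is needed.
-/

section LatticeSums

open MeasureTheory Submodule
open scoped ContDiff

/-- Rolle's theorem provides a zero of `f'` within distance `1` of every point, so that `f'` is
controlled by `f''`; now iterate. -/
lemma abs_deriv_le_of_periodic (k : ℕ) {M : ℝ} {f : ℝ → ℝ} (hf : ContDiff ℝ (k + 1) f)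
    (hper : Function.Periodic f 1) (hM : ∀ x, |iteratedDeriv (k + 1) f x| ≤ M) (x : ℝ) :
    |deriv f x| ≤ M := by
  induction k generalizing f x with
  | zero => simpa using hM x
  | succ k ih =>
    have hf' : Differentiable ℝ f ∧ ContDiff ℝ (k + 1) (deriv f) := by
      simpa using (contDiff_succ_iff_deriv (n := (k + 1 : ℕ))).1 hf
    have hper' : Function.Periodic (deriv f) 1 := fun y => by
      rw [← deriv_comp_add_const, funext hper]
    have hM' : ∀ y, ‖deriv (deriv f) y‖ ≤ M :=
      fun y => ih hf'.2 hper' (fun z => by rw [← iteratedDeriv_succ']; exact hM z) y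
    obtain ⟨c, hc, hc0⟩ := exists_deriv_eq_zero (lt_add_one x) hf'.1.continuous.continuousOn
      (hper x).symm
    have hmean := convex_univ.norm_image_sub_le_of_norm_deriv_le
      (fun y _ => (hf'.2.differentiable (by simp)) y) (fun y _ => hM' y)
      (Set.mem_univ c) (Set.mem_univ x)
    rw [hc0, sub_zero, Real.norm_eq_abs, Real.norm_eq_abs] at hmean
    have hdist : |x - c| ≤ 1 := by rw [abs_le]; constructor <;> linarith [hc.1, hc.2]
    nlinarith [abs_nonneg (deriv f x), (norm_nonneg _).trans (hM' 0)]

section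

variable {ι E : Type*} [NormedAddCommGroup E] [NormedSpace ℝ E]

lemma iteratedDeriv_comp_add_smul {k : ℕ} {F : E → ℝ} (hF : ContDiff ℝ k F) (v u : E) (t : ℝ) :
    iteratedDeriv k (fun t : ℝ => F (v + t • u)) t =
      iteratedFDeriv ℝ k F (v + t • u) fun _ => u := by
  let L : ℝ →L[ℝ] E := ContinuousLinearMap.toSpanSingleton ℝ u
  have hcomp : (fun t : ℝ => F (v + t • u)) = (fun y => F (v + y)) ∘ L := rfl
  rw [iteratedDeriv_eq_iteratedFDeriv, hcomp,
    L.iteratedFDeriv_comp_right (by fun_prop) t le_rfl,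
    iteratedFDeriv_comp_add_left]
  simp [L]

/-- The periodization of `F` with respect to the lattice spanned by the basis `b`. -/
noncomputable def latticeSum (b : Module.Basis ι ℝ E) (F : E → ℝ) (v : E) : ℝ :=
  ∑' y : span ℤ (Set.range b), F (v + y)

lemma latticeSum_periodic (b : Module.Basis ι ℝ E) (F : E → ℝ) (y : span ℤ (Set.range b)) :
    Function.Periodic (latticeSum b F) y := fun v => by
  rw [latticeSum, latticeSum, ← (Equiv.addLeft y).tsum_eq (fun z => F (v + z))]
  simp [add_assoc]

variable [Fintype ι]

lemma abs_sub_le_of_periodic_basis (b : Module.Basis ι ℝ E) (k : ℕ) {B : ℝ} {F : E → ℝ}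
    (hF : ContDiff ℝ (k + 1) F)
    (hper : ∀ y : span ℤ (Set.range b), Function.Periodic F y)
    (hB : ∀ v, ‖iteratedFDeriv ℝ (k + 1) F v‖ ≤ B) (v w : E) :
    |F v - F w| ≤ (∑ i, ‖b i‖ ^ (k + 1)) * B := by
  wlog hvw : v ∈ ZSpan.fundamentalDomain b ∧ w ∈ ZSpan.fundamentalDomain b generalizing v w
  · simpa only [ZSpan.fract_apply, (hper _).sub_eq] using
      this _ _ ⟨ZSpan.fract_mem_fundamentalDomain b v, ZSpan.fract_mem_fundamentalDomain b w⟩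
  obtain ⟨hv, hw⟩ := hvw
  have hF1 : Differentiable ℝ F := hF.differentiable (by simp)
  have hdir : ∀ i y, |fderiv ℝ F y (b i)| ≤ ‖b i‖ ^ (k + 1) * B := by
    intro i y
    have hline : ContDiff ℝ (k + 1) fun t : ℝ => F (y + t • b i) := by fun_prop
    have hderiv : deriv (fun t : ℝ => F (y + t • b i)) 0 = fderiv ℝ F y (b i) := by
      simpa [lineDeriv] using (hF1 y).lineDeriv_eq_fderiv (v := b i)
    rw [← hderiv]
    refine abs_deriv_le_of_periodic k hline (fun t => ?_) (fun t => ?_) 0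
    · simp only [add_smul, one_smul, ← add_assoc, hper ⟨b i, subset_span ⟨i, rfl⟩⟩ _]
    · rw [iteratedDeriv_comp_add_smul (by exact_mod_cast hF)]
      refine ((iteratedFDeriv ℝ (k + 1) F (y + t • b i)).le_opNorm _).trans ?_
      simpa [mul_comm] using mul_le_mul_of_nonneg_right (hB (y + t • b i))
        (by positivity : 0 ≤ ‖b i‖ ^ (k + 1))
  have hcoord : ∀ i, |b.repr (v - w) i| ≤ 1 := fun i => by
    rw [ZSpan.mem_fundamentalDomain] at hv hw
    rw [map_sub, Finsupp.sub_apply, abs_le]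
    constructor <;> linarith [(hv i).1, (hv i).2, (hw i).1, (hw i).2]
  have hline : ∀ t : ℝ, HasDerivAt (fun t : ℝ => F (w + t • (v - w)))
      (fderiv ℝ F (w + t • (v - w)) (v - w)) t := fun t => by
    simpa [Function.comp_def] using (hF1 _).hasFDerivAt.comp_hasDerivAt t
      (((hasDerivAt_id t).smul_const (v - w)).const_add w)
  have hmean := convex_univ.norm_image_sub_le_of_norm_hasDerivWithin_le
    (s := Set.univ) (C := (∑ i, ‖b i‖ ^ (k + 1)) * B)
    (fun t _ => (hline t).hasDerivWithinAt) (fun t _ => ?_) (Set.mem_univ 0) (Set.mem_univ 1)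
  · simpa using hmean
  · conv_lhs => enter [1, 2]; rw [← b.sum_repr (v - w)]
    rw [map_sum, Finset.sum_mul]
    refine (norm_sum_le _ _).trans (Finset.sum_le_sum fun i _ => ?_)
    rw [map_smul, norm_smul]
    exact (mul_le_of_le_one_left (norm_nonneg _) (hcoord i)).trans (hdir i _)

lemma exists_finset_lattice_ball (b : Module.Basis ι ℝ E) :
    ∃ C : ℝ, ∀ r : ℝ, 1 ≤ r → ∀ v : E, ∃ s : Finset (span ℤ (Set.range b)),
      (∀ y : span ℤ (Set.range b), ‖v + y‖ ≤ r → y ∈ s) ∧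
        (s.card : ℝ) ≤ C * r ^ Fintype.card ι := by
  classical
  have := b.finiteDimensional_of_finite
  let e : E →L[ℝ] ι → ℝ := b.equivFun.toLinearMap.toContinuousLinearMap
  refine ⟨(2 * ‖e‖ + 1) ^ Fintype.card ι, fun r hr v => ?_⟩
  let box : Finset (ι → ℤ) := Fintype.piFinset fun i =>
    Finset.Icc ⌈-b.repr v i - ‖e‖ * r⌉ ⌊-b.repr v i + ‖e‖ * r⌋
  refine ⟨box.map (b.restrictScalars ℤ).equivFun.symm.toEquiv.toEmbedding, fun y hy => ?_, ?_⟩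
  · simp only [Finset.mem_map_equiv, box, Fintype.mem_piFinset, Finset.mem_Icc, Int.ceil_le,
      Int.le_floor]
    intro i
    have hyi : (((b.restrictScalars ℤ).repr y i : ℤ) : ℝ) = b.repr y i := by
      simpa using b.restrictScalars_repr_apply ℤ y i
    have hcoord : |b.repr v i + b.repr y i| ≤ ‖e‖ * r := by
      calc |b.repr v i + b.repr y i| = ‖e (v + y) i‖ := by simp [e]
        _ ≤ ‖e (v + y)‖ := norm_le_pi_norm _ i
        _ ≤ ‖e‖ * r := e.le_opNorm_of_le hy
    have := abs_le.1 hcoord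
    change _ ≤ (((b.restrictScalars ℤ).repr y i : ℤ) : ℝ) ∧
      (((b.restrictScalars ℤ).repr y i : ℤ) : ℝ) ≤ _
    rw [hyi]
    constructor <;> linarith
  · rw [Finset.card_map, Fintype.card_piFinset, Nat.cast_prod, ← mul_pow, ← Finset.card_univ,
      ← Finset.prod_const]
    refine Finset.prod_le_prod (fun _ _ => by positivity) fun i _ => ?_
    have hcard : ∀ n : ℤ, (n : ℝ) ≤ (2 * ‖e‖ + 1) * r → (n.toNat : ℝ) ≤ (2 * ‖e‖ + 1) * r := by
      intro n hn
      rw [← Int.cast_natCast, Int.toNat_eq_max, Int.cast_max, Int.cast_zero]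
      exact max_le hn (by positivity)
    rw [Int.card_Icc]
    refine hcard _ ?_
    push_cast
    linarith [Int.floor_le (-b.repr v i + ‖e‖ * r), Int.le_ceil (-b.repr v i - ‖e‖ * r)]

lemma exists_latticeSum_eq_sum (b : Module.Basis ι ℝ E) :
    ∃ C : ℝ, ∀ r : ℝ, 1 ≤ r → ∀ v₀ : E, ∃ s : Finset (span ℤ (Set.range b)),
      (s.card : ℝ) ≤ C * r ^ Fintype.card ι ∧
      ∀ F : E → ℝ, Function.support F ⊆ Metric.closedBall 0 r → ∀ v ∈ Metric.closedBall v₀ r,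
        (∀ y ∉ s, F (v + y) = 0) ∧ latticeSum b F v = ∑ y ∈ s, F (v + y) := by
  obtain ⟨C, hC⟩ := exists_finset_lattice_ball b
  refine ⟨C * 2 ^ Fintype.card ι, fun r hr v₀ => ?_⟩
  obtain ⟨s, hs, hcard⟩ := hC (2 * r) (by linarith) v₀
  refine ⟨s, by rwa [mul_assoc, ← mul_pow], fun F hF v hv => ?_⟩
  have hzero : ∀ y ∉ s, F (v + y) = 0 := by
    intro y hy
    contrapose! hy
    have hvy : ‖v + y‖ ≤ r := by simpa using hF hy
    refine hs y ?_
    calc ‖v₀ + y‖ = ‖(v + y) - (v - v₀)‖ := by congr 1; abel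
      _ ≤ ‖v + y‖ + ‖v - v₀‖ := norm_sub_le _ _
      _ ≤ 2 * r := by linarith [mem_closedBall_iff_norm.1 hv]
  exact ⟨hzero, tsum_eq_sum hzero⟩

lemma latticeSum_contDiff_and_norm_le (b : Module.Basis ι ℝ E) (k : ℕ) :
    ∃ C : ℝ, ∀ (r B : ℝ) (F : E → ℝ), 1 ≤ r → ContDiff ℝ k F →
      Function.support F ⊆ Metric.closedBall 0 r → (∀ v, ‖iteratedFDeriv ℝ k F v‖ ≤ B) →
      ContDiff ℝ k (latticeSum b F) ∧
        ∀ v, ‖iteratedFDeriv ℝ k (latticeSum b F) v‖ ≤ C * r ^ Fintype.card ι * B := by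
  obtain ⟨C, hC⟩ := exists_latticeSum_eq_sum b
  refine ⟨C, fun r B F hr hF hsupp hB => ?_⟩
  have hlocal : ∀ v₀, ∃ s : Finset (span ℤ (Set.range b)), (s.card : ℝ) ≤ C * r ^ Fintype.card ι ∧
      latticeSum b F =ᶠ[nhds v₀] fun v => ∑ y ∈ s, F (v + y) := by
    intro v₀
    obtain ⟨s, hcard, hs⟩ := hC r hr v₀
    exact ⟨s, hcard, Filter.eventually_of_mem (Metric.closedBall_mem_nhds v₀ (by linarith))
      fun v hv => (hs F hsupp v hv).2⟩
  refine ⟨contDiff_iff_contDiffAt.2 fun v₀ => ?_, fun v₀ => ?_⟩ <;>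
    obtain ⟨s, hcard, hs⟩ := hlocal v₀
  · exact ContDiffAt.congr_of_eventuallyEq (by fun_prop) hs
  · rw [(hs.iteratedFDeriv ℝ k).eq_of_nhds, iteratedFDeriv_fun_sum_apply fun y _ => by fun_prop]
    calc ‖∑ y ∈ s, iteratedFDeriv ℝ k (fun v => F (v + y)) v₀‖ ≤ ∑ _y ∈ s, B :=
          norm_sum_le_of_le _ fun y _ => by
            rw [iteratedFDeriv_comp_add_right]
            exact hB _
      _ = s.card * B := by rw [Finset.sum_const, nsmul_eq_mul]
      _ ≤ C * r ^ Fintype.card ι * B := by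
          gcongr
          exact (norm_nonneg _).trans (hB 0)

variable [MeasurableSpace E] [BorelSpace E]

lemma setIntegral_latticeSum {κ : Type*} [Finite κ] (b : Module.Basis κ ℝ E) (μ : Measure E)
    [μ.IsAddHaarMeasure] {F : E → ℝ} (hF : Continuous F) (hc : HasCompactSupport F) :
    ∫ v in ZSpan.fundamentalDomain b, latticeSum b F v ∂μ = ∫ v, F v ∂μ := by
  cases nonempty_fintype κ
  have := b.finiteDimensional_of_finite
  obtain ⟨r₁, hr₁⟩ := hc.isCompact.isBounded.subset_closedBall 0
  obtain ⟨r₂, hr₂⟩ := (ZSpan.fundamentalDomain_isBounded b).subset_closedBall 0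
  let r := max 1 (max r₁ r₂)
  obtain ⟨_, hC⟩ := exists_latticeSum_eq_sum b
  obtain ⟨s, -, hs⟩ := hC r (le_max_left _ _) 0
  replace hs := fun v hv => hs F ((subset_tsupport F).trans (hr₁.trans
    (Metric.closedBall_subset_closedBall (by simp [r])))) v
    (Metric.closedBall_subset_closedBall (by simp [r]) (hr₂ hv))
  have hmeas := ZSpan.fundamentalDomain_measurableSet b
  have hInt : ∀ y : span ℤ (Set.range b),
      IntegrableOn (fun v => F (v + y)) (ZSpan.fundamentalDomain b) μ := fun y =>
    ((hF.integrable_of_hasCompactSupport hc).comp_add_right (y : E)).integrableOn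
  have : Countable (span ℤ (Set.range b)).toAddSubgroup :=
    inferInstanceAs (Countable (span ℤ (Set.range b)))
  have hunfold : ∫ v, F v ∂μ =
      ∑' y : span ℤ (Set.range b), ∫ v in ZSpan.fundamentalDomain b, F (y + v) ∂μ :=
    (ZSpan.isAddFundamentalDomain' b μ).integral_eq_tsum'' F (hF.integrable_of_hasCompactSupport hc)
  simp only [add_comm _ (_ : E)] at hunfold
  rw [hunfold, setIntegral_congr_fun hmeas fun v hv => (hs v hv).2,
    integral_finsetSum _ fun y _ => hInt y, tsum_eq_sum fun y hy => ?_]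
  rw [setIntegral_congr_fun hmeas fun v hv => (hs v hv).1 y hy, integral_zero]

lemma abs_latticeSum_sub_mean_le (b : Module.Basis ι ℝ E) (μ : Measure E) [μ.IsAddHaarMeasure]
    (k : ℕ) :
    ∃ C : ℝ, ∀ (r B : ℝ) (F : E → ℝ), 1 ≤ r → ContDiff ℝ (k + 1) F →
      Function.support F ⊆ Metric.closedBall 0 r → (∀ v, ‖iteratedFDeriv ℝ (k + 1) F v‖ ≤ B) →
      ∀ v, |latticeSum b F v - (∫ x, F x ∂μ) / μ.real (ZSpan.fundamentalDomain b)| ≤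
        C * r ^ Fintype.card ι * B := by
  have := b.finiteDimensional_of_finite
  obtain ⟨C, hC⟩ := latticeSum_contDiff_and_norm_le b (k + 1)
  refine ⟨(∑ i, ‖b i‖ ^ (k + 1)) * C, fun r B F hr hF hsupp hB v => ?_⟩
  obtain ⟨hcd, hder⟩ := hC r B F hr (by exact_mod_cast hF) hsupp hB
  set D := ZSpan.fundamentalDomain b
  have hosc : ∀ w ∈ D, ‖latticeSum b F v - latticeSum b F w‖ ≤
      (∑ i, ‖b i‖ ^ (k + 1)) * C * r ^ Fintype.card ι * B := fun w _ => by
    simpa only [mul_assoc, Real.norm_eq_abs] using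
      abs_sub_le_of_periodic_basis b k (by exact_mod_cast hcd) (latticeSum_periodic b F) hder v w
  have hfin : μ D < ⊤ := (ZSpan.fundamentalDomain_isBounded b).measure_lt_top
  have hpos : 0 < μ.real D :=
    ENNReal.toReal_pos (ZSpan.measure_fundamentalDomain_ne_zero b) hfin.ne
  have hInt : IntegrableOn (latticeSum b F) D μ :=
    (hcd.continuous.continuousOn.integrableOn_compact
      (ZSpan.fundamentalDomain_isBounded b).isCompact_closure).mono_set subset_closure
  have hmean : ∫ w in D, (latticeSum b F v - latticeSum b F w) ∂μ =
      μ.real D * (latticeSum b F v - (∫ x, F x ∂μ) / μ.real D) := by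
    rw [integral_sub (integrableOn_const (C := latticeSum b F v) hfin.ne) hInt, setIntegral_const,
      setIntegral_latticeSum b μ hF.continuous
        (.of_support_subset_isCompact (isCompact_closedBall 0 r) hsupp), smul_eq_mul]
    field_simp
  have hbound := norm_setIntegral_le_of_norm_le_const hfin hosc
  rw [hmean, norm_mul, Real.norm_of_nonneg hpos.le, mul_comm _ (μ.real D)] at hbound
  exact le_of_mul_le_mul_left hbound hpos

/-- The periodization differs from its mean by at most a constant multiple of its derivatives of
order `d + 1`; these are `O(T⁻¹)`, as `O(T ^ d)` lattice points contribute `O(T ^ (-d-1))` each. -/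
theorem latticeSum_dilation_isBounded (b : Module.Basis ι ℝ E) (μ : Measure E)
    [μ.IsAddHaarMeasure] {G : E → ℝ} (hG : ContDiff ℝ ∞ G) (hc : HasCompactSupport G) :
    ∃ C : ℝ, ∀ T : ℝ, 1 ≤ T → ∀ v : E,
      |latticeSum b (fun x => G (T⁻¹ • x)) v -
        T ^ Fintype.card ι * ((∫ x, G x ∂μ) / μ.real (ZSpan.fundamentalDomain b))| ≤ C := by
  have := b.finiteDimensional_of_finite
  let d := Fintype.card ι
  obtain ⟨C, hC⟩ := abs_latticeSum_sub_mean_le b μ d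
  obtain ⟨R, hR⟩ := hc.isCompact.isBounded.subset_closedBall 0
  obtain ⟨B, hB⟩ := (hG.continuous_iteratedFDeriv (m := (d + 1 : ℕ))
    (by exact_mod_cast le_top)).bounded_above_of_compact_support (hc.iteratedFDeriv (d + 1))
  refine ⟨|C * max 1 R ^ d * B|, fun T hT v => ?_⟩
  have hT0 : 0 < T := one_pos.trans_le hT
  have hsupp : Function.support (fun x => G (T⁻¹ • x)) ⊆ Metric.closedBall 0 (max 1 R * T) := by
    intro x hx
    have hxT := hR (subset_tsupport G hx)
    rw [mem_closedBall_zero_iff, norm_smul, norm_inv, Real.norm_of_nonneg hT0.le,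
      inv_mul_le_iff₀' hT0] at hxT
    rw [mem_closedBall_zero_iff]
    exact hxT.trans (by gcongr; exact le_max_right _ _)
  have hder : ∀ x, ‖iteratedFDeriv ℝ (d + 1) (fun x => G (T⁻¹ • x)) x‖ ≤ T⁻¹ ^ (d + 1) * B := by
    intro x
    rw [iteratedFDeriv_comp_const_smul _ (hG.of_le (by exact_mod_cast le_top)), norm_smul,
      norm_pow, norm_inv, Real.norm_of_nonneg hT0.le]
    gcongr
    exact hB _
  have hmean : ∫ x, G (T⁻¹ • x) ∂μ = T ^ d * ∫ x, G x ∂μ := by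
    rw [Measure.integral_comp_inv_smul_of_nonneg μ G hT0.le, Module.finrank_eq_card_basis b,
      smul_eq_mul]
  have hbound := hC (max 1 R * T) _ (fun x => G (T⁻¹ • x))
    (one_le_mul_of_one_le_of_one_le (le_max_left _ _) hT)
    ((hG.comp (contDiff_const_smul _)).of_le (by exact_mod_cast le_top)) hsupp hder v
  rw [hmean, mul_div_assoc] at hbound
  calc _ ≤ C * (max 1 R * T) ^ d * (T⁻¹ ^ (d + 1) * B) := hbound
    _ = C * max 1 R ^ d * B * T⁻¹ := by
        rw [mul_pow, pow_succ]
        linear_combination (C * max 1 R ^ d * B * T⁻¹) * (inv_mul_cancel₀ (pow_ne_zero d hT0.ne'))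
    _ ≤ |C * max 1 R ^ d * B| := by
        refine (mul_le_mul_of_nonneg_right (le_abs_self _) (by positivity)).trans ?_
        exact mul_le_of_le_one_right (abs_nonneg _) (inv_le_one_of_one_le₀ hT)

end
end LatticeSums

section UnitWeight

open NumberField.InfinitePlace NumberField.mixedEmbedding NumberField.Units
  NumberField.Units.dirichletUnitTheorem NumberField.mixedEmbedding.fundamentalCone
open scoped Classical ContDiff

/-- A smooth function whose translates by the integers form a partition of unity. -/
noncomputable def unityBump (t : ℝ) : ℝ := Real.smoothTransition (t + 1) - Real.smoothTransition t

lemma contDiff_unityBump : ContDiff ℝ ∞ unityBump :=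
  (Real.smoothTransition.contDiff.comp (by fun_prop)).sub Real.smoothTransition.contDiff

lemma unityBump_nonneg (t : ℝ) : 0 ≤ unityBump t :=
  sub_nonneg.2 (Real.smoothTransition.monotone (by linarith))

lemma abs_le_one_of_unityBump_ne_zero {t : ℝ} (ht : unityBump t ≠ 0) : |t| ≤ 1 := by
  contrapose! ht
  rcases lt_abs.1 ht with h | h
  · rw [unityBump, Real.smoothTransition.one_of_one_le (by linarith),
      Real.smoothTransition.one_of_one_le h.le, sub_self]
  · rw [unityBump, Real.smoothTransition.zero_of_nonpos (by linarith),
      Real.smoothTransition.zero_of_nonpos (by linarith), sub_self]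

lemma exists_finset_sum_unityBump (c : ℝ) :
    ∃ s : Finset ℤ, (∀ n ∉ s, unityBump (c + n) = 0) ∧ ∑ n ∈ s, unityBump (c + n) = 1 := by
  have h0 := Int.floor_le c
  have h1 := Int.lt_floor_add_one c
  refine ⟨{-⌊c⌋ - 1, -⌊c⌋}, fun n hn => ?_, ?_⟩
  · simp only [Finset.mem_insert, Finset.mem_singleton, not_or] at hn
    have hn' : n + 2 ≤ -⌊c⌋ ∨ -⌊c⌋ + 1 ≤ n := by lia
    rcases hn' with h | h
    · have : (n : ℝ) + 2 ≤ -⌊c⌋ := by exact_mod_cast h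
      rw [unityBump, Real.smoothTransition.zero_of_nonpos (by linarith),
        Real.smoothTransition.zero_of_nonpos (by linarith), sub_self]
    · have : -(⌊c⌋ : ℝ) + 1 ≤ n := by exact_mod_cast h
      rw [unityBump, Real.smoothTransition.one_of_one_le (by linarith),
        Real.smoothTransition.one_of_one_le (by linarith), sub_self]
  · rw [Finset.sum_pair (by lia), unityBump, unityBump]
    push_cast
    rw [Real.smoothTransition.zero_of_nonpos (x := c + (-⌊c⌋ - 1)) (by linarith),
      Real.smoothTransition.one_of_one_le (x := c + -⌊c⌋ + 1) (by linarith)]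
    ring_nf

lemma hasSum_prod_unityBump {ι : Type*} [Fintype ι] (c : ι → ℝ) :
    HasSum (fun n : ι → ℤ => ∏ i, unityBump (c i + n i)) 1 := by
  choose s hs hs1 using fun i => exists_finset_sum_unityBump (c i)
  have hsum : ∑ n ∈ Fintype.piFinset s, ∏ i, unityBump (c i + n i) = 1 := by
    rw [← Finset.prod_univ_sum (f := fun i (m : ℤ) => unityBump (c i + m)),
      Finset.prod_eq_one fun i _ => hs1 i]
  rw [← hsum]
  refine hasSum_sum_of_ne_finset_zero fun n hn => ?_
  obtain ⟨i, hi⟩ := not_forall.1 (mt Fintype.mem_piFinset.2 hn)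
  exact Finset.prod_eq_zero (Finset.mem_univ i) (hs i _ hi)

/-- The smooth cutoff, supported in `[-2, -1]`, with which all norms are counted on a logarithmic
scale. -/
noncomputable def window : ContDiffBump (-3 / 2 : ℝ) :=
  ⟨1 / 4, 1 / 2, by norm_num, by norm_num⟩

lemma mem_Icc_of_window_ne_zero {t : ℝ} (ht : window t ≠ 0) : t ∈ Set.Icc (-2 : ℝ) (-1) := by
  have hdist : dist t (-3 / 2) < 1 / 2 := by
    contrapose! ht
    exact window.zero_of_le_dist ht
  rw [Real.dist_eq, abs_lt] at hdist
  exact ⟨by linarith, by linarith⟩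

variable {K : Type*} [Field K]

lemma normAtPlace_mixedEmbedding_ne_zero {a : K} (ha : a ≠ 0) (w : InfinitePlace K) :
    normAtPlace w (mixedEmbedding K a) ≠ 0 := by
  rw [normAtPlace_apply]
  exact (map_ne_zero w).2 ha

variable [NumberField K]

/-- The vector of logarithms of the normalized absolute values of a point of the mixed space. -/
noncomputable def placeLog (x : mixedSpace K) : realSpace K := expMap.symm (normAtAllPlaces x)

lemma placeLog_apply (x : mixedSpace K) (w : InfinitePlace K) :
    placeLog x w = w.mult * Real.log (normAtPlace w x) := by
  simp [placeLog]

lemma contDiffAt_normAtPlace (w : InfinitePlace K) {x : mixedSpace K} (hx : normAtPlace w x ≠ 0) :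
    ContDiffAt ℝ ∞ (fun x : mixedSpace K => normAtPlace w x) x := by
  rcases isReal_or_isComplex w with h | h
  · simp only [normAtPlace_apply_of_isReal h, ne_eq, norm_eq_zero] at hx ⊢
    exact ContDiffAt.norm ℝ (by fun_prop) hx
  · simp only [normAtPlace_apply_of_isComplex h, ne_eq, norm_eq_zero] at hx ⊢
    exact ContDiffAt.norm ℝ (by fun_prop) hx

lemma contDiffAt_placeLog {x : mixedSpace K} (hx : ∀ w, normAtPlace w x ≠ 0) :
    ContDiffAt ℝ ∞ (placeLog : mixedSpace K → realSpace K) x := by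
  refine contDiffAt_pi.2 fun w => ?_
  simp only [placeLog_apply]
  exact contDiffAt_const.mul ((contDiffAt_normAtPlace w (hx w)).log (hx w))

/-- The pullback of a function along `placeLog`, extended by zero to the points with a vanishing
coordinate, where `placeLog` takes a junk value. -/
noncomputable def placeLogPullback (F : realSpace K → ℝ) (x : mixedSpace K) : ℝ :=
  if ∀ w, normAtPlace w x ≠ 0 then F (placeLog x) else 0

lemma exists_bound_of_placeLogPullback_ne_zero {F : realSpace K → ℝ} (hc : HasCompactSupport F) :
    ∃ R : ℝ, ∀ x, placeLogPullback F x ≠ 0 →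
      ∀ w, normAtPlace w x ∈ Set.Icc (Real.exp (-R)) (Real.exp R) := by
  obtain ⟨R, hR⟩ := hc.isCompact.isBounded.exists_norm_le
  refine ⟨R, fun x hx w => ?_⟩
  have hx0 : ∀ w, normAtPlace w x ≠ 0 := by
    contrapose! hx
    exact if_neg (by simpa using hx)
  rw [placeLogPullback, if_pos hx0] at hx
  have hw : 0 < normAtPlace w x := (normAtPlace_nonneg w x).lt_of_ne' (hx0 w)
  have hlog : |Real.log (normAtPlace w x)| ≤ R := by
    calc |Real.log (normAtPlace w x)| ≤ w.mult * |Real.log (normAtPlace w x)| :=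
          le_mul_of_one_le_left (abs_nonneg _) (by exact_mod_cast mult_pos)
      _ = ‖placeLog x w‖ := by rw [placeLog_apply, Real.norm_eq_abs, abs_mul, Nat.abs_cast]
      _ ≤ R := (norm_le_pi_norm (placeLog x) w).trans (hR _ (subset_tsupport _ hx))
  exact ⟨(Real.le_log_iff_exp_le hw).1 (abs_le.1 hlog).1,
    (Real.log_le_iff_le_exp hw).1 (abs_le.1 hlog).2⟩

lemma contDiff_placeLogPullback {F : realSpace K → ℝ} (hF : ContDiff ℝ ∞ F)
    (hc : HasCompactSupport F) : ContDiff ℝ ∞ (placeLogPullback F) := by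
  obtain ⟨R, hR⟩ := exists_bound_of_placeLogPullback_ne_zero hc
  refine contDiff_iff_contDiffAt.2 fun x => ?_
  by_cases hx : ∀ w, normAtPlace w x ≠ 0
  · have hnear : placeLogPullback F =ᶠ[nhds x] F ∘ placeLog := by
      filter_upwards [Filter.eventually_all.2 fun w =>
        (continuous_normAtPlace w).continuousAt.eventually_ne (hx w)] with y hy
      exact if_pos hy
    exact (hF.contDiffAt.comp x (contDiffAt_placeLog hx)).congr_of_eventuallyEq hnear
  · obtain ⟨w, hw⟩ := not_forall_not.1 hx
    have hnear : placeLogPullback F =ᶠ[nhds x] fun _ => 0 := by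
      filter_upwards [(continuous_normAtPlace w).continuousAt.eventually_lt continuousAt_const
        (hw.trans_lt (Real.exp_pos (-R)))] with y hy
      by_contra hne
      exact hy.not_ge (hR y hne w).1
    exact contDiffAt_const.congr_of_eventuallyEq hnear

lemma hasCompactSupport_placeLogPullback {F : realSpace K → ℝ} (hc : HasCompactSupport F) :
    HasCompactSupport (placeLogPullback F) := by
  obtain ⟨R, hR⟩ := exists_bound_of_placeLogPullback_ne_zero hc
  refine .of_support_subset_isCompact (isCompact_closedBall 0 (Real.exp R)) fun x hx => ?_
  rw [mem_closedBall_zero_iff, norm_eq_sup'_normAtPlace, Finset.sup'_le_iff]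
  exact fun w _ => (hR x hx w).2

variable (K) in
/-- A weight on logarithmic space whose translates by the unit lattice sum to the window applied to
the logarithm of the norm: the coordinates of `z` with respect to the fundamental units are
weighted by a partition of unity. -/
noncomputable def logWeight (z : realSpace K) : ℝ :=
  (∏ w : {w : InfinitePlace K // w ≠ w₀}, unityBump ((completeBasis K).equivFun z w)) *
    window (∑ w, z w)

variable (K) in
/-- The weight on the mixed space defined by `logWeight`: a smooth substitute for the indicator
function of a fundamental domain for the action of the units. -/
noncomputable def unitWeight : mixedSpace K → ℝ := placeLogPullback (logWeight K)

lemma sum_completeBasis_w₀ : ∑ w, completeBasis K w₀ w = Module.finrank ℚ K := by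
  rw [completeBasis_apply_of_eq, ← Nat.cast_sum, sum_mult_eq]

lemma sum_completeBasis_ne (i : {w : InfinitePlace K // w ≠ w₀}) :
    ∑ w, completeBasis K i w = 0 := by
  rw [completeBasis_apply_of_ne, sum_expMap_symm_apply (coe_ne_zero _), Units.norm, Rat.cast_one,
    Real.log_one]

lemma sum_eq_finrank_mul_equivFun (z : realSpace K) :
    ∑ w, z w = Module.finrank ℚ K * (completeBasis K).equivFun z w₀ := by
  conv_lhs => rw [← (completeBasis K).sum_equivFun z]
  simp only [Finset.sum_apply, Pi.smul_apply, smul_eq_mul]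
  rw [Finset.sum_comm]
  simp only [← Finset.mul_sum]
  rw [Finset.sum_eq_single w₀, sum_completeBasis_w₀, mul_comm]
  · intro w _ hw
    rw [sum_completeBasis_ne ⟨w, hw⟩, mul_zero]
  · simp

lemma contDiff_logWeight : ContDiff ℝ ∞ (logWeight K) := by
  have hcoord : ContDiff ℝ ∞ fun z : realSpace K => (completeBasis K).equivFun z :=
    (completeBasis K).equivFun.toContinuousLinearEquiv.contDiff
  exact (contDiff_prod fun w _ => contDiff_unityBump.comp (contDiff_pi.1 hcoord w.1)).mul
    (window.contDiff.comp (by fun_prop))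

lemma hasCompactSupport_logWeight : HasCompactSupport (logWeight K) := by
  let e : realSpace K ≃L[ℝ] (InfinitePlace K → ℝ) :=
    (completeBasis K).equivFun.toContinuousLinearEquiv
  have hd : (1 : ℝ) ≤ Module.finrank ℚ K := by
    exact_mod_cast Module.finrank_pos (R := ℚ) (M := K)
  refine .of_support_subset_isCompact
    ((isCompact_closedBall (0 : InfinitePlace K → ℝ) 2).image e.symm.continuous) fun z hz => ?_
  obtain ⟨hprod, hsum⟩ := mul_ne_zero_iff.1 hz
  refine ⟨e z, ?_, by simp⟩
  rw [mem_closedBall_zero_iff, pi_norm_le_iff_of_nonneg zero_le_two]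
  intro w
  change |(completeBasis K).equivFun z w| ≤ 2
  by_cases hw : w = w₀
  · subst hw
    have hsum := mem_Icc_of_window_ne_zero hsum
    rw [sum_eq_finrank_mul_equivFun] at hsum
    calc _ ≤ (Module.finrank ℚ K : ℝ) * |(completeBasis K).equivFun z w₀| :=
          le_mul_of_one_le_left (abs_nonneg _) hd
      _ = |Module.finrank ℚ K * (completeBasis K).equivFun z w₀| := by rw [abs_mul, Nat.abs_cast]
      _ ≤ 2 := abs_le.2 ⟨hsum.1, by linarith [hsum.2]⟩
  · have := abs_le_one_of_unityBump_ne_zero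
      (Finset.prod_ne_zero_iff.1 hprod ⟨w, hw⟩ (Finset.mem_univ _))
    exact this.trans one_le_two

lemma logWeight_add_sub (z : realSpace K) (e : {w : InfinitePlace K // w ≠ w₀} → ℤ) (s : ℝ) :
    logWeight K (z + ∑ i, (e i : ℝ) • completeBasis K i - s • completeBasis K w₀) =
      (∏ i : {w : InfinitePlace K // w ≠ w₀}, unityBump ((completeBasis K).equivFun z i + e i)) *
        window (∑ w, z w - Module.finrank ℚ K * s) := by
  rw [logWeight]
  congr 1
  · refine Finset.prod_congr rfl fun i _ => congrArg unityBump ?_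
    simp only [map_sub, map_add, map_sum, map_smul, Pi.sub_apply, Pi.add_apply, Finset.sum_apply,
      Pi.smul_apply, Module.Basis.equivFun_self, smul_eq_mul]
    rw [if_neg i.2.symm, Finset.sum_eq_single i]
    · simp
    · intro j _ hj
      rw [if_neg (fun h => hj (Subtype.ext h)), mul_zero]
    · simp
  · congr 1
    simp only [Pi.sub_apply, Pi.add_apply, Finset.sum_apply, Pi.smul_apply, smul_eq_mul,
      Finset.sum_sub_distrib, Finset.sum_add_distrib]
    rw [Finset.sum_comm]
    simp only [← Finset.mul_sum, sum_completeBasis_ne, sum_completeBasis_w₀]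
    simp [mul_comm]

lemma contDiff_unitWeight : ContDiff ℝ ∞ (unitWeight K) :=
  contDiff_placeLogPullback contDiff_logWeight hasCompactSupport_logWeight

lemma hasCompactSupport_unitWeight : HasCompactSupport (unitWeight K) :=
  hasCompactSupport_placeLogPullback hasCompactSupport_logWeight

lemma unitWeight_nonneg (x : mixedSpace K) : 0 ≤ unitWeight K x := by
  rw [unitWeight, placeLogPullback]
  split_ifs
  · exact mul_nonneg (Finset.prod_nonneg fun _ _ => unityBump_nonneg _) window.nonneg
  · exact le_rfl

lemma placeLog_mul {x y : mixedSpace K} (hx : ∀ w, normAtPlace w x ≠ 0)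
    (hy : ∀ w, normAtPlace w y ≠ 0) : placeLog (x * y) = placeLog x + placeLog y := by
  ext w
  simp only [placeLog_apply, Pi.add_apply]
  rw [map_mul, Real.log_mul (hx w) (hy w), mul_add]

lemma placeLog_inv_smul {x : mixedSpace K} (hx : ∀ w, normAtPlace w x ≠ 0) {T : ℝ} (hT : 0 < T) :
    placeLog (T⁻¹ • x) = placeLog x - Real.log T • completeBasis K w₀ := by
  ext w
  rw [completeBasis_apply_of_eq]
  simp only [placeLog_apply, Pi.sub_apply, Pi.smul_apply, smul_eq_mul]
  rw [normAtPlace_smul, abs_of_pos (by positivity), Real.log_mul (by positivity) (hx w),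
    Real.log_inv]
  ring

/-- The logarithmic embedding of the units, with all infinite places kept. -/
noncomputable def placeLogHom : (𝓞 K)ˣ →* Multiplicative (realSpace K) where
  toFun u := .ofAdd (placeLog (mixedEmbedding K (u : K)))
  map_one' := by
    rw [← ofAdd_zero]
    congr 1
    ext w
    simp [placeLog_apply]
  map_mul' u v := by
    rw [← ofAdd_add, ← placeLog_mul (normAtPlace_mixedEmbedding_ne_zero (coe_ne_zero _))
      (normAtPlace_mixedEmbedding_ne_zero (coe_ne_zero _)), ← map_mul]
    simp

lemma placeLogHom_torsion (ζ : torsion K) : placeLogHom (ζ : (𝓞 K)ˣ) = 1 := by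
  refine congrArg Multiplicative.ofAdd (funext fun w => ?_)
  rw [placeLog_apply, normAtPlace_apply, (mem_torsion K).1 ζ.2 w, Real.log_one, mul_zero,
    Pi.zero_apply]

lemma placeLog_fundSystem (ζ : torsion K) (e : Fin (rank K) → ℤ) :
    placeLog (mixedEmbedding K
        (((ζ : (𝓞 K)ˣ) * ∏ i, fundSystem K i ^ e i : (𝓞 K)ˣ) : K)) =
      ∑ i : {w : InfinitePlace K // w ≠ w₀},
        (e (fundamentalCone.equivFinRank.symm i) : ℝ) • completeBasis K i := by
  change Multiplicative.toAdd (placeLogHom _) = _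
  rw [map_mul, placeLogHom_torsion, one_mul, map_prod, toAdd_prod,
    ← (fundamentalCone.equivFinRank (K := K)).symm.sum_comp]
  refine Finset.sum_congr rfl fun i _ => ?_
  rw [map_zpow, toAdd_zpow, completeBasis_apply_of_ne, Int.cast_smul_eq_zsmul]
  rfl

lemma unitWeight_inv_smul_fundSystem_mul {a : K} (ha : a ≠ 0) {T : ℝ} (hT : 0 < T)
    (ζ : torsion K) (e : Fin (rank K) → ℤ) :
    unitWeight K (T⁻¹ • mixedEmbedding K
        ((((ζ : (𝓞 K)ˣ) * ∏ i, fundSystem K i ^ e i : (𝓞 K)ˣ) : K) * a)) =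
      (∏ i, unityBump ((completeBasis K).equivFun (placeLog (mixedEmbedding K a))
        (fundamentalCone.equivFinRank i) + e i)) *
      window (Real.log |(Algebra.norm ℚ a : ℝ)| - Module.finrank ℚ K * Real.log T) := by
  set u : (𝓞 K)ˣ := (ζ : (𝓞 K)ˣ) * ∏ i, fundSystem K i ^ e i with hu
  have hu0 := normAtPlace_mixedEmbedding_ne_zero (coe_ne_zero u)
  have ha0 := normAtPlace_mixedEmbedding_ne_zero ha
  have hua := normAtPlace_mixedEmbedding_ne_zero (mul_ne_zero (coe_ne_zero u) ha)
  have hnorm : ∑ w, placeLog (mixedEmbedding K a) w = Real.log |(Algebra.norm ℚ a : ℝ)| := by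
    simpa [placeLog] using sum_expMap_symm_apply ha
  rw [unitWeight, placeLogPullback, if_pos, placeLog_inv_smul hua hT, map_mul,
    placeLog_mul hu0 ha0, hu, placeLog_fundSystem, add_comm _ (placeLog _),
    logWeight_add_sub _ fun i => e (fundamentalCone.equivFinRank.symm i), hnorm,
    ← (fundamentalCone.equivFinRank (K := K)).prod_comp]
  · simp
  · intro w
    rw [normAtPlace_smul]
    exact mul_ne_zero (by positivity) (hua w)

theorem hasSum_unitWeight {a : K} (ha : a ≠ 0) {T : ℝ} (hT : 0 < T) :
    HasSum (fun u : (𝓞 K)ˣ => unitWeight K (T⁻¹ • mixedEmbedding K ((u : K) * a)))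
      (torsionOrder K *
        window (Real.log |(Algebra.norm ℚ a : ℝ)| - Module.finrank ℚ K * Real.log T)) := by
  let f : torsion K × (Fin (rank K) → ℤ) → (𝓞 K)ˣ := fun p => p.1 * ∏ i, fundSystem K i ^ p.2 i
  have hf : Function.Bijective f := (Function.bijective_iff_existsUnique _).2 fun u => by
    obtain ⟨p, hp, huniq⟩ := exist_unique_eq_mul_prod K u
    exact ⟨p, hp.symm, fun q hq => huniq q hq.symm⟩
  have htorsion : HasSum (fun _ : torsion K => (1 : ℝ)) (torsionOrder K) := by
    have := Fintype.ofFinite (torsion K)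
    simpa [torsionOrder, Nat.card_eq_fintype_card] using hasSum_fintype fun _ : torsion K => (1 : ℝ)
  have hunits := hasSum_prod_unityBump fun i => (completeBasis K).equivFun
    (placeLog (mixedEmbedding K a)) (fundamentalCone.equivFinRank i).1
  have hsummable := htorsion.summable.mul_of_nonneg hunits.summable (fun _ => zero_le_one)
    fun e => Finset.prod_nonneg fun i _ => unityBump_nonneg _
  have hprod := htorsion.mul hunits hsummable
  rw [mul_one] at hprod
  rw [← (Equiv.ofBijective f hf).hasSum_iff]
  refine (congrArg (HasSum · _) (funext fun p => ?_)).mpr (hprod.mul_right _)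
  exact (unitWeight_inv_smul_fundSystem_mul ha hT p.1 p.2).trans (by rw [one_mul])

lemma integral_unitWeight_pos : 0 < ∫ x, unitWeight K x := by
  obtain ⟨x, hx⟩ : ∃ x, unitWeight K x ≠ 0 := by
    by_contra! hzero
    have hd : (Module.finrank ℚ K : ℝ) ≠ 0 := by exact_mod_cast Module.finrank_pos.ne'
    have h := hasSum_unitWeight (one_ne_zero (α := K)) (Real.exp_pos (3 / 2 / Module.finrank ℚ K))
    simp only [hzero, Real.log_exp, mul_div_cancel₀ _ hd, map_one, Rat.cast_one, abs_one,
      Real.log_one, zero_sub] at h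
    have hpos : 0 < window (-(3 / 2)) := window.pos_of_mem_ball (by norm_num [window])
    exact mul_ne_zero (Nat.cast_ne_zero.2 (torsionOrder_ne_zero K)) hpos.ne' (h.unique hasSum_zero)
  exact contDiff_unitWeight.continuous.integral_pos_of_hasCompactSupport_nonneg_nonzero
    hasCompactSupport_unitWeight unitWeight_nonneg hx

end UnitWeight

section RayClassGroup

variable {R : Type*} [CommRing R]

lemma isCoprime_span_singleton_iff_isUnit_mk {I : Ideal R} {a : R} :
    IsCoprime (Ideal.span {a}) I ↔ IsUnit (Ideal.Quotient.mk I a) := by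
  rw [Ideal.isCoprime_iff_exists, isUnit_iff_exists_inv]
  constructor
  · rintro ⟨_, hi, j, hj, hij⟩
    obtain ⟨c, rfl⟩ := Ideal.mem_span_singleton'.1 hi
    refine ⟨Ideal.Quotient.mk I c, ?_⟩
    rw [← map_mul, ← map_one (Ideal.Quotient.mk I), ← hij, map_add,
      Ideal.Quotient.eq_zero_iff_mem.2 hj, add_zero, mul_comm]
  · rintro ⟨c, hc⟩
    obtain ⟨c, rfl⟩ := Ideal.Quotient.mk_surjective c
    refine ⟨a * c, Ideal.mul_mem_right _ _ (Ideal.mem_span_singleton_self a), 1 - a * c, ?_,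
      by ring⟩
    rw [← Ideal.Quotient.eq_zero_iff_mem, map_sub, map_mul, hc, map_one, sub_self]

lemma exists_mem_quotient_mk_eq {I J : Ideal R} (h : IsCoprime J I) (v : R ⧸ I) :
    ∃ a ∈ J, Ideal.Quotient.mk I a = v := by
  obtain ⟨v, rfl⟩ := Ideal.Quotient.mk_surjective v
  obtain ⟨i, hi, j, hj, hij⟩ := Ideal.isCoprime_iff_exists.1 h
  refine ⟨i * v, J.mul_mem_right _ hi, Ideal.Quotient.eq.2 ?_⟩
  rw [show i * v - v = -(j * v) by linear_combination v * hij]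
  exact I.neg_mem (I.mul_mem_right _ hj)

section

variable [IsDomain R]

/-- The monoid of nonzero ideals coprime to `I`. -/
def coprimeIdeals (I : Ideal R) : Submonoid (Ideal R) where
  carrier := {𝔞 | 𝔞 ≠ ⊥ ∧ IsCoprime 𝔞 I}
  mul_mem' ha hb := ⟨mul_ne_zero ha.1 hb.1, ha.2.mul_left hb.2⟩
  one_mem' := ⟨one_ne_zero, isCoprime_one_left⟩

variable {I : Ideal R}

lemma mul_mem_coprimeIdeals_iff {𝔞 𝔟 : Ideal R} :
    𝔞 * 𝔟 ∈ coprimeIdeals I ↔ 𝔞 ∈ coprimeIdeals I ∧ 𝔟 ∈ coprimeIdeals I := by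
  change 𝔞 * 𝔟 ≠ 0 ∧ _ ↔ (𝔞 ≠ 0 ∧ _) ∧ (𝔟 ≠ 0 ∧ _)
  rw [IsCoprime.mul_left_iff, mul_ne_zero_iff]
  tauto

lemma span_singleton_mem_coprimeIdeals_iff {a : R} :
    Ideal.span {a} ∈ coprimeIdeals I ↔ a ≠ 0 ∧ IsUnit (Ideal.Quotient.mk I a) := by
  change Ideal.span {a} ≠ ⊥ ∧ _ ↔ _
  rw [isCoprime_span_singleton_iff_isUnit_mk, ne_eq, Ideal.span_singleton_eq_bot]

variable (I) in
/-- Equivalence modulo principal fractional ideals `(b / a)` with `b / a ≡ 1` modulo `I`. No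
positivity is imposed at the real places. -/
def rayCon : Con (coprimeIdeals I) where
  r 𝔞 𝔟 := ∃ a b : R, a ≠ 0 ∧ b ≠ 0 ∧ IsUnit (Ideal.Quotient.mk I a) ∧
    Ideal.Quotient.mk I a = Ideal.Quotient.mk I b ∧
      Ideal.span {a} * (𝔞 : Ideal R) = Ideal.span {b} * 𝔟
  iseqv := by
    refine ⟨fun _ => ⟨1, 1, one_ne_zero, one_ne_zero, isUnit_one.map _, rfl, rfl⟩, ?_, ?_⟩
    · rintro _ _ ⟨a, b, ha, hb, hu, hab, h⟩
      exact ⟨b, a, hb, ha, hab ▸ hu, hab.symm, h.symm⟩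
    · rintro _ 𝔟 _ ⟨a, b, ha, hb, hu, hab, h⟩ ⟨a', b', ha', hb', hu', hab', h'⟩
      refine ⟨a * a', b * b', mul_ne_zero ha ha', mul_ne_zero hb hb', ?_, ?_, ?_⟩
      · rw [map_mul]
        exact hu.mul hu'
      · rw [map_mul, map_mul, hab, hab']
      · rw [← Ideal.span_singleton_mul_span_singleton, ← Ideal.span_singleton_mul_span_singleton,
          mul_right_comm, h, mul_right_comm, mul_assoc, h', mul_assoc]
  mul' := by
    rintro _ _ _ _ ⟨a, b, ha, hb, hu, hab, h⟩ ⟨a', b', ha', hb', hu', hab', h'⟩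
    refine ⟨a * a', b * b', mul_ne_zero ha ha', mul_ne_zero hb hb', ?_, ?_, ?_⟩
    · rw [map_mul]
      exact hu.mul hu'
    · rw [map_mul, map_mul, hab, hab']
    · rw [← Ideal.span_singleton_mul_span_singleton, ← Ideal.span_singleton_mul_span_singleton,
        Submonoid.coe_mul, Submonoid.coe_mul, mul_mul_mul_comm, h, h', mul_mul_mul_comm]

variable (I) in
/-- The ray class group of modulus `I`, without conditions at the infinite places. -/
abbrev RayClassGroup : Type _ := (rayCon I).Quotient

end

variable [IsDedekindDomain R] {I : Ideal R}

instance : CancelCommMonoid (RayClassGroup I) where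
  mul_left_cancel := by
    intro x y z hxyz
    induction x using Con.induction_on with | _ x
    induction y using Con.induction_on with | _ y
    induction z using Con.induction_on with | _ z
    obtain ⟨a, b, ha, hb, hu, hab, h⟩ := (rayCon I).eq.1 hxyz
    refine (rayCon I).eq.2 ⟨a, b, ha, hb, hu, hab, mul_left_cancel₀ x.2.1 ?_⟩
    rw [mul_left_comm, mul_left_comm _ (Ideal.span {b})]
    exact h

lemma mk_eq_mk_iff_exists_generator {𝔞 𝔟 : coprimeIdeals I} {x : R}
    (hx : (𝔟 : Ideal R) = Ideal.span {x}) :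
    (𝔞 : RayClassGroup I) = 𝔟 ↔
      ∃ y, (𝔞 : Ideal R) = Ideal.span {y} ∧ Ideal.Quotient.mk I y = Ideal.Quotient.mk I x := by
  rw [Con.eq]
  constructor
  · rintro ⟨a, b, ha, -, hu, hab, h⟩
    rw [hx, Ideal.span_singleton_mul_span_singleton] at h
    have hmem : b * x ∈ Ideal.span {a} * (𝔞 : Ideal R) := h ▸ Ideal.mem_span_singleton_self _
    obtain ⟨y, -, hy⟩ := Ideal.mem_span_singleton_mul.1 hmem
    refine ⟨y, mul_left_cancel₀ (mt Ideal.span_singleton_eq_bot.1 ha) ?_, hu.mul_left_cancel ?_⟩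
    · rw [h, ← hy, Ideal.span_singleton_mul_span_singleton]
    · rw [← map_mul, hy, map_mul, hab]
  · rintro ⟨y, hy, hyx⟩
    have hx' := span_singleton_mem_coprimeIdeals_iff.1 (hx ▸ 𝔟.2)
    have hy' := span_singleton_mem_coprimeIdeals_iff.1 (hy ▸ 𝔞.2)
    exact ⟨x, y, hx'.1, hy'.1, hx'.2, hyx.symm, by rw [hx, hy, mul_comm]⟩

lemma mk_eq_one_iff_exists_generator {𝔞 : coprimeIdeals I} :
    (𝔞 : RayClassGroup I) = 1 ↔
      ∃ y, (𝔞 : Ideal R) = Ideal.span {y} ∧ Ideal.Quotient.mk I y = 1 := by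
  rw [← map_one (Ideal.Quotient.mk I), ← mk_eq_mk_iff_exists_generator (𝔟 := 1)]
  · rfl
  · rw [Ideal.span_singleton_one, Submonoid.coe_one, Ideal.one_eq_top]

variable (I) in
/-- The map from the ideals coprime to `I` to the ideal class group. -/
noncomputable def coprimeIdealsToClassGroup : coprimeIdeals I →* ClassGroup R :=
  ClassGroup.mk0.comp (Submonoid.inclusion fun _ h => mem_nonZeroDivisors_of_ne_zero h.1)

lemma coprimeIdealsToClassGroup_eq_one_iff {𝔞 : coprimeIdeals I} :
    coprimeIdealsToClassGroup I 𝔞 = 1 ↔ ∃ a, (𝔞 : Ideal R) = Ideal.span {a} := by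
  rw [← Submodule.isPrincipal_iff]
  exact ClassGroup.mk0_eq_one_iff _

lemma mk_eq_mk_of_mul_eq_span {𝔞 𝔟 J : coprimeIdeals I} {a b : R}
    (ha : (𝔞 * J : Ideal R) = Ideal.span {a}) (hb : (𝔟 * J : Ideal R) = Ideal.span {b})
    (hab : Ideal.Quotient.mk I a = Ideal.Quotient.mk I b) : (𝔞 : RayClassGroup I) = 𝔟 := by
  refine mul_right_cancel (b := (J : RayClassGroup I)) ?_
  rw [← Con.coe_mul, ← Con.coe_mul]
  exact (mk_eq_mk_iff_exists_generator (𝔟 := 𝔟 * J) hb).2 ⟨a, ha, hab⟩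

variable [Finite (ClassGroup R)]

lemma exists_principal_mul (k : ClassGroup R) :
    ∃ J : coprimeIdeals I, ∀ 𝔞 : coprimeIdeals I, coprimeIdealsToClassGroup I 𝔞 = k →
      ∃ a, (𝔞 * J : Ideal R) = Ideal.span {a} := by
  by_cases hk : ∃ 𝔟, coprimeIdealsToClassGroup I 𝔟 = k
  · obtain ⟨𝔟, rfl⟩ := hk
    refine ⟨𝔟 ^ (Nat.card (ClassGroup R) - 1), fun 𝔞 h𝔞 => ?_⟩
    rw [← Submonoid.coe_mul, ← coprimeIdealsToClassGroup_eq_one_iff, map_mul, map_pow, h𝔞,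
      mul_pow_sub_one Nat.card_pos.ne', pow_card_eq_one']
  · exact ⟨1, fun 𝔞 h𝔞 => absurd ⟨𝔞, h𝔞⟩ hk⟩

variable [Finite (R ⧸ I)]

instance : Finite (RayClassGroup I) := by
  choose J hJ using fun k => exists_principal_mul (I := I) k
  choose a ha using fun 𝔞 => hJ _ 𝔞 rfl
  let f : coprimeIdeals I → ClassGroup R × (R ⧸ I) := fun 𝔞 =>
    (coprimeIdealsToClassGroup I 𝔞, Ideal.Quotient.mk I (a 𝔞))
  have hf : ∀ 𝔞 𝔟, f 𝔞 = f 𝔟 → (𝔞 : RayClassGroup I) = 𝔟 := by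
    intro 𝔞 𝔟 h
    obtain ⟨hclass, hmk⟩ := Prod.ext_iff.1 h
    have hb := ha 𝔟
    rw [← show _ = coprimeIdealsToClassGroup I 𝔟 from hclass] at hb
    exact mk_eq_mk_of_mul_eq_span (ha 𝔞) hb hmk
  refine Finite.of_injective (fun g : RayClassGroup I => f g.out) fun g g' h => ?_
  rw [← Quotient.out_eq g, ← Quotient.out_eq g']
  exact hf _ _ h

noncomputable instance : CommGroup (RayClassGroup I) where
  __ := LeftCancelMonoid.groupOfFinite (G := RayClassGroup I)
  mul_comm := mul_comm

end RayClassGroup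

section RayClassCount

open NumberField.InfinitePlace NumberField.mixedEmbedding NumberField.Units MeasureTheory
open scoped Classical

variable {K : Type*} [Field K] [NumberField K]

variable (K) in
/-- The integral of `unitWeight` divided by the covolume of the ring of integers. -/
noncomputable def unitWeightDensity : ℝ :=
  (∫ x, unitWeight K x) / volume.real (ZSpan.fundamentalDomain (latticeBasis K))

lemma unitWeightDensity_pos : 0 < unitWeightDensity K :=
  div_pos integral_unitWeight_pos (ENNReal.toReal_pos (ZSpan.measure_fundamentalDomain_ne_zero _)
    (ZSpan.fundamentalDomain_isBounded _).measure_lt_top.ne)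

variable (K) in
/-- The unit weight of an algebraic integer, dilated by `T`. -/
noncomputable def integerWeight (T : ℝ) (y : 𝓞 K) : ℝ :=
  unitWeight K (T⁻¹ • mixedEmbedding K (y : K))

lemma integerWeight_zero (T : ℝ) : integerWeight K T 0 = 0 := by
  rw [integerWeight, RingOfIntegers.coe_eq_algebraMap, map_zero, map_zero, smul_zero, unitWeight,
    placeLogPullback, if_neg]
  exact not_forall.2 ⟨Classical.arbitrary _, not_not.2 (map_zero _)⟩

lemma summable_integerWeight {T : ℝ} (hT : 0 < T) : Summable (integerWeight K T) := by
  refine summable_of_hasFiniteSupport ?_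
  obtain ⟨R, hR⟩ := (hasCompactSupport_unitWeight (K := K)).isCompact.isBounded.exists_norm_le
  have hinj : Function.Injective fun y : 𝓞 K => mixedEmbedding K (y : K) :=
    (mixedEmbedding_injective K).comp RingOfIntegers.coe_injective
  refine Set.Finite.of_finite_image ((ZSpan.setFinite_inter (latticeBasis K)
    (Metric.isBounded_closedBall (x := 0) (r := T * R))).subset ?_) hinj.injOn
  rintro _ ⟨y, hy, rfl⟩
  refine ⟨?_, ?_⟩
  · have hle := hR _ (subset_tsupport _ hy)
    rw [_root_.norm_smul, norm_inv, Real.norm_of_nonneg hT.le, inv_mul_le_iff₀ hT] at hle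
    exact mem_closedBall_zero_iff.2 hle
  · rw [SetLike.mem_coe, mem_span_latticeBasis]
    exact ⟨y, rfl⟩

lemma tsum_integerWeight_units_mul {y : 𝓞 K} (hy : y ≠ 0) {T : ℝ} (hT : 0 < T) :
    ∑' u : (𝓞 K)ˣ, integerWeight K T (u * y) = torsionOrder K *
      window (Real.log (Ideal.absNorm (Ideal.span {y})) - Module.finrank ℚ K * Real.log T) := by
  have hnorm : (Ideal.absNorm (Ideal.span {y}) : ℝ) = |(Algebra.norm ℚ (y : K) : ℝ)| := by
    rw [Ideal.absNorm_span_singleton, ← Algebra.coe_norm_int, Nat.cast_natAbs]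
    push_cast
    rfl
  rw [hnorm, ← (hasSum_unitWeight (RingOfIntegers.coe_ne_zero_iff.2 hy) hT).tsum_eq]
  simp [integerWeight]

lemma tsum_integerWeight_residueClass {𝔟 : Ideal (𝓞 K)} (h𝔟 : 𝔟 ≠ ⊥) :
    ∃ C : ℝ, ∀ T : ℝ, 1 ≤ T → ∀ a : 𝓞 K,
      |∑' y : {y : 𝓞 K | y - a ∈ 𝔟}, integerWeight K T y -
        T ^ Module.finrank ℚ K * (unitWeightDensity K / Ideal.absNorm 𝔟)| ≤ C := by
  let J : (FractionalIdeal (nonZeroDivisors (𝓞 K)) K)ˣ :=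
    .mk0 𝔟 (FractionalIdeal.coeIdeal_ne_zero.2 h𝔟)
  let b := fractionalIdealLatticeBasis K J
  have hcard : Fintype.card (Module.Free.ChooseBasisIndex ℤ J) = Module.finrank ℚ K := by
    rw [← mixedEmbedding.finrank K, Module.finrank_eq_card_basis b]
  have hvol : (∫ x, unitWeight K x) / volume.real (ZSpan.fundamentalDomain b) =
      unitWeightDensity K / Ideal.absNorm 𝔟 := by
    rw [unitWeightDensity, div_div, Measure.real, Measure.real,
      volume_fundamentalDomain_fractionalIdealLatticeBasis, ENNReal.toReal_mul,
      ENNReal.toReal_ofReal (by exact_mod_cast FractionalIdeal.absNorm_nonneg _), Units.val_mk0,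
      FractionalIdeal.coeIdeal_absNorm, mul_comm, Rat.cast_natCast]
  have hmem : ∀ z : mixedSpace K, z ∈ Submodule.span ℤ (Set.range b) ↔
      ∃ y ∈ 𝔟, mixedEmbedding K ((y : 𝓞 K) : K) = z := by
    intro z
    rw [mem_span_fractionalIdealLatticeBasis]
    simp [J]
  have hinj : Function.Injective fun y : 𝓞 K => mixedEmbedding K (y : K) :=
    (mixedEmbedding_injective K).comp RingOfIntegers.coe_injective
  obtain ⟨C, hC⟩ := latticeSum_dilation_isBounded b volume contDiff_unitWeight
    hasCompactSupport_unitWeight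
  refine ⟨C, fun T hT a => ?_⟩
  let f (y : {y : 𝓞 K | y - a ∈ 𝔟}) : Submodule.span ℤ (Set.range b) :=
    ⟨mixedEmbedding K ((y.1 - a : 𝓞 K) : K), (hmem _).2 ⟨_, y.2, rfl⟩⟩
  have hf : Function.Bijective f := by
    refine ⟨fun y y' h => Subtype.ext (sub_left_injective (hinj (Subtype.ext_iff.1 h))), ?_⟩
    rintro ⟨z, hz⟩
    obtain ⟨y, hy, rfl⟩ := (hmem z).1 hz
    exact ⟨⟨y + a, by simpa using hy⟩, Subtype.ext (by simp [f])⟩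
  have hsum : latticeSum b (fun x => unitWeight K (T⁻¹ • x)) (mixedEmbedding K (a : K)) =
      ∑' y : {y : 𝓞 K | y - a ∈ 𝔟}, integerWeight K T y := by
    rw [latticeSum, ← (Equiv.ofBijective f hf).tsum_eq]
    refine tsum_congr fun y => ?_
    simp [f, integerWeight]
  rw [← hsum, ← hvol, ← hcard]
  exact hC T hT _

/-- The elements of `J` that are congruent modulo `I` to a unit of `𝓞 K`. -/
def unitResidues (I J : Ideal (𝓞 K)) : Set (𝓞 K) :=
  {y | y ∈ J ∧ ∃ u : (𝓞 K)ˣ, Ideal.Quotient.mk I u = Ideal.Quotient.mk I y}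

variable {I : Ideal (𝓞 K)} [Finite (𝓞 K ⧸ I)]

variable (I) in
/-- The number of residue classes modulo `I` that contain a unit of `𝓞 K`. -/
noncomputable def unitResidueCount : ℕ :=
  (Set.range fun u : (𝓞 K)ˣ => Ideal.Quotient.mk I (u : 𝓞 K)).ncard

lemma tsum_integerWeight_unitResidues (J : coprimeIdeals I) :
    ∃ C : ℝ, ∀ T : ℝ, 1 ≤ T → |∑' y : unitResidues I (J : Ideal (𝓞 K)), integerWeight K T y -
      unitResidueCount I * (T ^ Module.finrank ℚ K *
        (unitWeightDensity K / Ideal.absNorm (J * I : Ideal (𝓞 K))))| ≤ C := by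
  have hI : I ≠ ⊥ := mt Ideal.absNorm_eq_zero_iff.2 ((Ideal.absNorm_ne_zero_iff I).2 ‹_›)
  obtain ⟨C, hC⟩ := tsum_integerWeight_residueClass (mul_ne_zero J.2.1 hI)
  choose a haJ ha using exists_mem_quotient_mk_eq J.2.2
  let V := (Set.toFinite (Set.range fun u : (𝓞 K)ˣ => Ideal.Quotient.mk I (u : 𝓞 K))).toFinset
  let coset (v : 𝓞 K ⧸ I) : Set (𝓞 K) := {y | y - a v ∈ (J * I : Ideal (𝓞 K))}
  have hcoset : ∀ v y, y ∈ coset v ↔ y ∈ (J : Ideal (𝓞 K)) ∧ Ideal.Quotient.mk I y = v := by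
    intro v y
    change y - a v ∈ (J * I : Ideal (𝓞 K)) ↔ _
    rw [Ideal.mul_eq_inf_of_isCoprime J.2.2, Ideal.mem_inf, Submodule.sub_mem_iff_left _ (haJ v),
      ← Ideal.Quotient.eq, ha]
  have hunion : unitResidues I (J : Ideal (𝓞 K)) = ⋃ v ∈ V, coset v := by
    ext y
    simp [unitResidues, V, hcoset, eq_comm]
  have hdisj : (V : Set (𝓞 K ⧸ I)).Pairwise (Function.onFun Disjoint coset) := fun v _ w _ hvw =>
    Set.disjoint_left.2 fun y hv hw => hvw (((hcoset v y).1 hv).2.symm.trans ((hcoset w y).1 hw).2)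
  refine ⟨V.card • C, fun T hT => ?_⟩
  rw [hunion, Summable.tsum_finset_bUnion_disjoint hdisj fun v _ =>
      (summable_integerWeight (by linarith)).comp_injective Subtype.val_injective,
    unitResidueCount, Set.ncard_eq_toFinset_card _, ← nsmul_eq_mul, ← Finset.sum_const,
    ← Finset.sum_sub_distrib, ← Finset.sum_const]
  exact (Finset.abs_sum_le_sum_abs _ _).trans (Finset.sum_le_sum fun v _ => hC T hT _)

lemma exists_bijOn_unitResidues {J : coprimeIdeals I} {g : RayClassGroup I}
    (hJ : (J : RayClassGroup I) = g⁻¹) :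
    ∃ y : {𝔞 : coprimeIdeals I // (𝔞 : RayClassGroup I) = g} → 𝓞 K,
      (∀ 𝔞, (𝔞.1 * J : Ideal (𝓞 K)) = Ideal.span {y 𝔞}) ∧ (∀ 𝔞, y 𝔞 ≠ 0) ∧
      Set.BijOn (fun p : _ × (𝓞 K)ˣ => p.2 * y p.1) Set.univ
        (unitResidues I (J : Ideal (𝓞 K)) \ {0}) := by
  have hclass : ∀ 𝔞 : coprimeIdeals I, (𝔞 : RayClassGroup I) = g ↔
      ∃ y, (𝔞 * J : Ideal (𝓞 K)) = Ideal.span {y} ∧ Ideal.Quotient.mk I y = 1 := fun 𝔞 => by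
    rw [← Submonoid.coe_mul, ← mk_eq_one_iff_exists_generator, Con.coe_mul, hJ, mul_inv_eq_one]
  choose y hy hy1 using fun 𝔞 : {𝔞 : coprimeIdeals I // (𝔞 : RayClassGroup I) = g} =>
    (hclass 𝔞).1 𝔞.2
  have hy0 : ∀ 𝔞, y 𝔞 ≠ 0 := fun 𝔞 h => mul_ne_zero 𝔞.1.2.1 J.2.1 <| by
    rw [hy, h, Ideal.span_singleton_eq_bot.2 rfl, Ideal.zero_eq_bot]
  have hspan : ∀ 𝔞 (u : (𝓞 K)ˣ), Ideal.span {u * y 𝔞} = (𝔞.1 * J : Ideal (𝓞 K)) := fun 𝔞 u => by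
    rw [hy, Ideal.span_singleton_eq_span_singleton]
    exact associated_unit_mul_left _ _ u.isUnit
  refine ⟨y, hy, hy0, ?_, ?_, ?_⟩
  · rintro ⟨𝔞, u⟩ -
    refine ⟨⟨?_, u, ?_⟩, mul_ne_zero u.ne_zero (hy0 𝔞)⟩
    · exact Ideal.mul_le_right (hspan 𝔞 u ▸ Ideal.mem_span_singleton_self _)
    · rw [map_mul, hy1, mul_one]
  · rintro ⟨𝔞, u⟩ - ⟨𝔟, v⟩ - (h : u * y 𝔞 = v * y 𝔟)
    have hmul : (𝔞.1 * J : Ideal (𝓞 K)) = 𝔟.1 * J := by rw [← hspan 𝔞 u, ← hspan 𝔟 v, h]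
    obtain rfl : 𝔞 = 𝔟 := Subtype.ext (Subtype.ext (mul_right_cancel₀ J.2.1 hmul))
    rw [Units.ext (mul_right_cancel₀ (hy0 𝔞) h)]
  · rintro z ⟨⟨hzJ, u, hu⟩, hz0⟩
    obtain ⟨𝔞, h𝔞⟩ := Ideal.dvd_span_singleton.2 hzJ
    have hunit : IsUnit (Ideal.Quotient.mk I z) := hu ▸ u.isUnit.map _
    have h𝔞I : 𝔞 ∈ coprimeIdeals I := (mul_mem_coprimeIdeals_iff.1
      (h𝔞 ▸ span_singleton_mem_coprimeIdeals_iff.2 ⟨hz0, hunit⟩)).2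
    have hg : ((⟨𝔞, h𝔞I⟩ : coprimeIdeals I) : RayClassGroup I) = g := by
      refine (hclass _).2 ⟨↑u⁻¹ * z, ?_, ?_⟩
      · rw [mul_comm, ← h𝔞, Ideal.span_singleton_eq_span_singleton]
        exact (associated_unit_mul_left _ _ (u⁻¹).isUnit).symm
      · rw [map_mul, ← hu, ← map_mul, Units.inv_mul, map_one]
    have hgen : Ideal.span {y ⟨_, hg⟩} = Ideal.span {z} := by rw [← hy, h𝔞, mul_comm]
    obtain ⟨v, hv⟩ := Ideal.span_singleton_eq_span_singleton.1 hgen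
    exact ⟨(⟨_, hg⟩, v), trivial, (mul_comm _ _).trans hv⟩

lemma tsum_integerWeight_unitResidues_eq {J : coprimeIdeals I} {g : RayClassGroup I}
    (hJ : (J : RayClassGroup I) = g⁻¹) {T : ℝ} (hT : 0 < T) :
    ∑' y : unitResidues I (J : Ideal (𝓞 K)), integerWeight K T y =
      torsionOrder K * ∑' 𝔞 : {𝔞 : coprimeIdeals I // (𝔞 : RayClassGroup I) = g},
        window (Real.log (Ideal.absNorm (𝔞 * J : Ideal (𝓞 K))) -
          Module.finrank ℚ K * Real.log T) := by
  obtain ⟨y, hy, hy0, hbij⟩ := exists_bijOn_unitResidues hJ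
  have hinj := Set.injOn_univ.1 hbij.injOn
  have hzero : (unitResidues I (J : Ideal (𝓞 K))).indicator (integerWeight K T) =
      (unitResidues I (J : Ideal (𝓞 K)) \ {0}).indicator (integerWeight K T) := by
    ext z
    by_cases hz : z = 0 <;> simp [hz, Set.indicator_apply, integerWeight_zero]
  rw [tsum_subtype, hzero, ← tsum_subtype, ← hbij.image_eq, Set.image_univ,
    tsum_range _ hinj, ← tsum_mul_left]
  refine ((summable_integerWeight hT).comp_injective hinj).tsum_prod.trans
    (tsum_congr fun 𝔞 => ?_)
  rw [hy, ← tsum_integerWeight_units_mul (hy0 𝔞) hT]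
  rfl

theorem exists_tsum_window_rayClass_asymptotic (I : Ideal (𝓞 K)) [Finite (𝓞 K ⧸ I)] :
    ∃ κ : ℝ, 0 < κ ∧ ∀ g : RayClassGroup I, ∃ C : ℝ, ∀ t : ℝ, 0 ≤ t →
      |∑' 𝔞 : {𝔞 : coprimeIdeals I // (𝔞 : RayClassGroup I) = g},
        window (Real.log (Ideal.absNorm (𝔞 : Ideal (𝓞 K))) - t) - κ * Real.exp t| ≤ C := by
  have hmpos : 0 < (unitResidueCount I : ℝ) := by
    rw [Nat.cast_pos, unitResidueCount, Set.ncard_pos (Set.toFinite _)]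
    exact Set.range_nonempty _
  have hwpos : 0 < (torsionOrder K : ℝ) :=
    Nat.cast_pos.2 (Nat.pos_of_ne_zero (torsionOrder_ne_zero K))
  have hIpos : 0 < (Ideal.absNorm I : ℝ) :=
    Nat.cast_pos.2 (Nat.pos_of_ne_zero ((Ideal.absNorm_ne_zero_iff I).2 ‹_›))
  have hnpos : 0 < (Module.finrank ℚ K : ℝ) := Nat.cast_pos.2 Module.finrank_pos
  have hVpos := unitWeightDensity_pos (K := K)
  have hJpos : ∀ J : coprimeIdeals I, 1 ≤ (Ideal.absNorm (J : Ideal (𝓞 K)) : ℝ) := fun J =>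
    Nat.one_le_cast.2 (Nat.one_le_iff_ne_zero.2 (mt Ideal.absNorm_eq_zero_iff.1 J.2.1))
  refine ⟨unitResidueCount I * unitWeightDensity K / (Ideal.absNorm I * torsionOrder K),
    by positivity, fun g => ?_⟩
  obtain ⟨J, hJ⟩ := Con.mk'_surjective (c := rayCon I) g⁻¹
  have hJ0 := one_pos.trans_le (hJpos J)
  obtain ⟨C, hC⟩ := tsum_integerWeight_unitResidues J
  refine ⟨C / torsionOrder K, fun t ht => ?_⟩
  let T := Real.exp ((t + Real.log (Ideal.absNorm (J : Ideal (𝓞 K)))) / Module.finrank ℚ K)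
  have hT : 1 ≤ T := Real.one_le_exp
    (div_nonneg (add_nonneg ht (Real.log_nonneg (hJpos J))) hnpos.le)
  have hlogT : Module.finrank ℚ K * Real.log T =
      t + Real.log (Ideal.absNorm (J : Ideal (𝓞 K))) := by
    rw [Real.log_exp, mul_div_cancel₀ _ hnpos.ne']
  have hTpow : T ^ Module.finrank ℚ K = Real.exp t * Ideal.absNorm (J : Ideal (𝓞 K)) := by
    rw [← Real.exp_nat_mul, mul_div_cancel₀ _ hnpos.ne', Real.exp_add, Real.exp_log hJ0]
  have hbound := hC T hT
  rw [tsum_integerWeight_unitResidues_eq hJ (one_pos.trans_le hT), hlogT, hTpow] at hbound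
  have hshift : ∀ 𝔞 : coprimeIdeals I, Real.log (Ideal.absNorm (𝔞 * J : Ideal (𝓞 K))) -
      (t + Real.log (Ideal.absNorm (J : Ideal (𝓞 K)))) =
        Real.log (Ideal.absNorm (𝔞 : Ideal (𝓞 K))) - t := fun 𝔞 => by
    rw [map_mul, Nat.cast_mul, Real.log_mul (one_pos.trans_le (hJpos 𝔞)).ne' hJ0.ne']
    ring
  simp only [hshift] at hbound
  rw [le_div_iff₀' hwpos, ← abs_of_pos hwpos, ← abs_mul, abs_of_pos hwpos]
  refine (congrArg abs ?_).trans_le hbound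
  rw [map_mul, Nat.cast_mul]
  field_simp

end RayClassCount

section Windows

open MeasureTheory Real
open scoped Convolution

/-- Nonnegative nonzero continuous compactly supported weights that vanish on the positive
half-line, so that sums `∑ a i * w (x i - t)` only involve the terms with `x i ≤ t`. -/
structure IsWindow (w : ℝ → ℝ) : Prop where
  continuous : Continuous w
  hasCompactSupport : HasCompactSupport w
  nonneg : ∀ x, 0 ≤ w x
  eq_zero_of_pos : ∀ x, 0 < x → w x = 0
  exists_ne_zero : ∃ x, w x ≠ 0

lemma isWindow_window : IsWindow window where
  continuous := window.continuous
  hasCompactSupport := window.hasCompactSupport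
  nonneg _ := window.nonneg
  eq_zero_of_pos x hx := by
    by_contra h
    linarith [(mem_Icc_of_window_ne_zero h).2]
  exists_ne_zero := ⟨-3 / 2, by
    rw [window.one_of_mem_closedBall (Metric.mem_closedBall_self window.rIn_pos.le)]
    exact one_ne_zero⟩

/-- The moment `∫ u ^ k * exp (s * u)` of a weight `w`; for `k = 0` it is the factor that smoothing
by `w` introduces in a Laplace transform. -/
noncomputable def expMoment (w : ℝ → ℝ) (k : ℕ) (s : ℝ) : ℝ := ∫ u, w u * (u ^ k * exp (s * u))

lemma integral_comp_sub_mul_exp (w : ℝ → ℝ) (s x : ℝ) :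
    ∫ t, w (x - t) * exp (-s * t) = exp (-s * x) * expMoment w 0 s := by
  rw [← integral_sub_left_eq_self _ volume x, expMoment, ← integral_const_mul]
  refine integral_congr_ae (.of_forall fun u => ?_)
  simp only [sub_sub_cancel, show -s * (x - u) = -s * x + s * u by ring, exp_add]
  ring

namespace IsWindow

variable {w : ℝ → ℝ}

lemma integrable_mul (hw : IsWindow w) {k : ℝ → ℝ} (hk : Continuous k) :
    Integrable fun u => w u * k u :=
  (hw.continuous.mul hk).integrable_of_hasCompactSupport hw.hasCompactSupport.mul_right

lemma integrable_comp_sub_mul (hw : IsWindow w) {k : ℝ → ℝ} (hk : Continuous k) (x : ℝ) :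
    Integrable fun t => w (x - t) * k t := by
  simpa using (hw.integrable_mul (hk.comp (continuous_sub_left x))).comp_sub_left x

lemma expMoment_zero_pos (hw : IsWindow w) (s : ℝ) : 0 < expMoment w 0 s := by
  obtain ⟨x, hx⟩ := hw.exists_ne_zero
  exact Continuous.integral_pos_of_hasCompactSupport_nonneg_nonzero (x := x)
    (hw.continuous.mul (by fun_prop)) hw.hasCompactSupport.mul_right
    (fun u => mul_nonneg (hw.nonneg u) (by positivity)) (mul_ne_zero hx (by positivity))

lemma integral_comp_sub_mul_id_mul_exp (hw : IsWindow w) (s x : ℝ) :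
    ∫ t, w (x - t) * (t * exp (-s * t)) =
      exp (-s * x) * (x * expMoment w 0 s - expMoment w 1 s) := by
  rw [← integral_sub_left_eq_self _ volume x, expMoment, expMoment, ← integral_const_mul,
    ← integral_sub ((hw.integrable_mul (by fun_prop)).const_mul _)
      (hw.integrable_mul (by fun_prop)),
    ← integral_const_mul]
  refine integral_congr_ae (.of_forall fun u => ?_)
  simp only [sub_sub_cancel, show -s * (x - u) = -s * x + s * u by ring, exp_add]
  ring

lemma convolution (hw : IsWindow w) {w' : ℝ → ℝ} (hw' : IsWindow w') :
    IsWindow (w ⋆[ContinuousLinearMap.mul ℝ ℝ] w') where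
  continuous := hw'.hasCompactSupport.continuous_convolution_right _
    hw.continuous.locallyIntegrable hw'.continuous
  hasCompactSupport := hw.hasCompactSupport.convolution _ hw'.hasCompactSupport
  nonneg x := integral_nonneg fun u => mul_nonneg (hw.nonneg _) (hw'.nonneg _)
  eq_zero_of_pos x hx := by
    refine integral_eq_zero_of_ae (.of_forall fun u => ?_)
    rcases lt_or_ge 0 u with hu | hu
    · simp [hw.eq_zero_of_pos u hu]
    · simp [hw'.eq_zero_of_pos (x - u) (by linarith)]
  exists_ne_zero := by
    obtain ⟨a, ha⟩ := hw.exists_ne_zero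
    obtain ⟨b, hb⟩ := hw'.exists_ne_zero
    refine ⟨a + b, ne_of_gt (Continuous.integral_pos_of_hasCompactSupport_nonneg_nonzero (x := a)
      (hw.continuous.mul (hw'.continuous.comp (continuous_sub_left _)))
      hw.hasCompactSupport.mul_right (fun u => mul_nonneg (hw.nonneg u) (hw'.nonneg _)) ?_)⟩
    simpa using ⟨ha, hb⟩

end IsWindow

lemma integral_comp_sub_mul_comp_sub (w w' : ℝ → ℝ) (a b t : ℝ) :
    ∫ y, w (a - y) * w' (b - (t - y)) =
      (w ⋆[ContinuousLinearMap.mul ℝ ℝ] w') (a + b - t) := by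
  rw [← integral_sub_left_eq_self _ volume a, convolution_def]
  refine integral_congr_ae (.of_forall fun u => ?_)
  simp only [sub_sub_cancel, ContinuousLinearMap.mul_apply']
  congr 2
  ring

section HalfLine

variable {E : Type*} [NormedAddCommGroup E] {F : ℝ → E} {C a : ℝ}

lemma integrable_indicator_exp_neg (C : ℝ) (ha : 0 < a) :
    Integrable ((Set.Ici 0).indicator fun t => C * exp (-a * t)) := by
  rw [integrable_indicator_iff measurableSet_Ici, integrableOn_Ici_iff_integrableOn_Ioi]
  exact (exp_neg_integrableOn_Ioi 0 ha).const_mul C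

lemma norm_le_indicator_exp_neg (hneg : ∀ t < 0, F t = 0)
    (hle : ∀ t, 0 ≤ t → ‖F t‖ ≤ C * exp (-a * t)) (t : ℝ) :
    ‖F t‖ ≤ (Set.Ici 0).indicator (fun t => C * exp (-a * t)) t := by
  rcases lt_or_ge t 0 with ht | ht
  · rw [hneg t ht, norm_zero, Set.indicator_of_notMem (Set.notMem_Ici.2 ht)]
  · rw [Set.indicator_of_mem (Set.mem_Ici.2 ht)]
    exact hle t ht

lemma norm_integral_le_of_norm_le_exp_neg [NormedSpace ℝ E] (ha : 0 < a)
    (hneg : ∀ t < 0, F t = 0) (hle : ∀ t, 0 ≤ t → ‖F t‖ ≤ C * exp (-a * t)) :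
    ‖∫ t, F t‖ ≤ C / a := by
  refine (norm_integral_le_of_norm_le (integrable_indicator_exp_neg C ha)
    (.of_forall (norm_le_indicator_exp_neg hneg hle))).trans_eq ?_
  rw [integral_indicator measurableSet_Ici, integral_Ici_eq_integral_Ioi, integral_const_mul,
    integral_exp_mul_Ioi (by linarith)]
  simp [div_eq_mul_inv]

end HalfLine

variable {ι : Type*} {a x : ι → ℝ} {w : ℝ → ℝ}

lemma IsWindow.summable_mul_exp_of_sum_le (hw : IsWindow w) (ha : ∀ i, 0 ≤ a i)
    (hx : ∀ i, 0 ≤ x i) {C r s : ℝ} (hrs : r < s)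
    (hle : ∀ t, 0 ≤ t → ∀ F : Finset ι, ∑ i ∈ F, a i * w (x i - t) ≤ C * exp (r * t)) :
    Summable fun i => a i * exp (-s * x i) := by
  refine summable_of_sum_le (c := C / (s - r) / expMoment w 0 s) (fun i => by
    have := ha i; positivity) fun F => ?_
  have hsum : (∑ i ∈ F, a i * exp (-s * x i)) * expMoment w 0 s =
      ∫ t, (∑ i ∈ F, a i * w (x i - t)) * exp (-s * t) := by
    simp_rw [Finset.sum_mul, mul_assoc, ← integral_comp_sub_mul_exp, ← integral_const_mul]
    exact (integral_finsetSum _ fun i _ =>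
      (hw.integrable_comp_sub_mul (by fun_prop) _).const_mul _).symm
  rw [le_div_iff₀ (hw.expMoment_zero_pos s), hsum]
  refine (le_norm_self _).trans
    (norm_integral_le_of_norm_le_exp_neg (sub_pos.2 hrs) (fun t ht => ?_) fun t ht => ?_)
  · rw [Finset.sum_eq_zero, zero_mul]
    intro i _
    rw [hw.eq_zero_of_pos _ (by linarith [hx i]), mul_zero]
  · rw [norm_of_nonneg (mul_nonneg (Finset.sum_nonneg fun i _ => mul_nonneg (ha i) (hw.nonneg _))
      (exp_pos _).le), show -(s - r) * t = r * t + -s * t by ring, exp_add, ← mul_assoc]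
    exact mul_le_mul_of_nonneg_right (hle t ht F) (exp_pos _).le

end Windows

section SmoothSums

open MeasureTheory Real Finset.HasAntidiagonal
open scoped Convolution

variable {ι : Type*}

/-- The sum of `f i` over the points `x i` near `t`, smoothed by the weight `w`. -/
noncomputable def smoothSum (x : ι → ℝ) (f : ι → ℂ) (w : ℝ → ℝ) (t : ℝ) : ℂ :=
  ∑' i, f i * w (x i - t)

variable {x : ι → ℝ} {w w' : ℝ → ℝ}

lemma countable_of_finite_setOf_le (hfin : ∀ X, {i | x i ≤ X}.Finite) : Countable ι := by
  refine Set.countable_univ_iff.1 (Set.Countable.mono (fun i _ => ?_)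
    (Set.countable_iUnion fun k : ℕ => (hfin k).countable))
  exact Set.mem_iUnion.2 (exists_nat_ge (x i))

namespace IsWindow

lemma smoothSum_eq_sum (hw : IsWindow w) (hfin : ∀ X, {i | x i ≤ X}.Finite) (f : ι → ℂ) {t X : ℝ}
    (h : t ≤ X) : smoothSum x f w t = ∑ i ∈ (hfin X).toFinset, f i * w (x i - t) := by
  refine tsum_eq_sum fun i hi => ?_
  have hi : X < x i := by simpa using hi
  simp [hw.eq_zero_of_pos (x i - t) (by linarith)]

lemma summable_mul_comp_sub (hw : IsWindow w) (hfin : ∀ X, {i | x i ≤ X}.Finite) (f : ι → ℂ)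
    (t : ℝ) : Summable fun i => f i * w (x i - t) := by
  refine summable_of_ne_finset_zero (s := (hfin t).toFinset) fun i hi => ?_
  have hi : t < x i := by simpa using hi
  simp [hw.eq_zero_of_pos (x i - t) (by linarith)]

lemma smoothSum_eq_zero_of_neg (hw : IsWindow w) (hx : ∀ i, 0 ≤ x i) (f : ι → ℂ) {t : ℝ}
    (ht : t < 0) : smoothSum x f w t = 0 := by
  have hzero : ∀ i, w (x i - t) = 0 := fun i => hw.eq_zero_of_pos _ (by linarith [hx i])
  simp [smoothSum, hzero]

lemma continuous_smoothSum (hw : IsWindow w) (hfin : ∀ X, {i | x i ≤ X}.Finite) (f : ι → ℂ) :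
    Continuous (smoothSum x f w) := by
  refine continuous_iff_continuousAt.2 fun t => ?_
  have hcont : Continuous fun y => ∑ i ∈ (hfin (t + 1)).toFinset, f i * w (x i - y) := by
    have := hw.continuous
    fun_prop
  refine hcont.continuousAt.congr ?_
  filter_upwards [eventually_lt_nhds (lt_add_one t)] with y hy
  exact (hw.smoothSum_eq_sum hfin f hy.le).symm

lemma integral_smoothSum_mul (hw : IsWindow w) (hx : ∀ i, 0 ≤ x i)
    (hfin : ∀ X, {i | x i ≤ X}.Finite) (f : ι → ℂ) {k : ℝ → ℝ} (hk : Continuous k)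
    (hk0 : ∀ t, 0 ≤ t → 0 ≤ k t) (hs : Summable fun i => ‖f i‖ * ∫ t, w (x i - t) * k t) :
    ∫ t, smoothSum x f w t * k t = ∑' i, f i * (∫ t, w (x i - t) * k t : ℝ) := by
  have := countable_of_finite_setOf_le hfin
  have hnorm : ∀ i t, ‖f i * (w (x i - t) * k t : ℝ)‖ = ‖f i‖ * (w (x i - t) * k t) := by
    intro i t
    rw [norm_mul, Complex.norm_real, norm_of_nonneg]
    rcases lt_or_ge t 0 with ht | ht
    · rw [hw.eq_zero_of_pos _ (by linarith [hx i]), zero_mul]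
    · exact mul_nonneg (hw.nonneg _) (hk0 t ht)
  have hInt := integral_tsum_of_summable_integral_norm
    (F := fun i t => f i * (w (x i - t) * k t : ℝ))
    (fun i => (hw.integrable_comp_sub_mul hk _).ofReal.const_mul _)
    (by simpa only [hnorm, integral_const_mul] using hs)
  simp only [integral_const_mul, integral_complex_ofReal] at hInt
  rw [hInt]
  refine integral_congr_ae (.of_forall fun t => ?_)
  simp only [smoothSum, ← tsum_mul_right, Complex.ofReal_mul, mul_assoc]

lemma integral_smoothSum_mul_exp (hw : IsWindow w) (hx : ∀ i, 0 ≤ x i)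
    (hfin : ∀ X, {i | x i ≤ X}.Finite) (f : ι → ℂ) {s : ℝ}
    (hs : Summable fun i => ‖f i‖ * exp (-s * x i)) :
    ∫ t, smoothSum x f w t * exp (-s * t) = expMoment w 0 s * ∑' i, f i * exp (-s * x i) := by
  have hInt := hw.integral_smoothSum_mul hx hfin f (k := fun t => exp (-s * t)) (by fun_prop)
    (fun t _ => (exp_pos _).le)
    (by simpa only [integral_comp_sub_mul_exp, mul_assoc] using hs.mul_right (expMoment w 0 s))
  rw [hInt, ← tsum_mul_left]
  refine tsum_congr fun i => ?_
  rw [integral_comp_sub_mul_exp]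
  push_cast
  ring

lemma integral_smoothSum_mul_id_mul_exp (hw : IsWindow w) (hx : ∀ i, 0 ≤ x i)
    (hfin : ∀ X, {i | x i ≤ X}.Finite) (f : ι → ℂ) {s : ℝ}
    (hs : Summable fun i => ‖f i‖ * exp (-s * x i))
    (hs' : Summable fun i => ‖f i‖ * (x i * exp (-s * x i))) :
    ∫ t, smoothSum x f w t * (t * exp (-s * t) : ℝ) =
      expMoment w 0 s * (∑' i, f i * (x i * exp (-s * x i) : ℝ)) -
        expMoment w 1 s * ∑' i, f i * exp (-s * x i) := by
  have hsum : Summable fun i => f i * exp (-s * x i) := by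
    refine Summable.of_norm (hs.congr fun i => ?_)
    rw [norm_mul, Complex.norm_real, norm_of_nonneg (exp_pos _).le]
  have hsum' : Summable fun i => f i * (x i * exp (-s * x i) : ℝ) := by
    refine Summable.of_norm (hs'.congr fun i => ?_)
    rw [norm_mul, Complex.norm_real, norm_of_nonneg (mul_nonneg (hx i) (exp_pos _).le)]
  rw [hw.integral_smoothSum_mul hx hfin f (by fun_prop)
      (fun t ht => mul_nonneg ht (exp_pos _).le) ?_, ← tsum_mul_left, ← tsum_mul_left,
    ← (hsum'.mul_left _).tsum_sub (hsum.mul_left _)]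
  · refine tsum_congr fun i => ?_
    rw [hw.integral_comp_sub_mul_id_mul_exp]
    push_cast
    ring
  · refine ((hs'.mul_right (expMoment w 0 s)).sub (hs.mul_right (expMoment w 1 s))).congr
      fun i => ?_
    rw [hw.integral_comp_sub_mul_id_mul_exp]
    ring

variable {M : Type*} [AddMonoid M] {ν : M →+ ℝ}

lemma smoothSum_mul_smoothSum (hw : IsWindow w) (hw' : IsWindow w') (hν : ∀ n, 0 ≤ ν n)
    (hfin : ∀ X, {n | ν n ≤ X}.Finite) (f g : M → ℂ) (t y : ℝ) :
    smoothSum ν f w y * smoothSum ν g w' (t - y) =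
      ∑ p ∈ (hfin t).toFinset ×ˢ (hfin t).toFinset,
        f p.1 * g p.2 * (w (ν p.1 - y) * w' (ν p.2 - (t - y)) : ℝ) := by
  have hf := hw.summable_mul_comp_sub hfin f y
  have hg := hw'.summable_mul_comp_sub hfin g (t - y)
  rw [smoothSum, smoothSum, tsum_mul_tsum_of_summable_norm hf.norm hg.norm, tsum_eq_sum ?_]
  · refine Finset.sum_congr rfl fun p _ => ?_
    push_cast
    ring
  · intro p hp
    simp only [Finset.mem_product, Set.Finite.mem_toFinset, Set.mem_ofPred_eq, not_and_or,
      not_le] at hp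
    suffices w (ν p.1 - y) = 0 ∨ w' (ν p.2 - (t - y)) = 0 by
      rcases this with h | h <;> simp [h]
    rcases lt_or_ge y (ν p.1) with h | h
    · exact .inl (hw.eq_zero_of_pos _ (by linarith))
    · refine .inr (hw'.eq_zero_of_pos _ ?_)
      rcases hp with hp | hp <;> linarith [hν p.1, hν p.2]

lemma integral_smoothSum_mul_smoothSum [Finset.HasAntidiagonal M] (hw : IsWindow w)
    (hw' : IsWindow w') (hν : ∀ n, 0 ≤ ν n) (hfin : ∀ X, {n | ν n ≤ X}.Finite) (f g : M → ℂ)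
    (t : ℝ) :
    ∫ y, smoothSum ν f w y * smoothSum ν g w' (t - y) =
      smoothSum ν (fun n => ∑ p ∈ antidiagonal n, f p.1 * g p.2)
        (w ⋆[ContinuousLinearMap.mul ℝ ℝ] w') t := by
  set W := w ⋆[ContinuousLinearMap.mul ℝ ℝ] w'
  let S := (hfin t).toFinset ×ˢ (hfin t).toFinset
  let term : M × M → ℂ := fun p => f p.1 * g p.2 * W (ν p.1 + ν p.2 - t)
  have hterm : ∀ p ∉ S, term p = 0 := by
    intro p hp
    simp only [S, Finset.mem_product, Set.Finite.mem_toFinset, Set.mem_ofPred_eq, not_and_or,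
      not_le] at hp
    have hW : W (ν p.1 + ν p.2 - t) = 0 := (hw.convolution hw').eq_zero_of_pos _ (by
      rcases hp with hp | hp <;> linarith [hν p.1, hν p.2])
    simp [term, hW]
  have hintegrable : ∀ a b, Integrable fun y => w (ν a - y) * w' (ν b - (t - y)) := fun a b =>
    hw.integrable_comp_sub_mul (k := fun y => w' (ν b - (t - y)))
      (hw'.continuous.comp (by fun_prop)) _
  calc ∫ y, smoothSum ν f w y * smoothSum ν g w' (t - y)
      = ∑ p ∈ S, ∫ y, f p.1 * g p.2 * (w (ν p.1 - y) * w' (ν p.2 - (t - y)) : ℝ) := by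
        simp_rw [smoothSum_mul_smoothSum hw hw' hν hfin]
        exact integral_finsetSum _ fun p _ => (hintegrable p.1 p.2).ofReal.const_mul _
    _ = ∑ p ∈ S, term p := by
        simp_rw [integral_const_mul, integral_complex_ofReal, integral_comp_sub_mul_comp_sub]
        rfl
    _ = ∑' p, term p := (tsum_eq_sum hterm).symm
    _ = ∑' n, ∑ p ∈ antidiagonal n, term p := by
        let e := Finset.HasAntidiagonal.sigmaAntidiagonalEquivProd (A := M)
        have hs : Summable (term ∘ e) := e.summable_iff.2 (summable_of_ne_finset_zero hterm)
        rw [← e.tsum_eq]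
        refine (hs.tsum_sigma' fun _ => (hasSum_fintype _).summable).trans (tsum_congr fun n => ?_)
        exact (tsum_fintype _).trans (Finset.sum_coe_sort _ term)
    _ = _ := by
        refine tsum_congr fun n => ?_
        rw [Finset.sum_mul]
        refine Finset.sum_congr rfl fun p hp => ?_
        rw [← mem_antidiagonal.1 hp, map_add]

end IsWindow

end SmoothSums

section FormalDirichletSeries

open Finset.HasAntidiagonal Finsupp
open scoped ComplexOrder

variable {σ : Type*}

/-- The von Mangoldt function of the free commutative monoid on the primes `σ`, the size of `n`
being measured by `ν n`: it takes the value `ν p` at the powers `k • p`, `k ≠ 0`, of a prime `p`. -/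
noncomputable def vonMangoldt (ν : (σ →₀ ℕ) →+ ℝ) (n : σ →₀ ℕ) : ℝ :=
  if n.support.card = 1 then ∑ p ∈ n.support, ν (single p 1) else 0

variable {ν : (σ →₀ ℕ) →+ ℝ}

lemma vonMangoldt_single (p : σ) {k : ℕ} (hk : k ≠ 0) :
    vonMangoldt ν (single p k) = ν (single p 1) := by
  simp [vonMangoldt, support_single p hk]

lemma vonMangoldt_nonneg (hν : ∀ n, 0 ≤ ν n) (n : σ →₀ ℕ) : 0 ≤ vonMangoldt ν n := by
  rw [vonMangoldt]
  split_ifs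
  exacts [Finset.sum_nonneg fun p _ => hν _, le_rfl]

lemma exists_eq_single_of_vonMangoldt_ne_zero {n : σ →₀ ℕ} (h : vonMangoldt ν n ≠ 0) :
    ∃ p, ∃ k ≠ 0, n = single p k :=
  card_support_eq_one'.1 (by_contra fun h' => h (if_neg h'))

lemma sum_antidiagonal_vonMangoldt [DecidableEq σ] (n : σ →₀ ℕ) :
    ∑ x ∈ antidiagonal n, vonMangoldt ν x.2 = ν n := by
  have hν : ν n = ∑ p ∈ n.support, ∑ _k ∈ Finset.Icc 1 (n p), ν (single p 1) := by
    conv_lhs => rw [← n.sum_single, Finsupp.sum, map_sum]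
    refine Finset.sum_congr rfl fun p _ => ?_
    rw [Finset.sum_const, Nat.card_Icc, Nat.add_sub_cancel, ← map_nsmul, smul_single_one]
  rw [hν, Finset.sum_sigma']
  refine (Finset.sum_of_injOn (fun y => (n - single y.1 y.2, single y.1 y.2)) ?_ ?_ ?_ ?_).symm
  · rintro ⟨p, k⟩ hk ⟨q, l⟩ - h
    have hk : k ≠ 0 :=
      Nat.one_le_iff_ne_zero.1 (Finset.mem_Icc.1 (Finset.mem_sigma.1 hk).2).1
    obtain ⟨rfl, rfl⟩ | ⟨h, -⟩ := (single_eq_single_iff ..).1 (Prod.ext_iff.1 h).2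
    · rfl
    · exact absurd h hk
  · rintro ⟨p, k⟩ hk
    have hk : k ≤ n p := (Finset.mem_Icc.1 (Finset.mem_sigma.1 hk).2).2
    exact mem_antidiagonal.2 (tsub_add_cancel_of_le (single_le_iff.2 hk) : n - single p k + _ = n)
  · rintro ⟨a, b⟩ hab hnot
    by_contra h
    obtain ⟨p, k, hk, rfl⟩ := exists_eq_single_of_vonMangoldt_ne_zero h
    obtain rfl := mem_antidiagonal.1 hab
    refine hnot ⟨⟨p, k⟩, ?_, by simp⟩
    simp only [Finset.coe_sigma, Set.mem_sigma_iff, Finset.mem_coe, mem_support_iff,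
      Finsupp.add_apply, single_eq_same, Finset.mem_Icc]
    omega
  · rintro ⟨p, k⟩ hk
    exact (vonMangoldt_single p
      (Nat.one_le_iff_ne_zero.1 (Finset.mem_Icc.1 (Finset.mem_sigma.1 hk).2).1)).symm

lemma vonMangoldt_le (hν : ∀ n, 0 ≤ ν n) (n : σ →₀ ℕ) : vonMangoldt ν n ≤ ν n := by
  classical
  rw [← sum_antidiagonal_vonMangoldt (ν := ν) n]
  exact Finset.single_le_sum (f := fun x => vonMangoldt ν x.2)
    (s := antidiagonal n) (fun x _ => vonMangoldt_nonneg hν x.2) (a := (0, n)) (by simp)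

/-- The derivation of the ring of formal Dirichlet series which multiplies the coefficient of `n`
by its logarithmic size `ν n`, i.e. minus the derivative of the Dirichlet series
`∑ a n e ^ (-s ν n)` with respect to `s`. -/
noncomputable def logDerivation (ν : (σ →₀ ℕ) →+ ℝ) (f : MvPowerSeries σ ℂ) : MvPowerSeries σ ℂ :=
  fun n => ν n * f n

lemma coeff_logDerivation (f : MvPowerSeries σ ℂ) (n : σ →₀ ℕ) :
    (logDerivation ν f).coeff n = ν n * f.coeff n := rfl

lemma logDerivation_mul (f g : MvPowerSeries σ ℂ) :
    logDerivation ν (f * g) = logDerivation ν f * g + f * logDerivation ν g := by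
  ext n
  classical
  simp only [coeff_logDerivation, map_add, MvPowerSeries.coeff_mul, Finset.mul_sum,
    ← Finset.sum_add_distrib]
  refine Finset.sum_congr rfl fun x hx => ?_
  rw [← mem_antidiagonal.1 hx, map_add]
  push_cast
  ring

/-- The formal Dirichlet series with completely multiplicative coefficients `χ n`. -/
noncomputable def charSeries (χ : AddChar (σ →₀ ℕ) ℂ) : MvPowerSeries σ ℂ := fun n => χ n

/-- The formal logarithmic derivative of `charSeries χ`. -/
noncomputable def charLogDeriv (ν : (σ →₀ ℕ) →+ ℝ) (χ : AddChar (σ →₀ ℕ) ℂ) : MvPowerSeries σ ℂ :=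
  fun n => χ n * vonMangoldt ν n

lemma coeff_charSeries (χ : AddChar (σ →₀ ℕ) ℂ) (n : σ →₀ ℕ) : (charSeries χ).coeff n = χ n := rfl

lemma coeff_charLogDeriv (χ : AddChar (σ →₀ ℕ) ℂ) (n : σ →₀ ℕ) :
    (charLogDeriv ν χ).coeff n = χ n * vonMangoldt ν n := rfl

lemma logDerivation_charSeries (χ : AddChar (σ →₀ ℕ) ℂ) :
    logDerivation ν (charSeries χ) = charSeries χ * charLogDeriv ν χ := by
  ext n
  classical
  rw [coeff_logDerivation, coeff_charSeries, ← sum_antidiagonal_vonMangoldt (ν := ν) n,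
    MvPowerSeries.coeff_mul, Complex.ofReal_sum, Finset.sum_mul]
  refine Finset.sum_congr rfl fun x hx => ?_
  rw [coeff_charSeries, coeff_charLogDeriv, ← mem_antidiagonal.1 hx, AddChar.map_add_eq_mul]
  ring

section Positivity

variable {ρ L : MvPowerSeries σ ℂ}

lemma coeff_nonneg_of_logDerivation_eq_mul (hν : ∀ n, n ≠ 0 → 0 < ν n) (h0 : ρ.coeff 0 = 1)
    (hρ : logDerivation ν ρ = ρ * L) (hL : ∀ n, 0 ≤ L.coeff n) (n : σ →₀ ℕ) : 0 ≤ ρ.coeff n := by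
  classical
  induction n using WellFoundedLT.induction with
  | ind n ih =>
    rcases eq_or_ne n 0 with rfl | hn
    · rw [h0]
      exact zero_le_one
    have hL0 : L.coeff 0 = 0 := by
      have h := congrArg (MvPowerSeries.coeff 0) hρ
      simpa [coeff_logDerivation, MvPowerSeries.coeff_mul, h0] using h.symm
    have hpos : 0 ≤ (ν n : ℂ) * ρ.coeff n := by
      rw [← coeff_logDerivation, hρ, MvPowerSeries.coeff_mul]
      refine Finset.sum_nonneg fun x hx => ?_
      rcases eq_or_ne x.2 0 with hx0 | hx0
      · rw [hx0, hL0, mul_zero]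
      · refine mul_nonneg (ih x.1 ?_) (hL x.2)
        rw [← mem_antidiagonal.1 hx]
        exact lt_add_of_pos_right _ (pos_iff_ne_zero.2 hx0)
    refine le_of_mul_le_mul_left ?_ (show (0 : ℂ) < ν n by exact_mod_cast hν n hn)
    rwa [mul_zero]

lemma coeff_le_of_logDerivation_eq_mul (hν : ∀ n, n ≠ 0 → 0 < ν n) (h0 : ρ.coeff 0 = 1)
    (hρ : logDerivation ν ρ = ρ * L) (hL : ∀ n, 0 ≤ L.coeff n) (n : σ →₀ ℕ) :
    L.coeff n ≤ ν n * ρ.coeff n := by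
  classical
  rw [← coeff_logDerivation, hρ, MvPowerSeries.coeff_mul]
  have h := Finset.single_le_sum (f := fun x => ρ.coeff x.1 * L.coeff x.2) (s := antidiagonal n)
    (fun x _ => mul_nonneg (coeff_nonneg_of_logDerivation_eq_mul hν h0 hρ hL x.1) (hL x.2))
    (a := (0, n)) (by simp)
  simpa [h0] using h

end Positivity

end FormalDirichletSeries

section NumberSystems

open MeasureTheory Real Filter Topology Finset.HasAntidiagonal Finsupp

variable {σ ι : Type*} {ν : (σ →₀ ℕ) →+ ℝ} {κ : ℝ}

/-- The function `ν` is the logarithm of a norm on the free commutative monoid on the primes `σ`: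
it is positive on the primes and below any given bound at only finitely many elements. -/
structure IsLogNorm (ν : (σ →₀ ℕ) →+ ℝ) : Prop where
  pos_single : ∀ p, 0 < ν (single p 1)
  finite_setOf_le : ∀ X, {n | ν n ≤ X}.Finite

/-- A generalized number system in the sense of Beurling, with density `κ`: the smoothed number of
elements of norm at most `e ^ t` is `κ * e ^ t + O(1)`. -/
structure HasDensity (ν : (σ →₀ ℕ) →+ ℝ) (κ : ℝ) : Prop extends IsLogNorm ν where
  density_pos : 0 < κ
  exists_asymptotic : ∃ C, ∀ t, 0 ≤ t → |∑' n, window (ν n - t) - κ * exp t| ≤ C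

namespace IsLogNorm

lemma nonneg (hν : IsLogNorm ν) (n : σ →₀ ℕ) : 0 ≤ ν n := by
  rw [← n.sum_single, Finsupp.sum, map_sum]
  refine Finset.sum_nonneg fun p _ => ?_
  rw [← smul_single_one, map_nsmul]
  exact nsmul_nonneg (hν.pos_single p).le _

lemma pos (hν : IsLogNorm ν) {n : σ →₀ ℕ} (hn : n ≠ 0) : 0 < ν n := by
  obtain ⟨p, hp⟩ := Finsupp.ne_iff.1 hn
  have hle : single p 1 ≤ n := single_le_iff.2 (Nat.one_le_iff_ne_zero.2 hp)
  rw [← tsub_add_cancel_of_le hle, map_add]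
  linarith [hν.nonneg (n - single p 1), hν.pos_single p]

lemma exists_pos_forall_le_single (hν : IsLogNorm ν) : ∃ c > 0, ∀ p, c ≤ ν (single p 1) := by
  by_contra! h
  have hfin : (Set.range fun p => ν (single p 1)) ∩ Set.Iic 1 |>.Finite := by
    refine ((hν.finite_setOf_le 1).image ν).subset ?_
    rintro _ ⟨⟨p, rfl⟩, hp⟩
    exact ⟨_, hp, rfl⟩
  obtain ⟨p, hp⟩ := h 1 one_pos
  obtain ⟨_, ⟨⟨q, rfl⟩, hq⟩, hmin⟩ :=
    Set.exists_min_image _ id hfin ⟨_, ⟨p, rfl⟩, hp.le⟩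
  obtain ⟨r, hr⟩ := h _ (hν.pos_single q)
  exact (hmin _ ⟨⟨r, rfl⟩, (hr.le.trans hq : _ ≤ (1 : ℝ))⟩).not_gt hr

lemma continuous_smoothSum_window (hν : IsLogNorm ν) (f : (σ →₀ ℕ) → ℂ) :
    Continuous (smoothSum ν f window) :=
  isWindow_window.continuous_smoothSum hν.finite_setOf_le f

lemma smoothSum_window_eq_zero_of_neg (hν : IsLogNorm ν) (f : (σ →₀ ℕ) → ℂ) {t : ℝ} (ht : t < 0) :
    smoothSum ν f window t = 0 :=
  isWindow_window.smoothSum_eq_zero_of_neg hν.nonneg f ht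

lemma summable_window (hν : IsLogNorm ν) (t : ℝ) : Summable fun n => window (ν n - t) := by
  have h := isWindow_window.summable_mul_comp_sub hν.finite_setOf_le (fun _ => 1) t
  simpa only [one_mul, Complex.summable_ofReal] using h

end IsLogNorm

section Exponentials

variable {a x : ι → ℝ}

lemma exp_neg_mul_anti {s s' y : ℝ} (hy : 0 ≤ y) (hs : s ≤ s') : exp (-s' * y) ≤ exp (-s * y) :=
  exp_le_exp.2 (by nlinarith)

lemma mul_exp_neg_le {s s' : ℝ} (hs : s < s') (y : ℝ) :
    y * exp (-s' * y) ≤ (s' - s)⁻¹ * exp (-s * y) := by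
  have h : (s' - s) * y ≤ exp ((s' - s) * y) := by linarith [add_one_le_exp ((s' - s) * y)]
  rw [le_inv_mul_iff₀ (sub_pos.2 hs), ← mul_assoc,
    show -s * y = (s' - s) * y + -s' * y by ring, exp_add]
  exact mul_le_mul_of_nonneg_right h (exp_pos _).le

lemma summable_mul_self_mul_exp_of_lt {s s' : ℝ} (ha : ∀ i, 0 ≤ a i) (hx : ∀ i, 0 ≤ x i)
    (hs : s < s') (h : Summable fun i => a i * exp (-s * x i)) :
    Summable fun i => a i * (x i * exp (-s' * x i)) := by
  refine (h.mul_left (s' - s)⁻¹).of_nonneg_of_le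
    (fun i => mul_nonneg (ha i) (mul_nonneg (hx i) (exp_pos _).le)) fun i => ?_
  rw [mul_left_comm _ (a i)]
  exact mul_le_mul_of_nonneg_left (mul_exp_neg_le hs _) (ha i)

lemma summable_mul_exp_of_frequently_tsum_le {s₀ B : ℝ} (ha : ∀ i, 0 ≤ a i)
    (hs : ∀ s, s₀ < s → Summable fun i => a i * exp (-s * x i))
    (hB : ∃ᶠ s in 𝓝[>] s₀, ∑' i, a i * exp (-s * x i) ≤ B) :
    Summable fun i => a i * exp (-s₀ * x i) := by
  refine summable_of_sum_le (c := B) (fun i => mul_nonneg (ha i) (exp_pos _).le) fun F => ?_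
  have hlim : Tendsto (fun s => ∑ i ∈ F, a i * exp (-s * x i)) (𝓝[>] s₀)
      (𝓝 (∑ i ∈ F, a i * exp (-s₀ * x i))) :=
    (Continuous.tendsto (by fun_prop) s₀).mono_left nhdsWithin_le_nhds
  refine le_of_tendsto_of_frequently hlim ((hB.and_eventually self_mem_nhdsWithin).mono ?_)
  rintro s ⟨hsB, hs₀⟩
  exact ((hs s hs₀).sum_le_tsum F fun i _ => mul_nonneg (ha i) (exp_pos _).le).trans hsB

end Exponentials

section DirichletSeries

/-- The Dirichlet series `∑ f n * e ^ (-s * ν n)` at a real point `s`. -/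
noncomputable def dirichletSeries (ν : (σ →₀ ℕ) →+ ℝ) (f : MvPowerSeries σ ℂ) (s : ℝ) : ℂ :=
  ∑' n, f.coeff n * exp (-s * ν n)

lemma tsum_mul_tsum_eq_tsum_sum_antidiagonal_of_norm {M : Type*} [AddCommMonoid M]
    [Finset.HasAntidiagonal M] {f g : M → ℂ} (hf : Summable fun n => ‖f n‖)
    (hg : Summable fun n => ‖g n‖) :
    (∑' n, f n) * ∑' n, g n = ∑' n, ∑ p ∈ antidiagonal n, f p.1 * g p.2 := by
  have hfg : Summable fun p : M × M => f p.1 * g p.2 := summable_mul_of_summable_norm hf hg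
  exact hf.of_norm.tsum_mul_tsum_eq_tsum_sum_antidiagonal hg.of_norm hfg

lemma dirichletSeries_mul {f g : MvPowerSeries σ ℂ} {s : ℝ}
    (hf : Summable fun n => ‖f.coeff n‖ * exp (-s * ν n))
    (hg : Summable fun n => ‖g.coeff n‖ * exp (-s * ν n)) :
    dirichletSeries ν (f * g) s = dirichletSeries ν f s * dirichletSeries ν g s := by
  classical
  have hnorm : ∀ (z : ℂ) (y : ℝ), ‖z‖ * exp y = ‖z * exp y‖ := fun z y => by
    rw [norm_mul, Complex.norm_real, norm_of_nonneg (exp_pos _).le]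
  simp only [hnorm] at hf hg
  rw [dirichletSeries, dirichletSeries, dirichletSeries,
    tsum_mul_tsum_eq_tsum_sum_antidiagonal_of_norm hf hg]
  refine tsum_congr fun n => ?_
  rw [MvPowerSeries.coeff_mul, Finset.sum_mul]
  refine Finset.sum_congr rfl fun p hp => ?_
  rw [← mem_antidiagonal.1 hp, map_add, mul_add, exp_add]
  push_cast
  ring

end DirichletSeries

namespace HasDensity

lemma summable_exp (hν : HasDensity ν κ) {s : ℝ} (hs : 1 < s) :
    Summable fun n => exp (-s * ν n) := by
  obtain ⟨C, hC⟩ := hν.exists_asymptotic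
  suffices Summable fun n => 1 * exp (-s * ν n) by simpa using this
  refine isWindow_window.summable_mul_exp_of_sum_le (C := κ + C) (r := 1) (fun _ => zero_le_one)
    hν.nonneg hs fun t ht F => ?_
  have hle : ∑ n ∈ F, window (ν n - t) ≤ ∑' n, window (ν n - t) :=
    (hν.summable_window t).sum_le_tsum F fun _ _ => window.nonneg
  have hC0 : 0 ≤ C := (abs_nonneg _).trans (hC 0 le_rfl)
  simp only [one_mul]
  nlinarith [(abs_le.1 (hC t ht)).2, one_le_exp ht]

lemma summable_mul_exp (hν : HasDensity ν κ) {s : ℝ} (hs : 1 < s) :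
    Summable fun n => ν n * exp (-s * ν n) := by
  obtain ⟨s', hs', hss'⟩ := exists_between hs
  simpa using summable_mul_self_mul_exp_of_lt (a := fun _ => 1) (fun _ => zero_le_one) hν.nonneg
    hss' (by simpa using hν.summable_exp hs')

lemma summable_vonMangoldt_mul_exp (hν : HasDensity ν κ) {s : ℝ} (hs : 1 < s) :
    Summable fun n => vonMangoldt ν n * exp (-s * ν n) :=
  (hν.summable_mul_exp hs).of_nonneg_of_le
    (fun n => mul_nonneg (vonMangoldt_nonneg hν.nonneg n) (exp_pos _).le)
    fun n => mul_le_mul_of_nonneg_right (vonMangoldt_le hν.nonneg n) (exp_pos _).le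

/-- Otherwise, by dominated convergence, `∑ window (ν n - t) * e ^ (-t)` would tend to `0`. -/
lemma not_summable_exp (hν : HasDensity ν κ) : ¬ Summable fun n => exp (-ν n) := by
  intro hsum
  obtain ⟨C, hC⟩ := hν.exists_asymptotic
  have hzero : Tendsto (fun t => ∑' n, window (ν n - t) * exp (-t)) atTop (𝓝 0) := by
    rw [← tsum_zero (α := ℝ) (β := σ →₀ ℕ)]
    refine tendsto_tsum_of_dominated_convergence hsum (fun n => ?_) (.of_forall fun t n => ?_)
    · refine tendsto_const_nhds.congr' ?_
      filter_upwards [eventually_gt_atTop (ν n + 2)] with t ht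
      have hw : window (ν n - t) = 0 := by
        by_contra h
        linarith [(mem_Icc_of_window_ne_zero h).1]
      rw [hw, zero_mul]
    · rw [norm_of_nonneg (mul_nonneg window.nonneg (exp_pos _).le)]
      rcases lt_or_ge t (ν n) with h | h
      · rw [isWindow_window.eq_zero_of_pos _ (sub_pos.2 h), zero_mul]
        positivity
      · exact (mul_le_of_le_one_left (exp_pos _).le window.le_one).trans
          (exp_le_exp.2 (neg_le_neg h))
  have hκ : Tendsto (fun t => ∑' n, window (ν n - t) * exp (-t)) atTop (𝓝 κ) := by
    rw [tendsto_iff_norm_sub_tendsto_zero]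
    have hexp := tendsto_exp_neg_atTop_nhds_zero.const_mul C
    rw [mul_zero] at hexp
    refine squeeze_zero' (.of_forall fun _ => norm_nonneg _) ?_ hexp
    filter_upwards [eventually_ge_atTop 0] with t ht
    calc ‖∑' n, window (ν n - t) * exp (-t) - κ‖
        = |∑' n, window (ν n - t) - κ * exp t| * exp (-t) := by
          rw [tsum_mul_right, norm_eq_abs, ← abs_of_pos (exp_pos (-t)), ← abs_mul,
            abs_of_pos (exp_pos (-t)), sub_mul, mul_assoc, ← exp_add, add_neg_cancel, exp_zero,
            mul_one]
      _ ≤ C * exp (-t) := mul_le_mul_of_nonneg_right (hC t ht) (exp_pos _).le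
  exact hν.density_pos.ne (tendsto_nhds_unique hzero hκ)

section Characters

variable {χ : AddChar (σ →₀ ℕ) ℂ} {s : ℝ}

lemma summable_norm_charSeries (hν : HasDensity ν κ) (hχ : ∀ n, ‖χ n‖ = 1) (hs : 1 < s) :
    Summable fun n => ‖(charSeries χ).coeff n‖ * exp (-s * ν n) := by
  simpa only [coeff_charSeries, hχ, one_mul] using hν.summable_exp hs

lemma dirichletSeries_logDerivation_charSeries (hν : HasDensity ν κ) (hχ : ∀ n, ‖χ n‖ = 1)
    (hs : 1 < s) :
    dirichletSeries ν (logDerivation ν (charSeries χ)) s =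
      dirichletSeries ν (charSeries χ) s * dirichletSeries ν (charLogDeriv ν χ) s := by
  rw [logDerivation_charSeries, dirichletSeries_mul (hν.summable_norm_charSeries hχ hs)]
  refine (hν.summable_vonMangoldt_mul_exp hs).congr fun n => ?_
  rw [coeff_charLogDeriv, norm_mul, hχ, one_mul, Complex.norm_real,
    norm_of_nonneg (vonMangoldt_nonneg hν.nonneg n)]

end Characters

lemma tsum_mul_exp_eq (hν : HasDensity ν κ) {s : ℝ} (hs : 1 < s) :
    ∑' n, ν n * exp (-s * ν n) =
      (∑' n, exp (-s * ν n)) * ∑' n, vonMangoldt ν n * exp (-s * ν n) := by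
  have h := hν.dirichletSeries_logDerivation_charSeries (χ := 1) (by simp) hs
  simp only [dirichletSeries, coeff_logDerivation, coeff_charSeries, coeff_charLogDeriv,
    AddChar.one_apply, one_mul, mul_one] at h
  exact_mod_cast h

/-- If the sum `V` of this series were finite, then `∑ ν n * e ^ (-s ν n) ≤ V * R s` for
`R s = ∑ e ^ (-s ν n)` would give `R s - R b ≤ (b - s) * V * R s ≤ R s / 2` for `1 < s < b` and `b`
close to `1`, so that `R` would be bounded near `1`. -/
lemma not_summable_vonMangoldt_mul_exp (hν : HasDensity ν κ) :
    ¬ Summable fun n => vonMangoldt ν n * exp (-1 * ν n) := by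
  intro hsum
  set V := ∑' n, vonMangoldt ν n * exp (-1 * ν n)
  let R : ℝ → ℝ := fun s => ∑' n, exp (-s * ν n)
  have hV : 0 ≤ V := tsum_nonneg fun n =>
    mul_nonneg (vonMangoldt_nonneg hν.nonneg n) (exp_pos _).le
  have hR : ∀ s, 0 ≤ R s := fun s => tsum_nonneg fun n => (exp_pos _).le
  have hderiv : ∀ s, 1 < s → ∑' n, ν n * exp (-s * ν n) ≤ V * R s := by
    intro s hs
    rw [hν.tsum_mul_exp_eq hs, mul_comm]
    refine mul_le_mul_of_nonneg_right ?_ (hR s)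
    exact (hν.summable_vonMangoldt_mul_exp hs).tsum_le_tsum (fun n =>
      mul_le_mul_of_nonneg_left (exp_neg_mul_anti (hν.nonneg n) hs.le)
        (vonMangoldt_nonneg hν.nonneg n)) hsum
  have hconvex : ∀ s b, 1 < s → s < b → R s - R b ≤ (b - s) * ∑' n, ν n * exp (-s * ν n) := by
    intro s b hs hsb
    rw [← (hν.summable_exp hs).tsum_sub (hν.summable_exp (hs.trans hsb)), ← tsum_mul_left]
    refine ((hν.summable_exp hs).sub (hν.summable_exp (hs.trans hsb))).tsum_le_tsum (fun n => ?_)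
      ((hν.summable_mul_exp hs).mul_left _)
    rw [show -b * ν n = -((b - s) * ν n) + -s * ν n by ring, exp_add]
    nlinarith [exp_pos (-s * ν n), add_one_le_exp (-((b - s) * ν n))]
  set b := 1 + (2 * (V + 1))⁻¹
  have hb : 1 < b := lt_add_of_pos_right _ (by positivity)
  refine hν.not_summable_exp ?_
  suffices Summable fun n => 1 * exp (-1 * ν n) by simpa using this
  refine summable_mul_exp_of_frequently_tsum_le (B := 2 * R b) (fun _ => zero_le_one)
    (fun s hs => by simpa using hν.summable_exp hs) (Eventually.frequently ?_)
  filter_upwards [Ioo_mem_nhdsGT hb] with s hs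
  simp only [one_mul]
  have hbs : (b - s) * V ≤ 1 / 2 := by
    have h : (b - s) * V ≤ (2 * (V + 1))⁻¹ * (V + 1) :=
      mul_le_mul (by linarith [hs.1, hs.2]) (by linarith) hV (by positivity)
    rwa [mul_inv, mul_assoc, inv_mul_cancel₀ (by positivity), mul_one, inv_eq_one_div] at h
  have hchain := (hconvex s b hs.1 hs.2).trans
    (mul_le_mul_of_nonneg_left (hderiv s hs.1) (by linarith [hs.2]))
  nlinarith [hR s]

end HasDensity

end NumberSystems

section ConvolutionBounds

open MeasureTheory Real Set

variable {F G : ℝ → ℂ} {B C K κ r t : ℝ}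

lemma integral_mul_comp_sub_eq_intervalIntegral (hF : ∀ t < 0, F t = 0) (hG : ∀ t < 0, G t = 0)
    (ht : 0 ≤ t) : ∫ y, F y * G (t - y) = ∫ y in 0..t, F y * G (t - y) := by
  rw [intervalIntegral.integral_of_le ht, ← integral_Icc_eq_integral_Ioc,
    setIntegral_eq_integral_of_forall_compl_eq_zero]
  intro y hy
  rcases lt_or_ge y 0 with h | h
  · rw [hF y h, zero_mul]
  · rw [hG (t - y) (sub_neg.2 (not_le.1 fun h' => hy ⟨h, h'⟩)), mul_zero]

lemma norm_integral_exp_mul_comp_sub_le (hG : Continuous G) (hGneg : ∀ t < 0, G t = 0)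
    (hGle : ∀ t, ‖G t‖ ≤ K) (hzero : ∫ u, G u * exp (-1 * u) = 0) :
    ‖∫ y in 0..t, exp y * G (t - y)‖ ≤ K := by
  have hbound : ∀ u, ‖G u * exp (-1 * u)‖ ≤ K * exp (-1 * u) := fun u => by
    rw [norm_mul, Complex.norm_real, norm_of_nonneg (exp_pos _).le]
    exact mul_le_mul_of_nonneg_right (hGle u) (exp_pos _).le
  have hexp : ∀ c, IntegrableOn (fun u => K * exp (-1 * u)) (Ioi c) := fun c =>
    (exp_neg_integrableOn_Ioi c one_pos).const_mul K
  have hInt : ∀ c, IntegrableOn (fun u => G u * exp (-1 * u)) (Ioi c) := fun c =>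
    (hexp c).mono' (by fun_prop) (.of_forall hbound)
  have htail : ∫ u in 0..t, G u * exp (-1 * u) = -∫ u in Ioi t, G u * exp (-1 * u) := by
    rw [eq_neg_iff_add_eq_zero, intervalIntegral.integral_interval_add_Ioi (hInt 0) (hInt t),
      ← integral_Ici_eq_integral_Ioi, setIntegral_eq_integral_of_forall_compl_eq_zero, hzero]
    intro u hu
    rw [hGneg u (not_le.1 hu), zero_mul]
  have hshift : ∫ y in 0..t, exp y * G (t - y) = exp t * ∫ u in 0..t, G u * exp (-1 * u) := by
    have h := intervalIntegral.integral_comp_sub_left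
      (fun u => G u * exp (-1 * u)) (a := 0) (b := t) t
    rw [sub_self, sub_zero] at h
    rw [← h, ← intervalIntegral.integral_const_mul]
    refine intervalIntegral.integral_congr fun y _ => ?_
    have hexp_add : exp y = exp t * exp (-1 * (t - y)) := by
      rw [← exp_add]
      congr 1
      ring
    rw [hexp_add]
    push_cast
    ring
  rw [hshift, htail, norm_mul, norm_neg, Complex.norm_real, norm_of_nonneg (exp_pos _).le]
  calc exp t * ‖∫ u in Ioi t, G u * exp (-1 * u)‖
      ≤ exp t * ∫ u in Ioi t, K * exp (-1 * u) :=
        mul_le_mul_of_nonneg_left (norm_integral_le_of_norm_le (hexp t) (.of_forall hbound))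
          (exp_pos _).le
    _ = K := by
        rw [integral_const_mul, integral_exp_mul_Ioi (by norm_num), mul_left_comm, neg_div_neg_eq,
          div_one, ← exp_add]
        simp

lemma norm_integral_mul_comp_sub_le (hF : Continuous F) (hG : Continuous G)
    (hFneg : ∀ t < 0, F t = 0) (hGneg : ∀ t < 0, G t = 0)
    (hFle : ∀ t, 0 ≤ t → ‖F t - κ * exp t‖ ≤ C) (hGle : ∀ t, ‖G t‖ ≤ K)
    (hzero : ∫ u, G u * exp (-1 * u) = 0) (ht : 0 ≤ t) :
    ‖∫ y, F y * G (t - y)‖ ≤ C * K * t + |κ| * K := by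
  have hC : 0 ≤ C := (norm_nonneg _).trans (hFle 0 le_rfl)
  have hsplit : ∫ y, F y * G (t - y) =
      (∫ y in 0..t, (F y - κ * exp y) * G (t - y)) + κ * ∫ y in 0..t, exp y * G (t - y) := by
    rw [integral_mul_comp_sub_eq_intervalIntegral hFneg hGneg ht,
      ← intervalIntegral.integral_const_mul, ← intervalIntegral.integral_add
        (Continuous.intervalIntegrable (by fun_prop) _ _)
        (Continuous.intervalIntegrable (by fun_prop) _ _)]
    refine intervalIntegral.integral_congr fun y _ => ?_
    ring
  have hmain : ‖∫ y in 0..t, (F y - κ * exp y) * G (t - y)‖ ≤ C * K * t := by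
    have h := intervalIntegral.norm_integral_le_of_norm_le_const (a := 0) (b := t) (C := C * K)
      (f := fun y => (F y - κ * exp y) * G (t - y)) fun y hy => by
        rw [uIoc_of_le ht] at hy
        rw [norm_mul]
        exact mul_le_mul (hFle y hy.1.le) (hGle _) (norm_nonneg _) hC
    rwa [sub_zero, abs_of_nonneg ht] at h
  rw [hsplit]
  refine (norm_add_le _ _).trans (add_le_add hmain ?_)
  rw [norm_mul, Complex.norm_real, norm_eq_abs]
  exact mul_le_mul_of_nonneg_left
    (norm_integral_exp_mul_comp_sub_le hG hGneg hGle hzero) (abs_nonneg _)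

lemma norm_integral_mul_comp_sub_le_of_norm_le_exp (hFneg : ∀ t < 0, F t = 0)
    (hGneg : ∀ t < 0, G t = 0) (hFle : ∀ t, 0 ≤ t → ‖F t‖ ≤ B * exp (r * t))
    (hGle : ∀ t, 0 ≤ t → ‖G t‖ ≤ K * exp (r * t)) (ht : 0 ≤ t) :
    ‖∫ y, F y * G (t - y)‖ ≤ B * K * exp (r * t) * t := by
  rw [integral_mul_comp_sub_eq_intervalIntegral hFneg hGneg ht]
  have h := intervalIntegral.norm_integral_le_of_norm_le_const (a := 0) (b := t)
    (C := B * K * exp (r * t)) (f := fun y => F y * G (t - y)) fun y hy => by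
      rw [uIoc_of_le ht] at hy
      have hFy := hFle y hy.1.le
      rw [norm_mul, show r * t = r * y + r * (t - y) by ring, exp_add, mul_mul_mul_comm]
      exact mul_le_mul hFy (hGle _ (sub_nonneg.2 hy.2)) (norm_nonneg _)
        ((norm_nonneg _).trans hFy)
  rwa [sub_zero, abs_of_nonneg ht] at h

end ConvolutionBounds

section NonVanishing

open MeasureTheory Real Filter Topology Finset.HasAntidiagonal Finsupp
open scoped Convolution ComplexOrder ComplexConjugate

variable {σ : Type*} {ν : (σ →₀ ℕ) →+ ℝ} {χ : AddChar (σ →₀ ℕ) ℂ} {w w' : ℝ → ℝ} {κ : ℝ}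

lemma smoothSum_conj {ι : Type*} (x : ι → ℝ) (f : ι → ℂ) (w : ℝ → ℝ) (t : ℝ) :
    smoothSum x (fun i => conj (f i)) w t = conj (smoothSum x f w t) := by
  simp [smoothSum, Complex.conj_tsum]

lemma vonMangoldt_nsmul {k : ℕ} (hk : k ≠ 0) (n : σ →₀ ℕ) :
    vonMangoldt ν (k • n) = vonMangoldt ν n := by
  rw [vonMangoldt, vonMangoldt, support_smul_eq hk]

lemma IsWindow.integral_smoothSum_coeff_mul_smoothSum_coeff (hw : IsWindow w) (hw' : IsWindow w')
    (hν : IsLogNorm ν) (f g : MvPowerSeries σ ℂ) (t : ℝ) :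
    ∫ y, smoothSum ν (fun n => f.coeff n) w y * smoothSum ν (fun n => g.coeff n) w' (t - y) =
      smoothSum ν (fun n => (f * g).coeff n) (w ⋆[ContinuousLinearMap.mul ℝ ℝ] w') t := by
  classical
  simpa only [MvPowerSeries.coeff_mul] using
    hw.integral_smoothSum_mul_smoothSum hw' hν.nonneg hν.finite_setOf_le _ _ t

lemma constantCoeff_charSeries (χ : AddChar (σ →₀ ℕ) ℂ) :
    (charSeries χ).constantCoeff = 1 := χ.map_zero_eq_one

lemma coeff_charLogDeriv_add_map_conj (χ : AddChar (σ →₀ ℕ) ℂ) (n : σ →₀ ℕ) :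
    (charLogDeriv ν 1 + charLogDeriv ν χ +
      (charLogDeriv ν 1 + charLogDeriv ν χ).map (starRingEnd ℂ)).coeff n =
      (2 * (1 + (χ n).re) * vonMangoldt ν n : ℝ) := by
  rw [map_add, MvPowerSeries.coeff_map, Complex.add_conj]
  simp [coeff_charLogDeriv, add_mul, mul_assoc]

lemma logDerivation_map_conj (f : MvPowerSeries σ ℂ) :
    logDerivation ν (f.map (starRingEnd ℂ)) = (logDerivation ν f).map (starRingEnd ℂ) := by
  ext n
  simp only [coeff_logDerivation, MvPowerSeries.coeff_map, map_mul, Complex.conj_ofReal]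

lemma logDerivation_mul_map_conj {f L : MvPowerSeries σ ℂ} (hf : logDerivation ν f = f * L) :
    logDerivation ν (f * f.map (starRingEnd ℂ)) =
      f * f.map (starRingEnd ℂ) * (L + L.map (starRingEnd ℂ)) := by
  rw [logDerivation_mul, logDerivation_map_conj, hf, map_mul]
  ring

lemma IsWindow.norm_smoothSum_coeff_mul_map_conj_le (hw : IsWindow w) (hν : IsLogNorm ν)
    {f : MvPowerSeries σ ℂ} {B r t : ℝ} (hr : 0 < r)
    (hf : ∀ t, 0 ≤ t → ‖smoothSum ν (fun n => f.coeff n) w t‖ ≤ B * exp (r * t)) (ht : 0 ≤ t) :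
    ‖smoothSum ν (fun n => (f * f.map (starRingEnd ℂ)).coeff n)
      (w ⋆[ContinuousLinearMap.mul ℝ ℝ] w) t‖ ≤ B * B / r * exp (2 * r * t) := by
  have hneg : ∀ f : (σ →₀ ℕ) → ℂ, ∀ t < 0, smoothSum ν f w t = 0 := fun f t ht =>
    hw.smoothSum_eq_zero_of_neg hν.nonneg f ht
  have hconj : ∀ t, 0 ≤ t →
      ‖smoothSum ν (fun n => (f.map (starRingEnd ℂ)).coeff n) w t‖ ≤ B * exp (r * t) := by
    intro t ht
    simp only [MvPowerSeries.coeff_map, smoothSum_conj, RCLike.norm_conj]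
    exact hf t ht
  have hexp : t ≤ r⁻¹ * exp (r * t) := by
    rw [le_inv_mul_iff₀ hr]
    linarith [add_one_le_exp (r * t)]
  rw [← hw.integral_smoothSum_coeff_mul_smoothSum_coeff hw hν]
  calc _ ≤ B * B * exp (r * t) * t :=
        norm_integral_mul_comp_sub_le_of_norm_le_exp (hneg _) (hneg _) hf hconj ht
    _ ≤ B * B * exp (r * t) * (r⁻¹ * exp (r * t)) :=
        mul_le_mul_of_nonneg_left hexp (mul_nonneg (mul_self_nonneg B) (exp_pos _).le)
    _ = B * B / r * exp (2 * r * t) := by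
        rw [show 2 * r * t = r * t + r * t by ring, exp_add]
        ring

lemma IsWindow.summable_re_coeff_mul_exp (hw : IsWindow w) (hν : IsLogNorm ν)
    {ρ : MvPowerSeries σ ℂ} (hρ : ∀ n, 0 ≤ ρ.coeff n) {C r s : ℝ} (hrs : r < s)
    (hle : ∀ t, 0 ≤ t → ‖smoothSum ν (fun n => ρ.coeff n) w t‖ ≤ C * exp (r * t)) :
    Summable fun n => (ρ.coeff n).re * exp (-s * ν n) := by
  have hre : ∀ n, ρ.coeff n = (ρ.coeff n).re := fun n => Complex.eq_re_of_ofReal_le (hρ n)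
  have hnonneg : ∀ n, 0 ≤ (ρ.coeff n).re := fun n => (Complex.nonneg_iff.1 (hρ n)).1
  refine hw.summable_mul_exp_of_sum_le (C := C) hnonneg hν.nonneg hrs fun t ht F => ?_
  have hsum : Summable fun n => (ρ.coeff n).re * w (ν n - t) := by
    have h := hw.summable_mul_comp_sub hν.finite_setOf_le (fun n => ρ.coeff n) t
    rw [← Complex.summable_ofReal]
    refine h.congr fun n => ?_
    rw [Complex.ofReal_mul, ← hre]
  have htsum : smoothSum ν (fun n => ρ.coeff n) w t =
      (∑' n, (ρ.coeff n).re * w (ν n - t) : ℝ) := by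
    rw [Complex.ofReal_tsum]
    refine tsum_congr fun n => ?_
    rw [Complex.ofReal_mul, ← hre]
  calc ∑ n ∈ F, (ρ.coeff n).re * w (ν n - t)
      ≤ ∑' n, (ρ.coeff n).re * w (ν n - t) :=
        hsum.sum_le_tsum F fun n _ => mul_nonneg (hnonneg n) (hw.nonneg _)
    _ ≤ ‖smoothSum ν (fun n => ρ.coeff n) w t‖ := by
        rw [htsum, Complex.norm_real]
        exact le_abs_self _
    _ ≤ C * exp (r * t) := hle t ht

namespace HasDensity

lemma exists_norm_smoothSum_coeff_charSeries_mul_le (hν : HasDensity ν κ) {K r : ℝ}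
    (hK : ∀ t, ‖smoothSum ν χ window t‖ ≤ K)
    (hzero : ∫ t, smoothSum ν χ window t * exp (-1 * t) = 0) (hr : 0 < r) :
    ∃ B, ∀ t, 0 ≤ t → ‖smoothSum ν (fun n => (charSeries 1 * charSeries χ).coeff n)
      (window ⋆[ContinuousLinearMap.mul ℝ ℝ] window) t‖ ≤ B * exp (r * t) := by
  obtain ⟨C, hC⟩ := hν.exists_asymptotic
  have hC0 : 0 ≤ C := (abs_nonneg _).trans (hC 0 le_rfl)
  have hK0 : 0 ≤ K := (norm_nonneg _).trans (hK 0)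
  have hone : ∀ t, 0 ≤ t →
      ‖smoothSum ν (fun n => (charSeries 1).coeff n) window t - κ * exp t‖ ≤ C := by
    intro t ht
    refine le_of_eq_of_le ?_ (hC t ht)
    simp only [smoothSum, coeff_charSeries, AddChar.one_apply, one_mul, ← Complex.ofReal_tsum,
      ← Complex.ofReal_mul, ← Complex.ofReal_sub, Complex.norm_real, norm_eq_abs]
  refine ⟨C * K / r + |κ| * K, fun t ht => ?_⟩
  rw [← isWindow_window.integral_smoothSum_coeff_mul_smoothSum_coeff isWindow_window
    hν.toIsLogNorm]
  refine (norm_integral_mul_comp_sub_le (hν.continuous_smoothSum_window _)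
    (hν.continuous_smoothSum_window _) (fun t ht => hν.smoothSum_window_eq_zero_of_neg _ ht)
    (fun t ht => hν.smoothSum_window_eq_zero_of_neg _ ht) hone hK hzero ht).trans ?_
  have hlin : t ≤ exp (r * t) / r := by
    rw [le_div_iff₀ hr]
    linarith [add_one_le_exp (r * t)]
  have hexp : 1 ≤ exp (r * t) := one_le_exp (by positivity)
  calc C * K * t + |κ| * K ≤ C * K * (exp (r * t) / r) + |κ| * K * exp (r * t) :=
        add_le_add (by gcongr) (le_mul_of_one_le_right (by positivity) hexp)
    _ = (C * K / r + |κ| * K) * exp (r * t) := by ring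

lemma not_summable_mul_exp_of_vonMangoldt_le (hν : HasDensity ν κ) {a : (σ →₀ ℕ) → ℝ}
    (ha : ∀ n, 0 ≤ a n) {k : ℕ} (hk : k ≠ 0)
    (hle : ∀ n, vonMangoldt ν n ≤ a (k • n) * ν (k • n)) {s : ℝ} (hs : s < (k : ℝ)⁻¹) :
    ¬ Summable fun n => a n * exp (-s * ν n) := by
  intro hsum
  refine hν.not_summable_vonMangoldt_mul_exp
    (((summable_mul_self_mul_exp_of_lt ha hν.nonneg hs hsum).comp_injective
      (nsmul_right_injective hk)).of_nonneg_of_le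
      (fun n => mul_nonneg (vonMangoldt_nonneg hν.nonneg n) (exp_pos _).le) fun n => ?_)
  have hexp : -(k : ℝ)⁻¹ * ν (k • n) = -1 * ν n := by
    rw [map_nsmul, nsmul_eq_mul, neg_mul, inv_mul_cancel_left₀ (by exact_mod_cast hk), neg_one_mul]
  rw [Function.comp_apply, hexp, ← mul_assoc]
  exact mul_le_mul_of_nonneg_right (hle n) (exp_pos _).le

/-- If the integral vanished, the smoothed sums of the coefficients of `ρ = f * conj f`, where
`f = ζ * L(χ)`, would grow subexponentially. As `ρ ≥ 0`, its Dirichlet series would then converge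
for all `s > 0`; but the coefficient of `ρ` at `k • p` is at least `4 / k`. -/
lemma integral_smoothSum_mul_exp_ne_zero (hν : HasDensity ν κ) {K : ℝ} {k : ℕ} (hk : k ≠ 0)
    (hχk : χ ^ k = 1) (hK : ∀ t, ‖smoothSum ν χ window t‖ ≤ K) :
    ∫ t, smoothSum ν χ window t * exp (-1 * t) ≠ 0 := by
  intro hzero
  let f := charSeries 1 * charSeries χ
  let L := charLogDeriv ν 1 + charLogDeriv ν χ
  let ρ := f * f.map (starRingEnd ℂ)
  have hχ : ∀ n, χ n ^ k = 1 := fun n => by rw [← AddChar.pow_apply, hχk, AddChar.one_apply]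
  have hL0 : ∀ n, 0 ≤ (L + L.map (starRingEnd ℂ)).coeff n := by
    intro n
    have hre : -1 ≤ (χ n).re := by
      have h := (abs_le.1 (Complex.abs_re_le_norm (χ n))).1
      rwa [Complex.norm_eq_one_of_pow_eq_one (hχ n) hk] at h
    rw [coeff_charLogDeriv_add_map_conj, Complex.zero_le_real]
    exact mul_nonneg (by linarith) (vonMangoldt_nonneg hν.nonneg n)
  have hρ : logDerivation ν ρ = ρ * (L + L.map (starRingEnd ℂ)) := by
    refine logDerivation_mul_map_conj ?_
    simp only [f, L, logDerivation_mul, logDerivation_charSeries]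
    ring
  have hρ0 : ρ.coeff 0 = 1 := by
    simp [ρ, f, constantCoeff_charSeries]
  have hpos : ∀ n, n ≠ 0 → 0 < ν n := fun n hn => hν.pos hn
  have hρnonneg := coeff_nonneg_of_logDerivation_eq_mul hpos hρ0 hρ hL0
  have hρle : ∀ n, vonMangoldt ν n ≤ (ρ.coeff (k • n)).re * ν (k • n) := by
    intro n
    have h := (Complex.le_def.1 (coeff_le_of_logDerivation_eq_mul hpos hρ0 hρ hL0 (k • n))).1
    rw [coeff_charLogDeriv_add_map_conj, vonMangoldt_nsmul hk, AddChar.map_nsmul_eq_pow, hχ,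
      Complex.re_ofReal_mul, Complex.ofReal_re, Complex.one_re] at h
    linarith [vonMangoldt_nonneg hν.nonneg n]
  have hkpos : (0 : ℝ) < k := by exact_mod_cast hk.bot_lt
  obtain ⟨B, hB⟩ := hν.exists_norm_smoothSum_coeff_charSeries_mul_le hK hzero
    (show 0 < (k : ℝ)⁻¹ / 8 by positivity)
  have hW := isWindow_window.convolution isWindow_window
  refine hν.not_summable_mul_exp_of_vonMangoldt_le (s := (k : ℝ)⁻¹ / 2)
    (fun n => (Complex.nonneg_iff.1 (hρnonneg n)).1) hk hρle (half_lt_self (by positivity)) ?_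
  exact (hW.convolution hW).summable_re_coeff_mul_exp hν.toIsLogNorm hρnonneg
    (show 2 * ((k : ℝ)⁻¹ / 8) < _ by linarith [inv_pos.2 hkpos]) fun t ht =>
      hW.norm_smoothSum_coeff_mul_map_conj_le hν.toIsLogNorm (by positivity) hB ht

end HasDensity

end NonVanishing

section LogDerivative

open MeasureTheory Real Filter Topology

variable {σ : Type*} {ν : (σ →₀ ℕ) →+ ℝ} {χ : AddChar (σ →₀ ℕ) ℂ} {κ : ℝ}

lemma norm_mul_exp_le {F : ℝ → ℂ} {K s : ℝ} (hF : ∀ t, ‖F t‖ ≤ K) (t : ℝ) :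
    ‖F t * exp (-s * t)‖ ≤ K * exp (-s * t) := by
  rw [norm_mul, Complex.norm_real, norm_of_nonneg (exp_pos _).le]
  exact mul_le_mul_of_nonneg_right (hF t) (exp_pos _).le

lemma abs_expMoment_one_window_le (s : ℝ) : |expMoment window 1 s| ≤ 2 * expMoment window 0 s := by
  have hInt : Integrable fun u => window u * (u ^ 0 * exp (s * u)) :=
    isWindow_window.integrable_mul (by fun_prop)
  rw [expMoment, expMoment, ← integral_const_mul, ← norm_eq_abs]
  refine norm_integral_le_of_norm_le (hInt.const_mul 2) (.of_forall fun u => ?_)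
  rw [norm_mul, norm_mul, norm_of_nonneg window.nonneg, norm_of_nonneg (exp_pos _).le]
  by_cases h : window u = 0
  · simp [h]
  have hu : ‖u‖ ≤ 2 := abs_le.2
    ⟨(mem_Icc_of_window_ne_zero h).1, by linarith [(mem_Icc_of_window_ne_zero h).2]⟩
  rw [pow_one, pow_zero, one_mul, mul_left_comm 2]
  exact mul_le_mul_of_nonneg_left (mul_le_mul_of_nonneg_right hu (exp_pos _).le) window.nonneg

lemma tendsto_integral_mul_exp_neg {F : ℝ → ℂ} {K : ℝ} (hF : Continuous F)
    (hneg : ∀ t < 0, F t = 0) (hK : ∀ t, ‖F t‖ ≤ K) :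
    Tendsto (fun s : ℝ => ∫ t, F t * exp (-s * t)) (𝓝[>] 1) (𝓝 (∫ t, F t * exp (-1 * t))) := by
  refine tendsto_integral_filter_of_dominated_convergence
    ((Set.Ici 0).indicator fun t => K * exp (-1 * t)) (.of_forall fun s => ?_) ?_
    (integrable_indicator_exp_neg K one_pos) (.of_forall fun t => ?_)
  · exact Continuous.aestronglyMeasurable (by fun_prop)
  · filter_upwards [self_mem_nhdsWithin] with s hs
    refine .of_forall (norm_le_indicator_exp_neg (fun t ht => by rw [hneg t ht, zero_mul])
      fun t ht => (norm_mul_exp_le hK t).trans ?_)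
    exact mul_le_mul_of_nonneg_left (exp_neg_mul_anti ht (Set.mem_Ioi.1 hs).le)
      ((norm_nonneg _).trans (hK 0))
  · exact (Continuous.tendsto (by fun_prop) 1).mono_left nhdsWithin_le_nhds

lemma norm_integral_mul_id_mul_exp_neg_le {F : ℝ → ℂ} {K s : ℝ} (hneg : ∀ t < 0, F t = 0)
    (hK : ∀ t, ‖F t‖ ≤ K) (hs : 1 ≤ s) : ‖∫ t, F t * (t * exp (-s * t) : ℝ)‖ ≤ 4 * K := by
  have hK0 : 0 ≤ K := (norm_nonneg _).trans (hK 0)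
  refine (norm_integral_le_of_norm_le_exp_neg (C := 2 * K) one_half_pos
    (fun t ht => by rw [hneg t ht, zero_mul]) fun t ht => ?_).trans_eq (by ring)
  rw [norm_mul, Complex.norm_real, norm_of_nonneg (by positivity), mul_comm 2, mul_assoc]
  refine mul_le_mul (hK t) ?_ (by positivity) hK0
  calc t * exp (-s * t) ≤ t * exp (-1 * t) := mul_le_mul_of_nonneg_left (exp_neg_mul_anti ht hs) ht
    _ ≤ (1 - 1 / 2)⁻¹ * exp (-(1 / 2) * t) := mul_exp_neg_le one_half_lt_one t
    _ = 2 * exp (-(1 / 2) * t) := by norm_num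

namespace HasDensity

lemma dirichletSeries_charLogDeriv_eq (hν : HasDensity ν κ) (hχ : ∀ n, ‖χ n‖ = 1) {s : ℝ}
    (hs : 1 < s) (hN : ∫ t, smoothSum ν χ window t * exp (-s * t) ≠ 0) :
    dirichletSeries ν (charLogDeriv ν χ) s =
      (∫ t, smoothSum ν χ window t * (t * exp (-s * t) : ℝ)) /
          (∫ t, smoothSum ν χ window t * exp (-s * t)) +
        (expMoment window 1 s / expMoment window 0 s : ℝ) := by
  have hsum : Summable fun n => ‖χ n‖ * exp (-s * ν n) := hν.summable_norm_charSeries hχ hs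
  have hsum' : Summable fun n => ‖χ n‖ * (ν n * exp (-s * ν n)) := by
    simpa only [hχ, one_mul] using hν.summable_mul_exp hs
  have hm : (expMoment window 0 s : ℂ) ≠ 0 := by
    exact_mod_cast (isWindow_window.expMoment_zero_pos s).ne'
  have hlog : ∑' n, χ n * (ν n * exp (-s * ν n) : ℝ) =
      dirichletSeries ν (charSeries χ) s * dirichletSeries ν (charLogDeriv ν χ) s := by
    rw [← hν.dirichletSeries_logDerivation_charSeries hχ hs, dirichletSeries]
    refine tsum_congr fun n => ?_
    rw [coeff_logDerivation, coeff_charSeries]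
    push_cast
    ring
  have hD : ∑' n, χ n * exp (-s * ν n) = dirichletSeries ν (charSeries χ) s := rfl
  rw [isWindow_window.integral_smoothSum_mul_exp hν.nonneg hν.finite_setOf_le χ hsum, hD] at hN ⊢
  rw [isWindow_window.integral_smoothSum_mul_id_mul_exp hν.nonneg hν.finite_setOf_le χ hsum hsum',
    hlog, hD]
  have hD0 := right_ne_zero_of_mul hN
  push_cast
  field_simp
  ring

lemma exists_eventually_norm_dirichletSeries_charLogDeriv_le (hν : HasDensity ν κ) {K : ℝ} {k : ℕ}
    (hk : k ≠ 0) (hχk : χ ^ k = 1) (hK : ∀ t, ‖smoothSum ν χ window t‖ ≤ K) :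
    ∃ B, ∀ᶠ s in 𝓝[>] 1, ‖dirichletSeries ν (charLogDeriv ν χ) s‖ ≤ B := by
  have hχ : ∀ n, ‖χ n‖ = 1 := fun n => Complex.norm_eq_one_of_pow_eq_one (n := k)
    (by rw [← AddChar.pow_apply, hχk, AddChar.one_apply]) hk
  have hneg : ∀ t < 0, smoothSum ν χ window t = 0 := fun t ht =>
    hν.smoothSum_window_eq_zero_of_neg _ ht
  have hlim := tendsto_integral_mul_exp_neg (hν.continuous_smoothSum_window χ) hneg hK
  have hN := norm_pos_iff.2 (hν.integral_smoothSum_mul_exp_ne_zero hk hχk hK)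
  set N := ∫ t, smoothSum ν χ window t * exp (-1 * t)
  refine ⟨4 * K / (‖N‖ / 2) + 2, ?_⟩
  filter_upwards [self_mem_nhdsWithin, hlim.norm.eventually_const_lt (half_lt_self hN)]
    with s hs hNs
  have hs : 1 < s := hs
  have hK0 : 0 ≤ K := (norm_nonneg _).trans (hK 0)
  have hNs0 : ∫ t, smoothSum ν χ window t * exp (-s * t) ≠ 0 :=
    norm_pos_iff.1 ((half_pos hN).trans hNs)
  rw [hν.dirichletSeries_charLogDeriv_eq hχ hs hNs0]
  refine (norm_add_le _ _).trans (add_le_add ?_ ?_)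
  · rw [norm_div]
    exact div_le_div₀ (by positivity) (norm_integral_mul_id_mul_exp_neg_le hneg hK hs.le)
      (half_pos hN) hNs.le
  · have hm := isWindow_window.expMoment_zero_pos s
    rw [Complex.norm_real, norm_eq_abs, abs_div, abs_of_pos hm, div_le_iff₀ hm]
    exact abs_expMoment_one_window_le s

end HasDensity

end LogDerivative

section Equidistribution

open Real Filter Topology Finsupp

variable {σ Γ : Type*} {ν : (σ →₀ ℕ) →+ ℝ} {κ : ℝ}

/-- A generalized number system whose elements are distributed evenly among the classes of `cl`:
the smoothed number of elements of norm at most `e ^ t` is `κ * e ^ t + O(1)` in every class. -/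
structure IsEquidistributed [AddZeroClass Γ] (ν : (σ →₀ ℕ) →+ ℝ) (cl : (σ →₀ ℕ) →+ Γ)
    (κ : ℝ) : Prop extends IsLogNorm ν where
  density_pos : 0 < κ
  exists_asymptotic : ∀ g, ∃ C, ∀ t, 0 ≤ t →
    |∑' n : {n // cl n = g}, window (ν n - t) - κ * exp t| ≤ C

lemma IsLogNorm.smoothSum_comp_eq_sum [Fintype Γ] (hν : IsLogNorm ν) (cl : (σ →₀ ℕ) → Γ)
    (ψ : Γ → ℂ) (t : ℝ) :
    smoothSum ν (ψ ∘ cl) window t = ∑ g, ψ g * ∑' n : {n // cl n = g}, window (ν n - t) := by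
  have hsum := (Equiv.sigmaFiberEquiv cl).summable_iff.2
    (isWindow_window.summable_mul_comp_sub hν.finite_setOf_le (ψ ∘ cl) t)
  rw [smoothSum, ← (Equiv.sigmaFiberEquiv cl).tsum_eq]
  refine hsum.tsum_sigma.trans ((tsum_fintype _).trans ?_)
  refine Finset.sum_congr rfl fun g _ => ?_
  rw [Complex.ofReal_tsum, ← tsum_mul_left]
  refine tsum_congr fun n => ?_
  simp [Equiv.sigmaFiberEquiv, n.2]

lemma HasDensity.summable_indicator_vonMangoldt_mul_exp (hν : HasDensity ν κ) :
    Summable ({n | ∃ p, n = single p 1}ᶜ.indicator fun n => vonMangoldt ν n * exp (-1 * ν n)) := by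
  obtain ⟨c, hc, hcν⟩ := hν.exists_pos_forall_le_single
  let i : σ × ℕ → (σ →₀ ℕ) := fun x => single x.1 (x.2 + 2)
  have hi : i.Injective := by
    rintro ⟨p, k⟩ ⟨q, l⟩ h
    obtain ⟨rfl, h⟩ | ⟨h, -⟩ := (single_eq_single_iff ..).1 h
    · exact Prod.ext rfl (Nat.add_right_cancel h)
    · exact absurd h (Nat.succ_ne_zero _)
  have hprod : Summable fun x : σ × ℕ =>
      ν (single x.1 1) * exp (-2 * ν (single x.1 1)) * exp (-c) ^ x.2 := by
    refine ((hν.summable_mul_exp one_lt_two).comp_injective (i := fun p => single p 1)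
      (single_left_injective one_ne_zero)).mul_of_nonneg
      (summable_geometric_of_lt_one (exp_pos _).le (exp_lt_one_iff.2 (neg_lt_zero.2 hc)))
      (fun p => mul_nonneg (hν.nonneg _) (exp_pos _).le) fun k => pow_nonneg (exp_pos _).le k
  refine (hi.summable_iff fun n hn => ?_).1 (hprod.of_nonneg_of_le (fun x => ?_) fun x => ?_)
  · refine Set.indicator_apply_eq_zero.2 fun hn1 => mul_eq_zero_of_left ?_ _
    by_contra h
    obtain ⟨p, k, hk, rfl⟩ := exists_eq_single_of_vonMangoldt_ne_zero h
    match k with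
    | 0 => exact hk rfl
    | 1 => exact hn1 ⟨p, rfl⟩
    | k + 2 => exact hn ⟨(p, k), rfl⟩
  · exact Set.indicator_nonneg
      (fun n _ => mul_nonneg (vonMangoldt_nonneg hν.nonneg n) (exp_pos _).le) _
  · refine (Set.indicator_le_self' (fun n _ => mul_nonneg (vonMangoldt_nonneg hν.nonneg n)
      (exp_pos _).le) _).trans ?_
    have hνi : ν (i x) = (x.2 + 2) * ν (single x.1 1) := by
      rw [show i x = (x.2 + 2) • single x.1 1 from (smul_single_one ..).symm, map_nsmul,
        nsmul_eq_mul]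
      push_cast
      ring
    rw [vonMangoldt_single _ (by omega), hνi, mul_assoc, ← exp_nat_mul, ← exp_add]
    refine mul_le_mul_of_nonneg_left (exp_le_exp.2 ?_) (hν.nonneg _)
    nlinarith [hcν x.1, Nat.cast_nonneg (α := ℝ) x.2]

lemma sum_addChar_mul_dirichletSeries [AddCommGroup Γ] [Fintype Γ] (cl : (σ →₀ ℕ) →+ Γ) (g : Γ)
    {s : ℝ} (hs : Summable fun n => vonMangoldt ν n * exp (-s * ν n)) :
    ∑ χ : AddChar Γ ℂ, χ (-g) * dirichletSeries ν (charLogDeriv ν (χ.compAddMonoidHom cl)) s =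
      Fintype.card Γ *
        (∑' n, {n | cl n = g}.indicator (vonMangoldt ν) n * exp (-s * ν n) : ℝ) := by
  classical
  have hterm : ∀ (χ : AddChar Γ ℂ) n, χ (-g) *
      ((charLogDeriv ν (χ.compAddMonoidHom cl)).coeff n * exp (-s * ν n)) =
      χ (-g + cl n) * (vonMangoldt ν n * exp (-s * ν n) : ℝ) := by
    intro χ n
    rw [coeff_charLogDeriv, AddChar.map_add_eq_mul, AddChar.compAddMonoidHom_apply]
    push_cast
    ring
  have hsum : ∀ χ : AddChar Γ ℂ,
      Summable fun n => χ (-g + cl n) * (vonMangoldt ν n * exp (-s * ν n) : ℝ) := fun χ =>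
    Summable.of_norm (by
      simpa only [norm_mul, AddChar.norm_apply, one_mul, Complex.norm_real] using hs.norm)
  simp only [dirichletSeries, ← tsum_mul_left, Complex.ofReal_tsum, hterm]
  rw [← Summable.tsum_finsetSum fun χ _ => hsum χ]
  refine tsum_congr fun n => ?_
  simp only [← Finset.sum_mul, AddChar.sum_apply_eq_ite, neg_add_eq_zero, Set.indicator,
    Set.mem_ofPred_eq, eq_comm (a := g)]
  split_ifs <;> simp

namespace IsEquidistributed

variable [AddCommGroup Γ] {cl : (σ →₀ ℕ) →+ Γ}

lemma exists_norm_smoothSum_sub_le [Fintype Γ] (hν : IsEquidistributed ν cl κ) (ψ : Γ → ℂ) :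
    ∃ C, ∀ t, 0 ≤ t → ‖smoothSum ν (ψ ∘ cl) window t - κ * (∑ g, ψ g) * exp t‖ ≤ C := by
  choose C hC using hν.exists_asymptotic
  refine ⟨∑ g, ‖ψ g‖ * C g, fun t ht => ?_⟩
  have heq : smoothSum ν (ψ ∘ cl) window t - κ * (∑ g, ψ g) * exp t =
      ∑ g, ψ g * (∑' n : {n // cl n = g}, window (ν n - t) - κ * exp t : ℝ) := by
    rw [hν.smoothSum_comp_eq_sum, Finset.mul_sum, Finset.sum_mul, ← Finset.sum_sub_distrib]
    refine Finset.sum_congr rfl fun g _ => ?_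
    push_cast
    ring
  rw [heq]
  refine norm_sum_le_of_le _ fun g _ => ?_
  rw [norm_mul, Complex.norm_real]
  exact mul_le_mul_of_nonneg_left (hC g t ht) (norm_nonneg _)

lemma hasDensity [Fintype Γ] (hν : IsEquidistributed ν cl κ) :
    HasDensity ν (κ * Fintype.card Γ) where
  toIsLogNorm := hν.toIsLogNorm
  density_pos := mul_pos hν.density_pos (by exact_mod_cast Fintype.card_pos)
  exists_asymptotic := by
    obtain ⟨C, hC⟩ := hν.exists_norm_smoothSum_sub_le fun _ => 1
    refine ⟨C, fun t ht => (le_of_eq ?_).trans (hC t ht)⟩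
    rw [← norm_eq_abs, ← Complex.norm_real]
    simp [smoothSum, Complex.ofReal_tsum]

variable [Finite Γ] {χ : AddChar Γ ℂ}

lemma exists_norm_smoothSum_addChar_le (hν : IsEquidistributed ν cl κ) (hχ : χ ≠ 0) :
    ∃ K, ∀ t, ‖smoothSum ν (χ.compAddMonoidHom cl) window t‖ ≤ K := by
  cases nonempty_fintype Γ
  obtain ⟨C, hC⟩ := hν.exists_norm_smoothSum_sub_le χ
  refine ⟨C, fun t => ?_⟩
  rcases lt_or_ge t 0 with ht | ht
  · rw [hν.smoothSum_window_eq_zero_of_neg _ ht, norm_zero]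
    exact (norm_nonneg _).trans (hC 0 le_rfl)
  · simpa [AddChar.sum_eq_zero_iff_ne_zero.2 hχ] using hC t ht

lemma exists_eventually_norm_dirichletSeries_le (hν : IsEquidistributed ν cl κ) (hχ : χ ≠ 0) :
    ∃ B, ∀ᶠ s in 𝓝[>] 1,
      ‖dirichletSeries ν (charLogDeriv ν (χ.compAddMonoidHom cl)) s‖ ≤ B := by
  cases nonempty_fintype Γ
  obtain ⟨K, hK⟩ := hν.exists_norm_smoothSum_addChar_le hχ
  refine hν.hasDensity.exists_eventually_norm_dirichletSeries_charLogDeriv_le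
    (Fintype.card_ne_zero (α := Γ)) ?_ hK
  ext n
  simp [← AddChar.map_nsmul_eq_pow]

/-- Dirichlet's argument: the sum of this series over all classes diverges at `s = 1`, while all
its nontrivial character sums stay bounded as `s → 1`. -/
lemma not_summable_indicator_vonMangoldt_mul_exp (hν : IsEquidistributed ν cl κ) (g : Γ) :
    ¬ Summable fun n => {n | cl n = g}.indicator (vonMangoldt ν) n * exp (-1 * ν n) := by
  intro hsum
  classical
  cases nonempty_fintype Γ
  have hΛ : ∀ n, 0 ≤ vonMangoldt ν n := vonMangoldt_nonneg hν.nonneg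
  have hΛg : ∀ n, 0 ≤ {n | cl n = g}.indicator (vonMangoldt ν) n :=
    Set.indicator_nonneg fun n _ => hΛ n
  have hsummable : ∀ s, 1 < s → Summable fun n => vonMangoldt ν n * exp (-s * ν n) :=
    fun s hs => hν.hasDensity.summable_vonMangoldt_mul_exp hs
  have hbound : ∀ χ ∈ Finset.univ.erase (0 : AddChar Γ ℂ), ∃ B, ∀ᶠ s in 𝓝[>] 1,
      ‖dirichletSeries ν (charLogDeriv ν (χ.compAddMonoidHom cl)) s‖ ≤ B := fun χ hχ =>
    hν.exists_eventually_norm_dirichletSeries_le (Finset.ne_of_mem_erase hχ)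
  choose! B hB using hbound
  refine hν.hasDensity.not_summable_vonMangoldt_mul_exp (summable_mul_exp_of_frequently_tsum_le
    (B := Fintype.card Γ * ∑' n, {n | cl n = g}.indicator (vonMangoldt ν) n * exp (-1 * ν n) +
      ∑ χ ∈ Finset.univ.erase 0, B χ) hΛ hsummable (Eventually.frequently ?_))
  filter_upwards [self_mem_nhdsWithin, (Finset.eventually_all _).2 hB] with s hs hBs
  have hsplit := Finset.add_sum_erase Finset.univ (fun χ : AddChar Γ ℂ => χ (-g) *
    dirichletSeries ν (charLogDeriv ν (χ.compAddMonoidHom cl)) s) (Finset.mem_univ 0)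
  have htrivial : dirichletSeries ν (charLogDeriv ν ((0 : AddChar Γ ℂ).compAddMonoidHom cl)) s =
      (∑' n, vonMangoldt ν n * exp (-s * ν n) : ℝ) := by
    simp [dirichletSeries, coeff_charLogDeriv, Complex.ofReal_tsum]
  rw [sum_addChar_mul_dirichletSeries cl g (hsummable s hs), htrivial, AddChar.zero_apply, one_mul,
    ← eq_sub_iff_add_eq] at hsplit
  refine (le_abs_self _).trans ?_
  rw [← norm_eq_abs, ← Complex.norm_real, hsplit]
  refine (norm_sub_le _ _).trans (add_le_add ?_ (norm_sum_le_of_le _ fun χ hχ => ?_))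
  · rw [norm_mul, Complex.norm_real, Complex.norm_natCast,
      norm_of_nonneg (tsum_nonneg fun n => mul_nonneg (hΛg n) (exp_pos _).le)]
    have hle : ∀ n, {n | cl n = g}.indicator (vonMangoldt ν) n * exp (-s * ν n) ≤
        {n | cl n = g}.indicator (vonMangoldt ν) n * exp (-1 * ν n) := fun n =>
      mul_le_mul_of_nonneg_left (exp_neg_mul_anti (hν.nonneg n) (Set.mem_Ioi.1 hs).le) (hΛg n)
    exact mul_le_mul_of_nonneg_left ((hsum.of_nonneg_of_le
      (fun n => mul_nonneg (hΛg n) (exp_pos _).le) hle).tsum_le_tsum hle hsum) (Nat.cast_nonneg _)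
  · rw [norm_mul, AddChar.norm_apply, one_mul]
    exact hBs χ hχ

theorem infinite_setOf_single_mem_class (hν : IsEquidistributed ν cl κ) (g : Γ) :
    {p | cl (single p 1) = g}.Infinite := by
  intro hfin
  cases nonempty_fintype Γ
  let f := fun n => vonMangoldt ν n * exp (-1 * ν n)
  have hf : ∀ n, 0 ≤ f n := fun n =>
    mul_nonneg (vonMangoldt_nonneg hν.nonneg n) (exp_pos _).le
  let A : Set (σ →₀ ℕ) := (single · 1) '' {p | cl (single p 1) = g}
  have hA : Summable (A.indicator f) :=
    summable_of_hasFiniteSupport ((hfin.image _).subset Set.support_indicator_subset)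
  refine hν.not_summable_indicator_vonMangoldt_mul_exp g
    ((hA.add hν.hasDensity.summable_indicator_vonMangoldt_mul_exp).of_nonneg_of_le
      (fun n => mul_nonneg (Set.indicator_nonneg
        (fun n _ => vonMangoldt_nonneg hν.nonneg n) n) (exp_pos _).le) fun n => ?_)
  by_cases hprime : ∃ p, n = single p 1
  · have hmem : n ∉ {n : σ →₀ ℕ | ∃ p, n = single p 1}ᶜ := fun h => h hprime
    rw [Set.indicator_of_notMem hmem, add_zero]
    obtain ⟨p, rfl⟩ := hprime
    by_cases hp : single p 1 ∈ {n | cl n = g}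
    · have hpA : single p 1 ∈ A := ⟨p, hp, rfl⟩
      rw [Set.indicator_of_mem hp, Set.indicator_of_mem hpA]
    · rw [Set.indicator_of_notMem hp, zero_mul]
      exact Set.indicator_nonneg (fun n _ => hf n) _
  · have hmem : n ∈ {n : σ →₀ ℕ | ∃ p, n = single p 1}ᶜ := hprime
    rw [Set.indicator_of_mem hmem]
    refine le_add_of_nonneg_of_le (Set.indicator_nonneg (fun n _ => hf n) _) ?_
    exact mul_le_mul_of_nonneg_right (Set.indicator_le_self' (fun n _ =>
      vonMangoldt_nonneg hν.nonneg n) _) (exp_pos _).le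

end IsEquidistributed

end Equidistribution

section PrimeIdeals

section

variable {R : Type*} [CommRing R] [IsDedekindDomain R] (I : Ideal R)

/-- The nonzero prime ideals coprime to `I`. -/
abbrev CoprimePrimes : Type _ := {P : coprimeIdeals I // (P : Ideal R).IsPrime}

/-- The product of a family of prime ideals, indexed by their multiplicities. -/
noncomputable def primeIdealProd : (CoprimePrimes I →₀ ℕ) →+ Additive (coprimeIdeals I) :=
  Finsupp.liftAddHom fun P => multiplesHom _ (Additive.ofMul P.1)

variable {I}

lemma primeIdealProd_single (P : CoprimePrimes I) (k : ℕ) :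
    primeIdealProd I (Finsupp.single P k) = k • Additive.ofMul P.1 := by
  simp [primeIdealProd]

lemma normalizedFactors_primeIdealProd (n : CoprimePrimes I →₀ ℕ) :
    UniqueFactorizationMonoid.normalizedFactors ((primeIdealProd I n).toMul : Ideal R) =
      (Finsupp.toMultiset n).map fun P => (P.1 : Ideal R) := by
  induction n using Finsupp.induction_linear with
  | zero =>
    rw [map_zero (primeIdealProd I), map_zero Finsupp.toMultiset, toMul_zero, OneMemClass.coe_one,
      UniqueFactorizationMonoid.normalizedFactors_one, Multiset.map_zero]
  | add m n hm hn =>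
    rw [map_add (primeIdealProd I), map_add Finsupp.toMultiset, Multiset.map_add, ← hm, ← hn,
      toMul_add, Submonoid.coe_mul,
      UniqueFactorizationMonoid.normalizedFactors_mul (primeIdealProd I m).toMul.2.1
        (primeIdealProd I n).toMul.2.1]
  | single P k =>
    rw [primeIdealProd_single, toMul_nsmul, toMul_ofMul, SubmonoidClass.coe_pow,
      UniqueFactorizationMonoid.normalizedFactors_pow,
      UniqueFactorizationMonoid.normalizedFactors_irreducible
        (Ideal.prime_of_isPrime P.1.2.1 P.2).irreducible, normalize_eq, Finsupp.toMultiset_single,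
      Multiset.map_nsmul, Multiset.map_singleton]

lemma primeIdealProd_bijective : Function.Bijective (primeIdealProd I) := by
  refine ⟨fun m n h => Multiset.toFinsupp.symm.injective <| Multiset.map_injective
    (Subtype.val_injective.comp Subtype.val_injective) ?_, ?_⟩
  · exact (normalizedFactors_primeIdealProd m).symm.trans
      (h ▸ normalizedFactors_primeIdealProd n)
  · suffices ∀ 𝔞 (h𝔞 : 𝔞 ∈ coprimeIdeals I), ∃ n, primeIdealProd I n = Additive.ofMul ⟨𝔞, h𝔞⟩ from
      fun 𝔞 => this 𝔞.toMul 𝔞.toMul.2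
    intro 𝔞 h𝔞
    induction 𝔞 using UniqueFactorizationMonoid.induction_on_prime with
    | h₁ => exact absurd rfl h𝔞.1
    | h₂ 𝔞 hunit =>
      exact ⟨0, congrArg Additive.ofMul (Subtype.ext (isUnit_iff_eq_one.1 hunit).symm)⟩
    | h₃ 𝔞 P _ hP ih =>
      obtain ⟨hPI, h𝔞I⟩ := mul_mem_coprimeIdeals_iff.1 h𝔞
      obtain ⟨n, hn⟩ := ih h𝔞I
      refine ⟨Finsupp.single ⟨⟨P, hPI⟩, Ideal.isPrime_of_prime hP⟩ 1 + n, ?_⟩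
      rw [map_add, primeIdealProd_single, one_nsmul, hn]
      rfl

variable (I) in
/-- Unique factorization of the ideals coprime to `I`. -/
noncomputable def primeIdealProdEquiv : (CoprimePrimes I →₀ ℕ) ≃+ Additive (coprimeIdeals I) :=
  .ofBijective (primeIdealProd I) primeIdealProd_bijective

lemma primeIdealProdEquiv_single_one (P : CoprimePrimes I) :
    primeIdealProdEquiv I (Finsupp.single P 1) = Additive.ofMul P.1 :=
  (primeIdealProd_single P 1).trans (one_nsmul _)

variable (I) in
/-- The ray class of the ideal with a given prime factorization. -/
noncomputable def rayClassHom : (CoprimePrimes I →₀ ℕ) →+ Additive (RayClassGroup I) :=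
  (MonoidHom.toAdditive (rayCon I).mk').comp (primeIdealProdEquiv I)

end

variable {K : Type*} [Field K] [NumberField K] (I : Ideal (𝓞 K))

variable {I} in
lemma absNorm_coprimeIdeals_ne_zero (𝔞 : coprimeIdeals I) : Ideal.absNorm (𝔞 : Ideal (𝓞 K)) ≠ 0 :=
  mt Ideal.absNorm_eq_zero_iff.1 𝔞.2.1

/-- The logarithm of the norm of the ideal with a given prime factorization. -/
noncomputable def logNormHom : (CoprimePrimes I →₀ ℕ) →+ ℝ :=
  AddMonoidHom.comp
    { toFun 𝔞 := Real.log (Ideal.absNorm (𝔞.toMul : Ideal (𝓞 K)))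
      map_zero' := by simp
      map_add' 𝔞 𝔟 := by
        rw [toMul_add, Submonoid.coe_mul, map_mul, Nat.cast_mul, Real.log_mul] <;>
          exact Nat.cast_ne_zero.2 (absNorm_coprimeIdeals_ne_zero _) }
    (primeIdealProdEquiv I : _ →+ Additive (coprimeIdeals I))

lemma logNormHom_apply (n : CoprimePrimes I →₀ ℕ) : logNormHom I n =
    Real.log (Ideal.absNorm ((primeIdealProdEquiv I n).toMul : Ideal (𝓞 K))) := rfl

lemma isLogNorm_logNormHom : IsLogNorm (logNormHom I) where
  pos_single P := by
    rw [logNormHom_apply, primeIdealProdEquiv_single_one]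
    refine Real.log_pos (Nat.one_lt_cast.2 (Nat.one_lt_iff_ne_zero_and_ne_one.2
      ⟨absNorm_coprimeIdeals_ne_zero _, mt Ideal.absNorm_eq_one_iff.1 P.2.ne_top⟩))
  finite_setOf_le X := by
    have hinj : Function.Injective fun n => ((primeIdealProdEquiv I n).toMul : Ideal (𝓞 K)) :=
      Subtype.val_injective.comp (primeIdealProdEquiv I).injective
    refine ((Ideal.finite_setOfPred_absNorm_le ⌊Real.exp X⌋₊).preimage hinj.injOn).subset
      fun n hn => Nat.le_floor ?_
    exact (Real.log_le_iff_le_exp (Nat.cast_pos.2 (Nat.pos_of_ne_zero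
      (absNorm_coprimeIdeals_ne_zero _)))).1 hn

lemma exists_isEquidistributed_rayClassHom [Finite (𝓞 K ⧸ I)] :
    ∃ κ, IsEquidistributed (logNormHom I) (rayClassHom I) κ := by
  obtain ⟨κ, hκ, hcount⟩ := exists_tsum_window_rayClass_asymptotic I
  refine ⟨κ, isLogNorm_logNormHom I, hκ, fun g => ?_⟩
  obtain ⟨C, hC⟩ := hcount g.toMul
  refine ⟨C, fun t ht => le_of_eq_of_le ?_ (hC t ht)⟩
  let e : {n // rayClassHom I n = g} ≃
      {𝔞 : coprimeIdeals I // (𝔞 : RayClassGroup I) = g.toMul} :=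
    ((primeIdealProdEquiv I).toEquiv.trans Additive.toMul).subtypeEquiv fun _ => Iff.rfl
  rw [← e.tsum_eq]
  rfl

theorem infinite_setOf_isPrime_and_mk_eq [Finite (𝓞 K ⧸ I)] (g : RayClassGroup I) :
    {P : coprimeIdeals I | (P : Ideal (𝓞 K)).IsPrime ∧ (P : RayClassGroup I) = g}.Infinite := by
  obtain ⟨κ, hν⟩ := exists_isEquidistributed_rayClassHom I
  refine ((hν.infinite_setOf_single_mem_class (Additive.ofMul g)).image
    Subtype.val_injective.injOn).mono ?_
  rintro _ ⟨P, hP, rfl⟩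
  refine ⟨P.2, Additive.ofMul.injective ?_⟩
  rw [← Set.mem_ofPred.1 hP, rayClassHom, AddMonoidHom.comp_apply, AddMonoidHom.coe_coe,
    primeIdealProdEquiv_single_one]
  rfl

end PrimeIdeals

/-- Lemma 15: given a nonzero ideal `I ⊆ 𝓞_K` and `x ∈ 𝓞_K` coprime to `I`, there are
infinitely many principal prime ideals of `𝓞_K` admitting a generator `y` with
`y ≡ x (mod I)`. -/
theorem infinitely_many_principal_primes_in_residue_class
    (K : Type*) [Field K] [NumberField K] (I : Ideal (𝓞 K)) (hI : I ≠ ⊥)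
    (x : 𝓞 K) (hx : Ideal.span {x} ⊔ I = ⊤) :
    {P : Ideal (𝓞 K) | P.IsPrime ∧ ∃ y : 𝓞 K, P = Ideal.span {y} ∧ y - x ∈ I}.Infinite := by
  have := Ideal.finiteQuotientOfFreeOfNeBot I hI
  obtain ⟨x', hx', hxx'⟩ : ∃ x', Ideal.span {x'} ∈ coprimeIdeals I ∧
      Ideal.Quotient.mk I x' = Ideal.Quotient.mk I x := by
    have hunit : IsUnit (Ideal.Quotient.mk I x) :=
      isCoprime_span_singleton_iff_isUnit_mk.1 (Ideal.isCoprime_iff_sup_eq.2 hx)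
    by_cases h0 : x = 0
    · have hI1 : I = ⊤ := by simpa [h0] using hx
      exact ⟨1, span_singleton_mem_coprimeIdeals_iff.2 ⟨one_ne_zero, by simp⟩,
        Ideal.Quotient.eq.2 (hI1 ▸ Submodule.mem_top)⟩
    · exact ⟨x, span_singleton_mem_coprimeIdeals_iff.2 ⟨h0, hunit⟩, rfl⟩
  refine ((infinite_setOf_isPrime_and_mk_eq I (⟨_, hx'⟩ : coprimeIdeals I)).image
    Subtype.val_injective.injOn).mono ?_
  rintro _ ⟨P, ⟨hP, hclass⟩, rfl⟩
  obtain ⟨y, hy, hyx⟩ := (mk_eq_mk_iff_exists_generator rfl).1 hclass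
  exact ⟨hP, y, hy, Ideal.Quotient.eq.1 (hyx.trans hxx')⟩
end

section
/- Let F be a finite field of characteristic ≠ 2 with more than 25 elements. Then there exist elements a00, a01, a10, a11 ∈ F, each different from 0, −1 and −2 and each satisfying a² + a + 1 ≠ 0, such that: (i) a00, a00+1 and a00+2 are squares in F; (ii) a01 and a01+1 are squares in F but a01+2 is not a square in F; (iii) a10 and a10+2 are squares in F but a10+1 is not a square in F; (iv) a11 is a square in F but neither a11+1 nor a11+2 is a square in F. -/
/-!
Fix signs `e₀, e₁, e₂ = ±1` and let `χ` be the quadratic character of `F`, with `q = #F`. The weight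
`(1 + e₀ χ(a)) (1 + e₁ χ(a + 1)) (1 + e₂ χ(a + 2))` vanishes unless `(χ(a), χ(a + 1), χ(a + 2))` is
`(e₀, e₁, e₂)` or one of the three values is `0`. Summed over `F` it gives
`q - (e₀ e₁ + e₀ e₂ + e₁ e₂) + e₀ e₁ e₂ φ(-1)`, where `φ(c) = ∑ χ(x) χ(x² + c)`. Since
`φ(t² c) = χ(t) φ(c)` and `∑ φ(c)² = q (q - 1) (1 + χ(-1))`, averaging gives
`φ(-1)² ≤ 2 q (1 + χ(-1))`. This elementary form of the Hasse bound makes the total weight exceed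
the weight of the excluded elements as soon as `25 < q`.
-/

open Finset

section PrimitiveRoots

variable {R : Type*} [CommRing R] [IsDomain R]

lemma eq_neg_two_or_mem_primitiveRoots_three {a : R} (h : a ^ 2 + a + 1 = 0) :
    a = -2 ∨ a ∈ primitiveRoots 3 R := by
  by_cases ha : a = 1
  · left
    subst ha
    linear_combination h
  · right
    have cube : a ^ 3 = 1 := by linear_combination (a - 1) * h
    rw [mem_primitiveRoots three_pos, IsPrimitiveRoot.iff_orderOf]
    have : Fact (Nat.Prime 3) := ⟨Nat.prime_three⟩
    exact orderOf_eq_prime cube ha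

variable (R) in
lemma card_primitiveRoots_le_totient (n : ℕ) :
    #(primitiveRoots n R) ≤ n.totient := by
  obtain h | ⟨ζ, hζ⟩ := (primitiveRoots n R).eq_empty_or_nonempty
  · simp [h]
  · exact (isPrimitiveRoot_of_mem_primitiveRoots hζ).card_primitiveRoots.le

lemma primitiveRoots_eq_empty_or_dvd_card_sub_one (F : Type*) [Field F] [Fintype F] (n : ℕ) :
    primitiveRoots n F = ∅ ∨ n ∣ Fintype.card F - 1 := by
  obtain rfl | hn := eq_or_ne n 0
  · simp
  refine (primitiveRoots n F).eq_empty_or_nonempty.imp_right fun ⟨ζ, hζ⟩ => ?_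
  have prim := isPrimitiveRoot_of_mem_primitiveRoots hζ
  exact prim.dvd_of_pow_eq_one _ (FiniteField.pow_card_sub_one_eq_one ζ (prim.ne_zero hn))

end PrimitiveRoots

section CharacterSums

variable {F : Type*} [Field F] [Fintype F]

lemma sum_mulChar_mul_inv_add {R : Type*} [CommRing R] [IsDomain R] {χ : MulChar F R}
    (hχ : χ ≠ 1) {d : F} (hd : d ≠ 0) : ∑ x, χ x * χ⁻¹ (x + d) = -1 := by
  have term (x : F) : χ (-d * x) * χ⁻¹ (-d * x + d) = χ (-1) * (χ x * χ⁻¹ (1 - x)) := by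
    have unit : χ d * χ⁻¹ d = 1 := by
      rw [MulChar.inv_apply', ← map_mul, mul_inv_cancel₀ hd, map_one]
    rw [show -d * x + d = d * (1 - x) by ring, show -d * x = -1 * d * x by ring]
    simp only [map_mul]
    linear_combination χ (-1) * χ x * χ⁻¹ (1 - x) * unit
  calc ∑ x, χ x * χ⁻¹ (x + d)
      = ∑ x, χ (-d * x) * χ⁻¹ (-d * x + d) :=
        ((mulLeft_bijective₀ (-d) (neg_ne_zero.2 hd)).sum_comp fun x => χ x * χ⁻¹ (x + d)).symm
    _ = χ (-1) * jacobiSum χ χ⁻¹ := by simp only [term, ← mul_sum, jacobiSum]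
    _ = -1 := by
        rw [jacobiSum_nontrivial_inv hχ, mul_neg, ← map_mul, neg_one_mul, neg_neg, map_one]

variable [DecidableEq F]

lemma quadraticChar_le_one (x : F) : quadraticChar F x ≤ 1 := by
  rcases quadraticChar_isQuadratic F x with h | h | h <;> simp [h]

lemma sum_quadraticChar_sq : ∑ x : F, quadraticChar F x ^ 2 = Fintype.card F - 1 := by
  have term (x : F) : quadraticChar F x ^ 2 = 1 - if x = 0 then 1 else 0 := by
    split_ifs with hx
    · simp [hx]
    · rw [quadraticChar_sq_one hx, sub_zero]
  simp only [term, sum_sub_distrib, sum_const, card_univ, nsmul_one, sum_ite_eq', mem_univ, if_true]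

lemma sum_quadraticChar_add (hF : ringChar F ≠ 2) (d : F) :
    ∑ x, quadraticChar F (x + d) = 0 :=
  ((AddGroup.addRight_bijective d).sum_comp (quadraticChar F)).trans (quadraticChar_sum_zero hF)

lemma sum_quadraticChar_add_mul_add (hF : ringChar F ≠ 2) (u v : F) :
    ∑ x, quadraticChar F (x + u) * quadraticChar F (x + v)
      = (if u = v then (Fintype.card F : ℤ) else 0) - 1 := by
  have shift : ∑ x, quadraticChar F (x + u) * quadraticChar F (x + v)
      = ∑ x, quadraticChar F x * quadraticChar F (x + (v - u)) := by
    rw [← (AddGroup.addRight_bijective u).sum_comp fun x =>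
      quadraticChar F x * quadraticChar F (x + (v - u))]
    simp only [add_assoc, add_sub_cancel]
  rw [shift]
  split_ifs with h
  · simp only [h, sub_self, add_zero, ← sq, sum_quadraticChar_sq]
  · have := sum_mulChar_mul_inv_add (quadraticChar_ne_one hF) (sub_ne_zero.2 (Ne.symm h))
    rwa [(quadraticChar_isQuadratic F).inv] at this

lemma sum_comp_sq {M : Type*} [AddCommGroup M] (hF : ringChar F ≠ 2) (f : F → M) :
    ∑ t : F, f (t ^ 2) = ∑ c : F, (quadraticChar F c + 1) • f c := by
  rw [← sum_fiberwise univ (fun t : F => t ^ 2)]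
  refine sum_congr rfl fun c _ => ?_
  have fiber : ({t : F | t ^ 2 = c} : Finset F) = {t : F | t ^ 2 = c}.toFinset := by ext; simp
  rw [sum_congr rfl fun t ht => congrArg f (mem_filter.1 ht).2, sum_const, fiber,
    ← quadraticChar_card_sqrts hF, natCast_zsmul]

lemma sum_quadraticChar_of_sq_eq_sq (hF : ringChar F ≠ 2) (x : F) :
    ∑ y with y ^ 2 = x ^ 2, quadraticChar F y = quadraticChar F x * (1 + quadraticChar F (-1)) := by
  have roots : ({y | y ^ 2 = x ^ 2} : Finset F) = {x, -x} := by
    ext y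
    simp [sq_eq_sq_iff_eq_or_eq_neg]
  rw [roots]
  obtain rfl | hx := eq_or_ne x 0
  · simp
  · have : x ≠ -x := fun h => hx ((Ring.eq_self_iff_eq_zero_of_char_ne_two hF).1 h.symm)
    rw [sum_pair this, ← neg_one_mul x, map_mul]
    ring

end CharacterSums

section JacobsthalSum

variable (F : Type*) [Field F] [Fintype F] [DecidableEq F]

/-- The Jacobsthal sum `φ(c) = ∑ χ(x) χ(x² + c)` of the quadratic character `χ` of a finite field;
up to sign it is the trace of Frobenius of the curve `y² = x³ + c x`. -/
def jacobsthalSum (c : F) : ℤ :=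
  ∑ x, quadraticChar F x * quadraticChar F (x ^ 2 + c)

variable {F}

lemma jacobsthalSum_sq_mul {t : F} (ht : t ≠ 0) (c : F) :
    jacobsthalSum F (t ^ 2 * c) = quadraticChar F t * jacobsthalSum F c := by
  rw [jacobsthalSum, ← (mulLeft_bijective₀ t ht).sum_comp, jacobsthalSum, mul_sum]
  refine sum_congr rfl fun x _ => ?_
  rw [mul_pow, ← mul_add, map_mul, map_mul, quadraticChar_sq_one' ht]
  ring

lemma sum_jacobsthalSum_sq (hF : ringChar F ≠ 2) :
    ∑ c, jacobsthalSum F c ^ 2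
      = Fintype.card F * (Fintype.card F - 1) * (1 + quadraticChar F (-1)) := by
  set χ := quadraticChar F
  set q := (Fintype.card F : ℤ) with hq
  have inner (x : F) : ∑ y, χ x * χ y * ((if x ^ 2 = y ^ 2 then q else 0) - 1)
      = q * (1 + χ (-1)) * χ x ^ 2 := by
    have ones : ∑ y, χ x * χ y = 0 := by rw [← mul_sum, quadraticChar_sum_zero hF, mul_zero]
    simp only [mul_sub, mul_one, mul_ite, mul_zero, sum_sub_distrib, ones, sub_zero]
    rw [← sum_filter, ← sum_mul, ← mul_sum]
    simp only [eq_comm (a := x ^ 2), χ, sum_quadraticChar_of_sq_eq_sq hF]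
    ring
  calc ∑ c, jacobsthalSum F c ^ 2
      = ∑ c, ∑ x, ∑ y, χ x * χ y * (χ (c + x ^ 2) * χ (c + y ^ 2)) := by
        refine sum_congr rfl fun c _ => ?_
        rw [jacobsthalSum, sq, sum_mul_sum]
        refine sum_congr rfl fun x _ => sum_congr rfl fun y _ => ?_
        rw [add_comm c, add_comm c]
        ring
    _ = ∑ x, ∑ y, χ x * χ y * ∑ c, χ (c + x ^ 2) * χ (c + y ^ 2) := by
        simp only [mul_sum]
        rw [sum_comm]
        exact sum_congr rfl fun x _ => sum_comm
    _ = ∑ x, q * (1 + χ (-1)) * χ x ^ 2 := by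
        simp only [χ, sum_quadraticChar_add_mul_add hF, ← hq]
        exact sum_congr rfl fun x _ => inner x
    _ = q * (q - 1) * (1 + χ (-1)) := by
        rw [← mul_sum, sum_quadraticChar_sq]
        ring

lemma card_sub_one_mul_jacobsthalSum_sq_le (hF : ringChar F ≠ 2) {c : F} (hc : c ≠ 0) :
    ((Fintype.card F : ℤ) - 1) * jacobsthalSum F c ^ 2 ≤ 2 * ∑ d, jacobsthalSum F d ^ 2 :=
  calc ((Fintype.card F : ℤ) - 1) * jacobsthalSum F c ^ 2
      = ∑ t, (quadraticChar F t * jacobsthalSum F c) ^ 2 := by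
        simp only [mul_pow, ← sum_mul, sum_quadraticChar_sq]
    _ ≤ ∑ t, jacobsthalSum F (t ^ 2 * c) ^ 2 := by
        refine sum_le_sum fun t _ => ?_
        obtain rfl | ht := eq_or_ne t 0
        · simp [sq_nonneg]
        · rw [jacobsthalSum_sq_mul ht]
    _ = ∑ s, (quadraticChar F s + 1) * jacobsthalSum F (s * c) ^ 2 :=
        sum_comp_sq hF fun s => jacobsthalSum F (s * c) ^ 2
    _ ≤ ∑ s, 2 * jacobsthalSum F (s * c) ^ 2 :=
        sum_le_sum fun s _ => mul_le_mul_of_nonneg_right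
          (by linarith [quadraticChar_le_one s]) (sq_nonneg _)
    _ = 2 * ∑ d, jacobsthalSum F d ^ 2 := by
        rw [← mul_sum, ← (mulRight_bijective₀ c hc).sum_comp fun d => jacobsthalSum F d ^ 2]

lemma jacobsthalSum_sq_le (hF : ringChar F ≠ 2) {c : F} (hc : c ≠ 0) :
    jacobsthalSum F c ^ 2 ≤ 2 * Fintype.card F * (1 + quadraticChar F (-1)) := by
  have avg := card_sub_one_mul_jacobsthalSum_sq_le hF hc
  rw [sum_jacobsthalSum_sq hF] at avg
  have pos : (0 : ℤ) < Fintype.card F - 1 := by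
    have : 1 < Fintype.card F := Fintype.one_lt_card
    lia
  refine le_of_mul_le_mul_left (avg.trans_eq ?_) pos
  ring

end JacobsthalSum

section PatternWeight

variable {F : Type*} [Field F] [Fintype F] [DecidableEq F] (e e₀ e₁ e₂ : ℤˣ)

lemma one_add_sign_mul_quadraticChar_mem_Icc (x : F) :
    1 + e * quadraticChar F x ∈ Set.Icc 0 2 := by
  rcases Int.units_eq_one_or e with rfl | rfl <;>
    rcases quadraticChar_isQuadratic F x with h | h | h <;> simp [h]

lemma one_add_sign_mul_quadraticChar_eq_zero {e : ℤˣ} {x : F} (hx : x ≠ 0)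
    (h : quadraticChar F x ≠ e) : 1 + e * quadraticChar F x = 0 := by
  rcases Int.units_eq_one_or e with rfl | rfl <;>
    rcases quadraticChar_dichotomy hx with hχ | hχ <;> simp_all

/-- Detects the pattern `(χ(a), χ(a + 1), χ(a + 2)) = (e₀, e₁, e₂)` of the quadratic character `χ`:
if none of the three values is `0`, the weight is `8` when the pattern holds and `0` otherwise. -/
def patternWeight (a : F) : ℤ :=
  (1 + e₀ * quadraticChar F a) * (1 + e₁ * quadraticChar F (a + 1)) *
    (1 + e₂ * quadraticChar F (a + 2))

lemma patternWeight_le_eight (a : F) : patternWeight e₀ e₁ e₂ a ≤ 8 := by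
  obtain ⟨-, le₀⟩ := one_add_sign_mul_quadraticChar_mem_Icc e₀ a
  obtain ⟨nonneg₁, le₁⟩ := one_add_sign_mul_quadraticChar_mem_Icc e₁ (a + 1)
  obtain ⟨nonneg₂, le₂⟩ := one_add_sign_mul_quadraticChar_mem_Icc e₂ (a + 2)
  calc patternWeight e₀ e₁ e₂ a ≤ 2 * 2 * 2 := by unfold patternWeight; gcongr
    _ = 8 := by norm_num

lemma patternWeight_nonneg (a : F) : 0 ≤ patternWeight e₀ e₁ e₂ a :=
  mul_nonneg (mul_nonneg (one_add_sign_mul_quadraticChar_mem_Icc e₀ a).1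
    (one_add_sign_mul_quadraticChar_mem_Icc e₁ (a + 1)).1)
    (one_add_sign_mul_quadraticChar_mem_Icc e₂ (a + 2)).1

variable {e₀ e₁ e₂} in
lemma quadraticChar_pattern_of_patternWeight_ne_zero {a : F} (h₀ : a ≠ 0) (h₁ : a + 1 ≠ 0)
    (h₂ : a + 2 ≠ 0) (h : patternWeight e₀ e₁ e₂ a ≠ 0) :
    quadraticChar F a = e₀ ∧ quadraticChar F (a + 1) = e₁ ∧ quadraticChar F (a + 2) = e₂ := by
  obtain ⟨h', factor₂⟩ := mul_ne_zero_iff.1 h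
  obtain ⟨factor₀, factor₁⟩ := mul_ne_zero_iff.1 h'
  exact ⟨not_imp_comm.1 (one_add_sign_mul_quadraticChar_eq_zero h₀) factor₀,
    not_imp_comm.1 (one_add_sign_mul_quadraticChar_eq_zero h₁) factor₁,
    not_imp_comm.1 (one_add_sign_mul_quadraticChar_eq_zero h₂) factor₂⟩

lemma sum_quadraticChar_three_consecutive :
    ∑ a, quadraticChar F a * quadraticChar F (a + 1) * quadraticChar F (a + 2)
      = jacobsthalSum F (-1) := by
  rw [jacobsthalSum, ← (AddGroup.addRight_bijective (1 : F)).sum_comp fun x =>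
    quadraticChar F x * quadraticChar F (x ^ 2 + -1)]
  refine sum_congr rfl fun a _ => ?_
  simp only [← map_mul]
  congr 1
  ring

lemma sum_patternWeight (hF : ringChar F ≠ 2) :
    ∑ a : F, patternWeight e₀ e₁ e₂ a = Fintype.card F - (e₀ * e₁ + e₀ * e₂ + e₁ * e₂)
      + e₀ * e₁ * e₂ * jacobsthalSum F (-1) := by
  set χ := quadraticChar F
  have pair₀₁ : ∑ a, χ a * χ (a + 1) = -1 := by
    simpa [χ, -quadraticChar_apply] using sum_quadraticChar_add_mul_add hF 0 1
  have pair₀₂ : ∑ a, χ a * χ (a + 2) = -1 := by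
    simpa [χ, -quadraticChar_apply, (Ring.two_ne_zero hF).symm] using
      sum_quadraticChar_add_mul_add hF 0 2
  have pair₁₂ : ∑ a, χ (a + 1) * χ (a + 2) = -1 := by
    simpa [χ, -quadraticChar_apply, ← one_add_one_eq_two] using sum_quadraticChar_add_mul_add hF 1 2
  have expand (a : F) : patternWeight e₀ e₁ e₂ a = 1 + e₀ * χ a + e₁ * χ (a + 1) + e₂ * χ (a + 2)
      + e₀ * e₁ * (χ a * χ (a + 1)) + e₀ * e₂ * (χ a * χ (a + 2))
      + e₁ * e₂ * (χ (a + 1) * χ (a + 2)) + e₀ * e₁ * e₂ * (χ a * χ (a + 1) * χ (a + 2)) := by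
    unfold patternWeight
    ring
  simp only [expand, sum_add_distrib, ← mul_sum, pair₀₁, pair₀₂, pair₁₂, χ,
    quadraticChar_sum_zero hF, sum_quadraticChar_add hF, sum_quadraticChar_three_consecutive,
    sum_const, card_univ, nsmul_eq_mul, mul_one]
  ring

end PatternWeight

section Exceptional

variable (F : Type*) [Field F] [DecidableEq F]

/-- The elements excluded from the search for a pattern: `0`, `-1`, `-2` and the roots of
`a² + a + 1`. In characteristic `3` the only such root is `1 = -2`; otherwise the roots are the
primitive cube roots of unity. -/
noncomputable def exceptionalSet : Finset F :=
  {0, -1, -2} ∪ primitiveRoots 3 F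

variable {F} in
lemma admissible_of_notMem_exceptionalSet {a : F} (ha : a ∉ exceptionalSet F) :
    a ≠ 0 ∧ a ≠ -1 ∧ a ≠ -2 ∧ a ^ 2 + a + 1 ≠ 0 := by
  simp only [exceptionalSet, mem_union, mem_insert, mem_singleton, not_or] at ha
  obtain ⟨⟨h₀, h₁, h₂⟩, h₃⟩ := ha
  exact ⟨h₀, h₁, h₂, fun h => (eq_neg_two_or_mem_primitiveRoots_three h).elim h₂ h₃⟩

variable [Fintype F]

/-- An upper bound, independent of the signs, for the total `patternWeight` of `exceptionalSet F`
plus the term `e₀ e₁ + e₀ e₂ + e₁ e₂` of `sum_patternWeight`. -/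
noncomputable def exceptionalBound : ℤ :=
  9 + 2 * quadraticChar F (-1) + 2 * (1 + quadraticChar F (-1)) * quadraticChar F 2
    + 8 * #(primitiveRoots 3 F)

variable {F} (e₀ e₁ e₂ : ℤˣ)

lemma patternWeight_degenerate_le (hF : ringChar F ≠ 2) :
    patternWeight e₀ e₁ e₂ (0 : F) + patternWeight e₀ e₁ e₂ (-1 : F)
        + patternWeight e₀ e₁ e₂ (-2 : F) + (e₀ * e₁ + e₀ * e₂ + e₁ * e₂)
      ≤ 9 + 2 * quadraticChar F (-1) + 2 * (1 + quadraticChar F (-1)) * quadraticChar F 2 := by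
  have weight_zero : patternWeight e₀ e₁ e₂ (0 : F)
      = (1 + e₁) * (1 + e₂ * quadraticChar F 2) := by
    simp [patternWeight]
  have weight_neg_one : patternWeight e₀ e₁ e₂ (-1 : F)
      = (1 + e₀ * quadraticChar F (-1)) * (1 + e₂) := by
    simp [patternWeight, show (-1 + 2 : F) = 1 by ring]
  have weight_neg_two : patternWeight e₀ e₁ e₂ (-2 : F)
      = (1 + e₀ * (quadraticChar F (-1) * quadraticChar F 2))
        * (1 + e₁ * quadraticChar F (-1)) := by
    rw [← map_mul, neg_one_mul]
    simp [patternWeight, show (-2 + 1 : F) = -1 by ring]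
  rw [weight_zero, weight_neg_one, weight_neg_two]
  rcases quadraticChar_dichotomy (neg_ne_zero.2 one_ne_zero : (-1 : F) ≠ 0) with h₁ | h₁ <;>
    rcases quadraticChar_dichotomy (Ring.two_ne_zero hF) with h₂ | h₂ <;>
    rcases Int.units_eq_one_or e₀ with rfl | rfl <;>
    rcases Int.units_eq_one_or e₁ with rfl | rfl <;>
    rcases Int.units_eq_one_or e₂ with rfl | rfl <;> simp [h₁, h₂]

lemma sum_patternWeight_exceptionalSet_le (hF : ringChar F ≠ 2) :
    ∑ a ∈ exceptionalSet F, patternWeight e₀ e₁ e₂ a + (e₀ * e₁ + e₀ * e₂ + e₁ * e₂)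
      ≤ exceptionalBound F := by
  have split : ∑ a ∈ exceptionalSet F, patternWeight e₀ e₁ e₂ a
      ≤ ∑ a ∈ ({0, -1, -2} : Finset F), patternWeight e₀ e₁ e₂ a
        + ∑ a ∈ primitiveRoots 3 F, patternWeight e₀ e₁ e₂ a := by
    rw [exceptionalSet, ← sum_union_inter]
    exact le_add_of_nonneg_right (sum_nonneg fun a _ => patternWeight_nonneg e₀ e₁ e₂ a)
  have degenerate : ∑ a ∈ ({0, -1, -2} : Finset F), patternWeight e₀ e₁ e₂ a
      = patternWeight e₀ e₁ e₂ (0 : F) + patternWeight e₀ e₁ e₂ (-1 : F)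
        + patternWeight e₀ e₁ e₂ (-2 : F) := by
    have zero_notMem : (0 : F) ∉ ({-1, -2} : Finset F) := by simp [Ring.two_ne_zero hF]
    have neg_one_ne : (-1 : F) ≠ -2 := by simp [← one_add_one_eq_two]
    rw [sum_insert zero_notMem, sum_pair neg_one_ne, add_assoc]
  have roots : ∑ a ∈ primitiveRoots 3 F, patternWeight e₀ e₁ e₂ a ≤ 8 * #(primitiveRoots 3 F) := by
    rw [mul_comm, ← nsmul_eq_mul]
    exact sum_le_card_nsmul _ _ 8 fun a _ => patternWeight_le_eight e₀ e₁ e₂ a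
  unfold exceptionalBound
  linarith [patternWeight_degenerate_le (F := F) e₀ e₁ e₂ hF]

lemma card_mod_four_of_quadraticChar_neg_one (hF : ringChar F ≠ 2)
    (h : quadraticChar F (-1) = 1) : Fintype.card F % 4 = 1 := by
  have := FiniteField.isSquare_neg_one_iff.1
    ((quadraticChar_one_iff_isSquare (neg_ne_zero.2 one_ne_zero)).1 h)
  have := FiniteField.odd_card_of_char_ne_two hF
  lia

lemma exceptionalBound_lt_and_lt_sq (hF : ringChar F ≠ 2) (hcard : 25 < Fintype.card F) :
    exceptionalBound F < Fintype.card F ∧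
      2 * Fintype.card F * (1 + quadraticChar F (-1))
        < (Fintype.card F - exceptionalBound F) ^ 2 := by
  have card_roots : #(primitiveRoots 3 F) ≤ 2 := card_primitiveRoots_le_totient F 3
  have roots_or : #(primitiveRoots 3 F) = 0 ∨ Fintype.card F % 3 = 1 := by
    refine (primitiveRoots_eq_empty_or_dvd_card_sub_one F 3).imp card_eq_zero.2 ?_
    lia
  have two_square (h : quadraticChar F 2 = 1) : Fintype.card F % 8 ≠ 5 :=
    (FiniteField.isSquare_two_iff.1
      ((quadraticChar_one_iff_isSquare (Ring.two_ne_zero hF)).1 h)).2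
  have mod_four := card_mod_four_of_quadraticChar_neg_one hF
  unfold exceptionalBound
  generalize #(primitiveRoots 3 F) = r at *
  generalize Fintype.card F = q at *
  rcases quadraticChar_dichotomy (neg_ne_zero.2 one_ne_zero : (-1 : F) ≠ 0) with h₁ | h₁
  · have mod_four := mod_four h₁
    rcases quadraticChar_dichotomy (Ring.two_ne_zero hF) with h₂ | h₂
    · -- Here `q ≡ 1 [MOD 8]`, so cube roots of unity can only occur when `q ≡ 1 [MOD 24]`.
      have mod_eight := two_square h₂
      have size : r = 0 ∧ 29 ≤ q ∨ 49 ≤ q := by lia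
      rw [h₁, h₂]
      refine ⟨by lia, ?_⟩
      rcases size with ⟨rfl, hq⟩ | hq <;> zify at * <;> nlinarith
    · have size : r = 0 ∧ 29 ≤ q ∨ 37 ≤ q := by lia
      rw [h₁, h₂]
      refine ⟨by lia, ?_⟩
      rcases size with ⟨rfl, hq⟩ | hq <;> zify at * <;> nlinarith
  · have pos : (0 : ℤ) < q - 7 - 8 * r := by lia
    rw [h₁]
    exact ⟨by lia, by nlinarith [pos]⟩

theorem exists_quadraticChar_pattern (hF : ringChar F ≠ 2) (hcard : 25 < Fintype.card F) :
    ∃ a ∉ exceptionalSet F, quadraticChar F a = e₀ ∧ quadraticChar F (a + 1) = e₁ ∧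
      quadraticChar F (a + 2) = e₂ := by
  by_contra! missing
  have support (a : F) (ha : a ∉ exceptionalSet F) : patternWeight e₀ e₁ e₂ a = 0 := by
    obtain ⟨h₀, h₁, h₂, -⟩ := admissible_of_notMem_exceptionalSet ha
    by_contra h
    obtain ⟨χ₀, χ₁, χ₂⟩ := quadraticChar_pattern_of_patternWeight_ne_zero h₀
      (mt eq_neg_of_add_eq_zero_left h₁) (mt eq_neg_of_add_eq_zero_left h₂) h
    exact missing a ha χ₀ χ₁ χ₂
  have total := sum_patternWeight_exceptionalSet_le (F := F) e₀ e₁ e₂ hF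
  rw [sum_subset (subset_univ _) fun a _ => support a, sum_patternWeight e₀ e₁ e₂ hF] at total
  obtain ⟨lt_card, lt_sq⟩ := exceptionalBound_lt_and_lt_sq hF hcard
  have hasse := jacobsthalSum_sq_le hF (neg_ne_zero.2 one_ne_zero : (-1 : F) ≠ 0)
  set S : ℤ := jacobsthalSum F (-1)
  have sign_sq : (-((e₀ * e₁ * e₂ : ℤˣ) * S)) ^ 2 = S ^ 2 := by
    rw [neg_sq, mul_pow, ← Units.val_pow_eq_pow_val, Int.units_sq, Units.val_one, one_mul]
  have gap_sq_le : (Fintype.card F - exceptionalBound F) ^ 2 ≤ S ^ 2 := by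
    rw [← sign_sq]
    refine pow_le_pow_left₀ (sub_pos.2 lt_card).le ?_ 2
    push_cast
    linarith
  linarith

end Exceptional

lemma isSquare_iff_of_quadraticChar_eq {F : Type*} [Field F] [Fintype F] [DecidableEq F]
    {p : Prop} [Decidable p] {a : F}
    (h : quadraticChar F a = ((if p then 1 else -1 : ℤˣ) : ℤ)) : IsSquare a ↔ p := by
  rw [← not_iff_not, ← quadraticChar_neg_one_iff_not_isSquare, h]
  by_cases hp : p <;> simp [hp]

theorem square_patterns_exist_general {F : Type*} [Field F] [Fintype F]
    (hchar : ringChar F ≠ 2) (hcard : 25 < Fintype.card F) (p₀ p₁ p₂ : Prop) :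
    ∃ a : F, (a ≠ 0 ∧ a ≠ -1 ∧ a ≠ -2 ∧ a ^ 2 + a + 1 ≠ 0) ∧
      (IsSquare a ↔ p₀) ∧ (IsSquare (a + 1) ↔ p₁) ∧ (IsSquare (a + 2) ↔ p₂) := by
  classical
  obtain ⟨a, ha, h₀, h₁, h₂⟩ := exists_quadraticChar_pattern (if p₀ then 1 else -1)
    (if p₁ then 1 else -1) (if p₂ then 1 else -1) hchar hcard
  exact ⟨a, admissible_of_notMem_exceptionalSet ha, isSquare_iff_of_quadraticChar_eq h₀,
    isSquare_iff_of_quadraticChar_eq h₁, isSquare_iff_of_quadraticChar_eq h₂⟩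

/-- Lemma 16: in a finite field `F` of characteristic `≠ 2` with more than `25` elements
there exist elements `a00, a01, a10, a11`, each different from `0`, `−1`, `−2` and with
`a² + a + 1 ≠ 0`, realizing all four square/nonsquare patterns for `(a+1, a+2)`. -/
theorem square_patterns_exist (F : Type*) [Field F] [Fintype F]
    (hchar : ringChar F ≠ 2) (hcard : 25 < Fintype.card F) :
    ∃ a00 a01 a10 a11 : F,
      (∀ a ∈ [a00, a01, a10, a11],
        a ≠ 0 ∧ a ≠ -1 ∧ a ≠ -2 ∧ a ^ 2 + a + 1 ≠ 0) ∧
      (IsSquare a00 ∧ IsSquare (a00 + 1) ∧ IsSquare (a00 + 2)) ∧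
      (IsSquare a01 ∧ IsSquare (a01 + 1) ∧ ¬ IsSquare (a01 + 2)) ∧
      (IsSquare a10 ∧ ¬ IsSquare (a10 + 1) ∧ IsSquare (a10 + 2)) ∧
      (IsSquare a11 ∧ ¬ IsSquare (a11 + 1) ∧ ¬ IsSquare (a11 + 2)) := by
  choose a ha h₀ h₁ h₂ using square_patterns_exist_general hchar hcard True
  exact ⟨a True True, a True False, a False True, a False False, by simp [ha], by simp [*]⟩
end
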